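/- arXiv:1812.04294 — 9 statements merged into one kernel-verified Lean document; each statement's English description precedes it below -/
import Mathlib

section
/- Let s be an even positive integer and n an integer with n > 3s and n not congruent to 1 or -1 modulo 8. Then both polynomials f(X) = X^n + X^(n-s) + X^(n-2s) + X^(n-3s) + 1 and g(X) = X^n + X^(3s) + X^(2s) + X^s + 1 in F_2[X] are reducible (i.e., not irreducible) over F_2. -/
open Polynomial

lemma frob_field (L : Type) [Field L] [NumberField L] [IsGalois ℚ L] (F : ℤ[X]) (hF : F.Monic)
    (a : L) (ha : eval₂ (algebraMap ℤ L) a F = 0) :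
    ∃ (O : Type) (_ : CommRing O) (_ : IsDomain O) (_ : CharZero O) (P : Ideal O) (σ : O →+* O)
      (a : O), P.IsPrime ∧ (2 : O) ∈ P ∧ (∀ x, σ x - x ^ 2 ∈ P) ∧ (F.map (Int.castRingHom O)).eval a = 0 ∧
      (∀ (V : O) (k : ℤ), V ^ 2 = 1 + 4 * (k : O) → ∃ w : O, 2 * w = 1 + V) := by
  have hmax : (Ideal.span {(2 : ℤ)}).IsMaximal := PrincipalIdealRing.isMaximal_of_irreducible (Int.prime_two.irreducible)
  obtain ⟨P, hPm, hP⟩ := Ideal.exists_ideal_over_maximal_of_isIntegral (S := NumberField.RingOfIntegers L) (Ideal.span {(2 : ℤ)}) (by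
    rw [(RingHom.injective_iff_ker_eq_bot _).mp (FaithfulSMul.algebraMap_injective ℤ _)]; exact bot_le)
  have h2 : (2 : NumberField.RingOfIntegers L) ∈ P := by
    have : (2 : ℤ) ∈ Ideal.comap (algebraMap ℤ (NumberField.RingOfIntegers L)) P := by
      rw [hP]; exact Ideal.mem_span_singleton_self _
    simpa using this
  have hP0 : P ≠ ⊥ := by
    rintro rfl
    simp at h2
  have : Finite (NumberField.RingOfIntegers L ⧸ P) := Ideal.finiteQuotientOfFreeOfNeBot P hP0
  obtain ⟨σ, hσ⟩ := IsArithFrobAt.exists_of_isInvariant (R := ℤ) (G := Gal(L/ℚ)) (Q := P)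
  have hcard : Nat.card (ℤ ⧸ P.under ℤ) = 2 := by
    have : P.under ℤ = Ideal.span {(2 : ℤ)} := hP
    rw [this]
    have := Nat.card_congr (Int.quotientSpanEquivZMod 2).toEquiv
    rw [this]; simp
  have hint : IsIntegral ℤ a := ⟨F, hF, ha⟩
  obtain ⟨b, hb'⟩ : ∃ b : NumberField.RingOfIntegers L, algebraMap _ L b = a := ⟨⟨_, hint⟩, rfl⟩
  refine ⟨NumberField.RingOfIntegers L, inferInstance, inferInstance, inferInstance, P, (MulSemiringAction.toAlgHom ℤ _ σ).toRingHom, b, inferInstance, h2, ?_, ?_, ?_⟩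
  · intro x
    have := hσ x
    rw [hcard] at this
    exact this
  · apply NumberField.RingOfIntegers.coe_injective
    rw [eval_map, hom_eval₂, hb', map_zero, ← ha]
    congr 1
  · intro V k h
    obtain ⟨v, hv⟩ : ∃ v : L, v = algebraMap _ L V := ⟨_, rfl⟩
    have hw : IsIntegral ℤ ((1 + v) / 2) := by
      have h' : v ^ 2 = 1 + 4 * (k : L) := by
        have := congrArg (algebraMap (NumberField.RingOfIntegers L) L) h
        rw [map_pow, ← hv, map_add, map_mul, map_one, map_intCast, map_ofNat] at this
        exact this
      refine ⟨X ^ 2 - X - C k, by monicity!, ?_⟩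
      rw [eval₂_sub, eval₂_sub, eval₂_pow, eval₂_X, eval₂_C, eq_intCast]
      field_simp
      linear_combination h'
    obtain ⟨b, hb⟩ : ∃ b : NumberField.RingOfIntegers L, algebraMap _ L b = (1 + v) / 2 := ⟨⟨_, hw⟩, rfl⟩
    refine ⟨b, ?_⟩
    apply NumberField.RingOfIntegers.coe_injective
    rw [map_mul, map_add, ← hv, hb, map_one, map_ofNat]
    ring

lemma frob_split (L : Type) [Field L] [hc : CharZero L] (A : Algebra ℚ L) (p : ℚ[X])
    (h : IsSplittingField ℚ L p) (F : ℤ[X]) (hF : F.Monic)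
    (a : L) (ha : eval₂ (algebraMap ℤ L) a F = 0) :
    ∃ (O : Type) (_ : CommRing O) (_ : IsDomain O) (_ : CharZero O) (P : Ideal O) (σ : O →+* O)
      (a : O), P.IsPrime ∧ (2 : O) ∈ P ∧ (∀ x, σ x - x ^ 2 ∈ P) ∧ (F.map (Int.castRingHom O)).eval a = 0 ∧
      (∀ (V : O) (k : ℤ), V ^ 2 = 1 + 4 * (k : O) → ∃ w : O, 2 * w = 1 + V) := by
  obtain rfl : A = DivisionRing.toRatAlgebra := Subsingleton.elim _ _
  have : NumberField L := { to_charZero := inferInstance, to_finiteDimensional := IsSplittingField.finiteDimensional _ p }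
  have : Normal ℚ L := Normal.of_isSplittingField p
  have : IsGalois ℚ L := IsGalois.mk
  exact frob_field L F hF a ha

lemma frob_setup (F : ℤ[X]) (hF : F.Monic) (hd : 0 < F.natDegree) :
    ∃ (O : Type) (_ : CommRing O) (_ : IsDomain O) (_ : CharZero O) (P : Ideal O) (σ : O →+* O)
      (a : O), P.IsPrime ∧ (2 : O) ∈ P ∧ (∀ x, σ x - x ^ 2 ∈ P) ∧ (F.map (Int.castRingHom O)).eval a = 0 ∧
      (∀ (V : O) (k : ℤ), V ^ 2 = 1 + 4 * (k : O) → ∃ w : O, 2 * w = 1 + V) := by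
  obtain ⟨p, hp⟩ : ∃ p : ℚ[X], p = F.map (Int.castRingHom ℚ) := ⟨_, rfl⟩
  obtain ⟨a, ha⟩ := (SplittingField.splits p).exists_eval_eq_zero (by
      rw [degree_map, hp]
      rw [hF.degree_map]; exact (natDegree_pos_iff_degree_pos.mp hd).ne')
  refine frob_split p.SplittingField (hc := charZero_of_injective_algebraMap (algebraMap ℚ p.SplittingField).injective) _ p (IsSplittingField.splittingField p) F hF a ?_
  have h3 : ∀ (K : Type) [Field K] (f : ℚ →+* K) (a : K), eval a (map f p) = 0 →
      eval₂ (algebraMap ℤ K) a F = 0 := by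
    intro K _ f a h
    rw [hp, Polynomial.map_map, eval_map] at h
    rw [← h]
    congr 1
    exact RingHom.ext_int _ _
  exact h3 _ _ _ ha

lemma cyc_order {κ : Type} [CommRing κ] [IsDomain κ] (ι : ZMod 2 →+* κ) (f : (ZMod 2)[X])
    (hf : Irreducible f) (α : κ) (hα : f.eval₂ ι α = 0) (k : ℕ) (h : α ^ 2 ^ k = α) :
    f.natDegree ∣ k := by
  apply hf.natDegree_dvd_of_dvd_X_pow_card_pow_sub_X
  rw [Nat.card_zmod]
  by_contra hnd
  obtain ⟨u, v, huv⟩ := hf.coprime_iff_not_dvd.mpr hnd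
  have := congrArg (eval₂ ι α) huv
  simp [eval₂_mul, eval₂_add, hα, h] at this

lemma cyc_inj {κ : Type} [CommRing κ] [IsDomain κ] (ι : ZMod 2 →+* κ) (f : (ZMod 2)[X])
    (hf : Irreducible f) (α : κ) (hα : f.eval₂ ι α = 0) (i j : ℕ) (hij : i ≤ j)
    (h : α ^ 2 ^ i = α ^ 2 ^ j) : f.natDegree ∣ j - i := by
  apply cyc_order ι f hf α hα
  have : CharP κ 2 := charP_of_injective_ringHom ι.injective 2
  apply iterateFrobenius_inj κ 2 i
  rw [iterateFrobenius_def, iterateFrobenius_def, ← pow_mul, ← pow_add, h]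
  congr 2; omega

lemma stick (F : ℤ[X]) (hF : F.Monic) (n : ℕ) (hn : F.natDegree = n) (hodd : Odd n)
    (hirr : Irreducible (F.map (Int.castRingHom (ZMod 2))))
    {O : Type} [CommRing O] [IsDomain O] [CharZero O] (P : Ideal O) (hP : P.IsPrime) (σ : O →+* O)
    (a : O) (h2 : (2 : O) ∈ P) (hσ : ∀ x, σ x - x ^ 2 ∈ P)
    (ha : (F.map (Int.castRingHom O)).eval a = 0)
    (hV : ∀ (V : O) (k : ℤ), V ^ 2 = 1 + 4 * (k : O) → ∃ w : O, 2 * w = 1 + V) :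
    ∃ r : Fin n → O, F.map (Int.castRingHom O) = ∏ j, (X - C (r j)) ∧
      ∀ k : ℤ, (Matrix.vandermonde r).det ^ 2 = 1 + 4 * (k : O) → Even k := by
  have hch : CharP (O ⧸ P) 2 := by
    have : ((2 : ℕ) : O ⧸ P) = 0 := by
      have := Ideal.Quotient.eq_zero_iff_mem.mpr h2
      rw [map_ofNat] at this
      exact_mod_cast this
    exact (CharP.charP_iff_prime_eq_zero Nat.prime_two).mpr this
  let ι : ZMod 2 →+* O ⧸ P := ZMod.castHom (dvd_refl 2) _
  let π := Ideal.Quotient.mk P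
  have hπ : ∀ x, π (σ x) = (π x) ^ 2 := fun x => by
    rw [← map_pow]; exact Ideal.Quotient.eq.mpr (hσ x)
  have hit : ∀ i : ℕ, π (σ^[i] a) = (π a) ^ 2 ^ i := by
    intro i
    induction i with
    | zero => simp
    | succ i ih => rw [Function.iterate_succ_apply', hπ, ih, ← pow_mul, pow_succ]
  have hroot : ∀ i : ℕ, (F.map (Int.castRingHom O)).eval (σ^[i] a) = 0 := by
    intro i
    induction i with
    | zero => simpa using ha
    | succ i ih =>
      rw [Function.iterate_succ_apply', eval_map, RingHom.ext_int (Int.castRingHom O) (σ.comp (Int.castRingHom O)), ← hom_eval₂, ← eval_map, ih, map_zero]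
  have hα : (F.map (Int.castRingHom (ZMod 2))).eval₂ ι (π a) = 0 := by
    rw [eval₂_map, RingHom.ext_int (ι.comp _) (π.comp (Int.castRingHom O)), ← hom_eval₂, ← eval_map, ha, map_zero]
  have hdeg : (F.map (Int.castRingHom (ZMod 2))).natDegree = n := by rw [hF.natDegree_map, hn]
  have hinj : ∀ i j : ℕ, i ≤ j → σ^[i] a = σ^[j] a → n ∣ j - i := by
    intro i j hij h
    rw [← hdeg]
    apply cyc_inj ι _ hirr (π a) hα i j hij
    rw [← hit, ← hit, h]
  let r : Fin n → O := fun i => σ^[i] a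
  have hr : Function.Injective r := by
    have key : ∀ i j : Fin n, i ≤ j → r i = r j → i = j := by
      intro i j hij h
      have h1 := hinj i j hij h
      have := Nat.eq_zero_of_dvd_of_lt h1 (by omega)
      ext; omega
    intro i j h
    rcases le_total i j with h' | h'
    · exact key i j h' h
    · exact (key j i h' h.symm).symm
  have hprod : F.map (Int.castRingHom O) = ∏ j, (X - C (r j)) := by
    apply eq_of_monic_of_dvd_of_natDegree_le (monic_prod_of_monic Finset.univ (fun j => X - C (r j)) (fun i _ => monic_X_sub_C _)) (hF.map _)
    · have := Multiset.prod_X_sub_C_dvd_iff_le_roots (hF.map (Int.castRingHom O)).ne_zero (Finset.univ.val.map r)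
      have h3 := this.mpr (by
        rw [Multiset.le_iff_subset (Finset.univ.nodup.map hr)]
        intro x hx
        obtain ⟨i, -, rfl⟩ := Multiset.mem_map.mp hx
        rw [mem_roots (hF.map _).ne_zero]
        exact hroot i)
      rw [Multiset.map_map] at h3
      exact h3
    · rw [natDegree_prod_of_monic _ _ (fun i _ => monic_X_sub_C _), hF.natDegree_map, hn]; simp
  refine ⟨r, hprod, ?_⟩
  intro k hk
  have hn0 : 0 < n := hodd.pos
  have hcyc : σ^[n] a = a := by
    have h := hroot n
    rw [hprod, eval_prod, Finset.prod_eq_zero_iff] at h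
    obtain ⟨i, -, hi⟩ := h
    simp only [eval_sub, eval_X, eval_C, sub_eq_zero] at hi
    have h1 := hinj i n i.2.le hi.symm
    have : (i : ℕ) = 0 := by
      by_contra h0
      have := Nat.le_of_dvd (by omega) h1
      omega
    rw [hi]; simp [r, this]
  obtain ⟨m, rfl⟩ : ∃ m, n = m + 1 := ⟨n - 1, by omega⟩
  have hσr : ∀ i, σ (r i) = r (finRotate (m + 1) i) := by
    intro i
    rcases Fin.eq_castSucc_or_eq_last i with ⟨j, rfl⟩ | rfl
    · simp [r, ← Function.iterate_succ_apply' σ]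
    · simp only [finRotate_last, r, Fin.val_last, Fin.val_zero, Function.iterate_zero, id]
      rw [← Function.iterate_succ_apply' σ, hcyc]
  have hσV : σ (Matrix.vandermonde r).det = (Matrix.vandermonde r).det := by
    rw [RingHom.map_det]
    have : σ.mapMatrix (Matrix.vandermonde r) = (Matrix.vandermonde r).submatrix (finRotate (m+1)) id := by
      ext i j
      simp [Matrix.vandermonde_apply, hσr]
    rw [this, Matrix.det_permute, sign_finRotate]
    have hm : Even m := by
      rcases hodd with ⟨e, he⟩
      exact ⟨e, by omega⟩
    simp [hm.neg_one_pow]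
  obtain ⟨w, hw⟩ := hV _ k hk
  have hσw : σ w = w := by
    have : (2 : O) * σ w = 2 * w := by
      rw [hw, ← hσV, ← map_one σ, ← map_add, ← hw, map_mul, map_ofNat]
    exact mul_left_cancel₀ two_ne_zero this
  have hwk : w ^ 2 - w = k := by
    have h4 : (4 : O) * (w ^ 2 - w) = 4 * k := by
      linear_combination hk + (2 * w - 1 + (Matrix.vandermonde r).det) * hw
    exact mul_left_cancel₀ (by norm_num) h4
  have hkP : (k : O) ∈ P := by
    have := P.neg_mem (hσ w)
    rw [hσw, neg_sub, hwk] at this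
    exact this
  by_contra hne
  rw [Int.not_even_iff_odd] at hne
  obtain ⟨e, rfl⟩ := hne
  apply hP.ne_top
  rw [Ideal.eq_top_iff_one]
  have := P.sub_mem hkP (P.mul_mem_right (e : O) h2)
  simpa using this

lemma disc_sq {O : Type} [CommRing O] [IsDomain O] (n : ℕ) (a : Fin n → O) :
    ∏ i, ((∏ j, (X - C (a j))).derivative).eval (a i) =
      (-1) ^ (n * (n - 1) / 2) * (Matrix.vandermonde a).det ^ 2 := by
  classical
  have h1 : ∀ i, ((∏ j, (X - C (a j))).derivative).eval (a i) = ∏ j ∈ ({i} : Finset (Fin n))ᶜ, (a i - a j) := by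
    intro i
    rw [derivative_prod_finset, eval_finsetSum, Finset.sum_eq_single i]
    · simp [eval_prod, Finset.compl_singleton]
    · intro b _ hb
      simp only [eval_mul, eval_prod]
      rw [Finset.prod_eq_zero (i := i)] <;> simp [hb.symm]
    · simp
  simp_rw [h1]
  rw [← Finset.prod_prod_Ioi_mul_eq_prod_prod_off_diag (fun j i => a i - a j), Matrix.det_vandermonde]
  have h2 : ∀ i j : Fin n, (a i - a j) * (a j - a i) = (-1) * (a j - a i)^2 := by intros; ring
  simp_rw [h2, Finset.prod_mul_distrib, Finset.prod_pow]
  congr 1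
  · simp only [Finset.prod_const, Finset.prod_pow_eq_pow_sum, Fin.card_Ioi]
    congr 1
    rw [Fin.sum_univ_eq_sum_range (fun i => n - 1 - i), Finset.sum_range_reflect (fun i => i), Finset.sum_range_id]

lemma res_eq {O : Type} [CommRing O] [IsDomain O] (n : ℕ) (a : Fin n → O) (F G : ℤ[X])
    (hF : F.map (Int.castRingHom O) = ∏ j, (X - C (a j))) (k : ℕ) (hk : G.natDegree ≤ k) :
    ((resultant F G n k : ℤ) : O) = ∏ i, (G.map (Int.castRingHom O)).eval (a i) := by
  have h := resultant_prod_left Finset.univ (fun j => X - C (a j)) (G.map (Int.castRingHom O)) k (by simp) (natDegree_map_le.trans hk)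
  rw [← hF] at h
  have hd : (F.map (Int.castRingHom O)).natDegree = n := by
    rw [hF, natDegree_prod_of_monic _ _ (fun i _ => monic_X_sub_C _)]; simp
  rw [hd, resultant_map_map] at h
  simp only [eq_intCast] at h
  rw [h]
  apply Finset.prod_congr rfl
  intro i _
  rw [natDegree_X_sub_C, resultant_X_sub_C_left]
  exact (natDegree_map_le.trans hk)

lemma res_one (n t : ℕ) (ht : 0 < t) (hn : 6 * t < n) :
    resultant ((X:ℤ[X]) ^ n + (X ^ t + 1) ^ 6) (X ^ t + 1) n t = 1 := by
  have : ((X:ℤ[X]) ^ n + (X ^ t + 1) ^ 6) = X ^ n + (X ^ t + 1) * (X ^ t + 1) ^ 5 := by ring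
  have hd : ((X:ℤ[X]) ^ t + 1).natDegree ≤ t := by compute_degree
  rw [this, resultant_add_mul_left, resultant_X_pow_left _ _ _ hd]
  · simp [ht.ne]
  · have := natDegree_pow_le_of_le 5 hd
    omega
  · exact hd

lemma res_two (n t : ℕ) (ht : 0 < t) (hn : 6 * t < n) (hodd : Odd n) (m : ℤ) (hm : m = n - 6 * t) :
    ((resultant ((X:ℤ[X]) ^ n + (X ^ t + 1) ^ 6) (C m * X ^ t + C (n:ℤ)) n t : ℤ) : ZMod 8) = n := by
  have h := resultant_map_map ((X:ℤ[X]) ^ n + (X ^ t + 1) ^ 6) (C m * X ^ t + C (n:ℤ)) n t (Int.castRingHom (ZMod 8))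
  rw [← eq_intCast (Int.castRingHom (ZMod 8)), ← h]
  obtain ⟨e, he⟩ := hodd
  have hn1 : (n : ZMod 8) ^ 2 = 1 := by
    rw [he]; push_cast
    generalize (e : ZMod 8) = x
    revert x; decide
  have hm1 : (m : ZMod 8) ^ 2 = 1 := by
    rw [hm, he]; push_cast
    generalize (e : ZMod 8) = x
    generalize (t : ZMod 8) = y
    revert x y; decide
  obtain ⟨c, hc⟩ : ∃ c : ZMod 8, c = 1 - m * n := ⟨_, rfl⟩
  have hc3 : c ^ 3 = 0 := by
    rw [hc, hm, he]; push_cast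
    generalize (e : ZMod 8) = x
    generalize (t : ZMod 8) = y
    revert x y; decide
  have hC3 : (C c : (ZMod 8)[X]) ^ 3 = 0 := by rw [← C_pow, hc3, C_0]
  have hC : (C c : (ZMod 8)[X]) = 1 - C (m : ZMod 8) * C (n : ZMod 8) := by rw [hc]; simp
  have hM : (C (m : ZMod 8) : (ZMod 8)[X]) ^ 2 = 1 := by rw [← C_pow, hm1, C_1]
  have e1 : (C m * X ^ t + C (n:ℤ) : ℤ[X]).map (Int.castRingHom (ZMod 8)) = C (m : ZMod 8) * X ^ t + C (n : ZMod 8) := by simp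
  have hd : (C (m : ZMod 8) * X ^ t + C (n : ZMod 8)).natDegree ≤ t := by compute_degree
  obtain ⟨y, hy⟩ : ∃ y : (ZMod 8)[X], y = C (m : ZMod 8) * (C (m : ZMod 8) * X ^ t + C (n : ZMod 8)) := ⟨_, rfl⟩
  have hyd : y.natDegree ≤ t := by rw [hy]; exact (natDegree_C_mul_le _ _).trans hd
  have hyX : X ^ t + 1 = y + C c := by rw [hy, hC]; linear_combination (- X ^ t) * hM
  have e2 : ((X:ℤ[X]) ^ n + (X ^ t + 1) ^ 6).map (Int.castRingHom (ZMod 8)) =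
      X ^ n + (C (m : ZMod 8) * X ^ t + C (n : ZMod 8)) * (C (m : ZMod 8) * (y^5 + 6 * C c * y ^ 4 + 15 * (C c)^2 * y^3)) := by
    simp only [Polynomial.map_add, Polynomial.map_pow, map_X, Polynomial.map_one]
    rw [hyX, ← mul_assoc, mul_comm _ (C (m : ZMod 8)), ← hy]
    linear_combination (20 * y^3 + 15 * C c * y ^ 2 + 6 * C c ^ 2 * y + C c ^ 3) * hC3
  rw [e1, e2, resultant_add_mul_left, resultant_X_pow_left _ _ _ hd]
  · simp [ht.ne]
    rw [he, pow_succ, pow_mul, ← he, hn1]; simp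
  · have : (C (m : ZMod 8) * (y^5 + 6 * C c * y ^ 4 + 15 * (C c)^2 * y^3)).natDegree ≤ 5 * t := by
      refine (natDegree_C_mul_le _ _).trans ?_
      have h5 := natDegree_pow_le_of_le 5 hyd
      have h4 : (6 * C c * y ^ 4).natDegree ≤ 4 * t := by
        have : (6 * C c : (ZMod 8)[X]) = C (6 * c) := by rw [C_mul]; rfl
        rw [this]
        exact (natDegree_C_mul_le _ _).trans (natDegree_pow_le_of_le 4 hyd)
      have h3 : (15 * (C c)^2 * y ^ 3).natDegree ≤ 3 * t := by
        have : (15 * C c ^2 : (ZMod 8)[X]) = C (15 * c^2) := by rw [C_mul, C_pow]; rfl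
        rw [this]
        exact (natDegree_C_mul_le _ _).trans (natDegree_pow_le_of_le 3 hyd)
      exact natDegree_add_le_of_degree_le (natDegree_add_le_of_degree_le h5 (h4.trans (by omega))) (h3.trans (by omega))
    omega
  · exact hd
lemma F_natDegree (n t : ℕ) (hn : 6 * t < n) :
    ((X:ℤ[X]) ^ n + (X ^ t + 1) ^ 6).natDegree = n ∧ ((X:ℤ[X]) ^ n + (X ^ t + 1) ^ 6).Monic := by
  have hd : ((X:ℤ[X]) ^ t + 1).natDegree ≤ t := by compute_degree
  have h6 := natDegree_pow_le_of_le 6 hd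
  have hlt : (((X:ℤ[X]) ^ t + 1) ^ 6).natDegree < ((X:ℤ[X]) ^ n).natDegree := by
    rw [natDegree_X_pow]; omega
  refine ⟨by rw [natDegree_add_eq_left_of_natDegree_lt hlt, natDegree_X_pow], ?_⟩
  exact (monic_X_pow n).add_of_left (degree_lt_degree hlt)

lemma disc_val {O : Type} [CommRing O] [IsDomain O] (n t : ℕ) (ht : 0 < t) (hn : 6 * t < n)
    (hodd : Odd n) (r : Fin n → O)
    (hF : ((X:ℤ[X]) ^ n + (X ^ t + 1) ^ 6).map (Int.castRingHom O) = ∏ j, (X - C (r j))) :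
    ∃ R : ℤ, (R : ZMod 8) = n ∧ (Matrix.vandermonde r).det ^ 2 = (((-1) ^ (n * (n - 1) / 2) * R : ℤ) : O) := by
  refine ⟨_, res_two n t ht hn hodd (n - 6 * t) rfl, ?_⟩
  have hd1 : ((X:ℤ[X]) ^ t + 1).natDegree ≤ t := by compute_degree
  have hd2 : (C ((n:ℤ) - 6 * t) * X ^ t + C (n:ℤ)).natDegree ≤ t := by compute_degree
  have h1 := res_eq n r _ _ hF t hd1
  have h2 := res_eq n r _ _ hF t hd2
  rw [res_one n t ht hn] at h1
  have h3 := disc_sq n r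
  rw [← hF] at h3
  generalize resultant ((X:ℤ[X]) ^ n + (X ^ t + 1) ^ 6) (C ((n:ℤ) - 6 * t) * X ^ t + C (n:ℤ)) n t = R at h2 ⊢
  have h0 : ∏ i, r i = -1 := by
    have := congrArg (eval 0) hF
    simp [eval_prod, ht.ne', (show n ≠ 0 by omega), Finset.prod_neg, hodd.neg_one_pow] at this
    rw [← neg_eq_iff_eq_neg]; exact this.symm
  have hroot : ∀ i, r i ^ n = - (r i ^ t + 1) ^ 6 := by
    intro i
    have := congrArg (eval (r i)) hF
    rw [eval_prod, Finset.prod_eq_zero (Finset.mem_univ i) (by simp)] at this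
    simp at this
    exact eq_neg_of_add_eq_zero_left this
  have hkey : ∀ i, r i * ((((X:ℤ[X]) ^ n + (X ^ t + 1) ^ 6).map (Int.castRingHom O)).derivative).eval (r i)
      = - ((((X:ℤ[X]) ^ t + 1).map (Int.castRingHom O)).eval (r i) ^ 5 *
        ((C ((n:ℤ) - 6 * t) * X ^ t + C (n:ℤ)).map (Int.castRingHom O)).eval (r i)) := by
    intro i
    have e1 : r i * r i ^ (n - 1) = r i ^ n := by rw [← pow_succ']; congr 1; omega
    have e2 : r i * r i ^ (t - 1) = r i ^ t := by rw [← pow_succ']; congr 1; omega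
    simp [derivative_pow]
    linear_combination (n : O) * e1 + 6 * (t : O) * (r i ^ t + 1) ^ 5 * e2 + (n : O) * hroot i
  have h4 := Finset.prod_congr rfl (fun i (_ : i ∈ Finset.univ) => hkey i)
  rw [Finset.prod_mul_distrib, h0, Finset.prod_neg, Finset.prod_mul_distrib, Finset.prod_pow, ← h1, ← h2, h3] at h4
  simp [hodd.neg_one_pow] at h4
  push_cast
  rw [← h4, ← mul_assoc, ← mul_pow]
  simp

lemma g_odd (n t : ℕ) (ht : 0 < t) (hn : 6 * t < n) (h : n % 8 = 3 ∨ n % 8 = 5) :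
    ¬ Irreducible (((X:ℤ[X]) ^ n + (X ^ t + 1) ^ 6).map (Int.castRingHom (ZMod 2))) := by
  intro hirr
  have hodd : Odd n := by rw [Nat.odd_iff]; omega
  obtain ⟨hdeg, hmon⟩ := F_natDegree n t hn
  obtain ⟨O, _, _, _, P, σ, a, hP, h2, hσ, ha, hV⟩ := frob_setup _ hmon (by omega)
  obtain ⟨r, hr, hk⟩ := stick _ hmon n hdeg hodd hirr P hP σ a h2 hσ ha hV
  obtain ⟨R, hR, hD⟩ := disc_val n t ht hn hodd r hr
  have hR' : R % 8 = (n : ℤ) % 8 := by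
    have : ((R : ℤ) : ZMod 8) = ((n : ℤ) : ZMod 8) := by simpa using hR
    exact (ZMod.intCast_eq_intCast_iff' _ _ 8).mp this
  have hD8 : ((-1) ^ (n * (n - 1) / 2) * R : ℤ) % 8 = 5 := by
    rcases h with h | h
    · have : Odd (n * (n - 1) / 2) := by
        obtain ⟨q, rfl⟩ : ∃ q, n = 8 * q + 3 := ⟨n / 8, by omega⟩
        have : (8 * q + 3) * (8 * q + 3 - 1) / 2 = 2 * (16 * q * q + 10 * q + 1) + 1 := by
          apply Nat.div_eq_of_eq_mul_left (by norm_num)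
          simp only [Nat.add_one_sub_one, Nat.add_sub_assoc, Nat.reduceSub, Nat.reduceLeDiff]
          ring
        exact ⟨_, this⟩
      rw [this.neg_one_pow]; omega
    · have : Even (n * (n - 1) / 2) := by
        obtain ⟨q, rfl⟩ : ∃ q, n = 8 * q + 5 := ⟨n / 8, by omega⟩
        have : (8 * q + 5) * (8 * q + 5 - 1) / 2 = 2 * (16 * q * q + 18 * q + 5) := by
          apply Nat.div_eq_of_eq_mul_left (by norm_num)
          simp only [Nat.add_one_sub_one, Nat.add_sub_assoc, Nat.reduceSub, Nat.reduceLeDiff]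
          ring
        rw [this]; exact even_two_mul _
      rw [this.neg_one_pow]; omega
  generalize ((-1) ^ (n * (n - 1) / 2) * R : ℤ) = D at hD hD8
  have := hk ((D - 1) / 4) (by
    rw [hD]
    have : D = 1 + 4 * ((D - 1) / 4) := by omega
    exact_mod_cast this)
  rw [Int.even_iff] at this
  omega

lemma g_red (s n : ℕ) (hs : Even s) (hs0 : 0 < s)
    (hn : 3 * s < n) (h1 : n % 8 ≠ 1) (h7 : n % 8 ≠ 7) :
    ¬ Irreducible (X ^ n + X ^ (3 * s) + X ^ (2 * s) + X ^ s + 1 : Polynomial (ZMod 2)) := by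
  obtain ⟨t, rfl⟩ := hs
  have two : (2 : (ZMod 2)[X]) = 0 := CharTwo.two_eq_zero
  rcases Nat.even_or_odd n with ⟨e, rfl⟩ | ho
  · have : (X ^ (e + e) + X ^ (3 * (t + t)) + X ^ (2 * (t + t)) + X ^ (t + t) + 1 : (ZMod 2)[X])
        = (X ^ e + X ^ (3 * t) + X ^ (2 * t) + X ^ t + 1) ^ 2 := by
      simp only [CharTwo.add_sq, ← pow_mul, one_pow]
      ring
    rw [this]
    exact fun h => not_irreducible_pow (by norm_num) h
  · have := g_odd n t (by omega) (by omega) (by rw [Nat.odd_iff] at ho; omega)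
    convert this using 2
    simp only [Polynomial.map_add, Polynomial.map_pow, map_X, Polynomial.map_one]
    linear_combination (- (3 * X ^ t + 7 * X ^ (2 * t) + 10 * X ^ (3 * t) + 7 * X ^ (4 * t) + 3 * X ^ (5 * t))) * two

lemma irr_reverse {K : Type} [Field K] (f : K[X]) (h0 : f.coeff 0 ≠ 0) (hf : Irreducible f) :
    Irreducible f.reverse := by
  have hrr : f.reverse.reverse = f := by
    have h := reverse_natDegree f
    rw [natTrailingDegree_eq_zero.mpr (Or.inr h0)] at h
    rw [reverse, h]
    simp [reverse]
  have hu : ∀ p : K[X], p.coeff 0 ≠ 0 → IsUnit p.reverse → IsUnit p := by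
    intro p hp h
    have h1 := natDegree_eq_zero_of_isUnit h
    have h2 := reverse_natDegree p
    rw [natTrailingDegree_eq_zero.mpr (Or.inr hp), h1] at h2
    rw [isUnit_iff_degree_eq_zero, degree_eq_natDegree (by rintro rfl; simp at hp)]
    simp; omega
  constructor
  · exact fun h => hf.not_isUnit (hu f h0 h)
  · intro a b hab
    have hc : a.coeff 0 * b.coeff 0 ≠ 0 := by
      rw [← mul_coeff_zero, ← hab, coeff_zero_reverse]
      exact leadingCoeff_ne_zero.mpr hf.ne_zero
    have : f = a.reverse * b.reverse := by rw [← reverse_mul_of_domain, ← hab, hrr]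
    rcases hf.isUnit_or_isUnit this with h | h
    · exact Or.inl (hu a (left_ne_zero_of_mul hc) h)
    · exact Or.inr (hu b (right_ne_zero_of_mul hc) h)

theorem class2_pentanomial_reducible (s n : ℕ) (hs : Even s) (hs0 : 0 < s)
    (hn : 3 * s < n) (h1 : n % 8 ≠ 1) (h7 : n % 8 ≠ 7) :
    ¬ Irreducible (X ^ n + X ^ (n - s) + X ^ (n - 2 * s) + X ^ (n - 3 * s) + 1 :
        Polynomial (ZMod 2)) ∧
    ¬ Irreducible (X ^ n + X ^ (3 * s) + X ^ (2 * s) + X ^ s + 1 :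
        Polynomial (ZMod 2)) := by
  refine ⟨?_, g_red s n hs hs0 hn h1 h7⟩
  intro hf
  apply g_red s n hs hs0 hn h1 h7
  have hd : (X ^ n + X ^ (n - s) + X ^ (n - 2 * s) + X ^ (n - 3 * s) + 1 :
        Polynomial (ZMod 2)).natDegree = n := by
    have e : (X ^ n + X ^ (n - s) + X ^ (n - 2 * s) + X ^ (n - 3 * s) + 1 : (ZMod 2)[X]) =
      X ^ n + (X ^ (n - s) + X ^ (n - 2 * s) + X ^ (n - 3 * s) + 1) := by ring
    have hl : (X ^ (n - s) + X ^ (n - 2 * s) + X ^ (n - 3 * s) + 1 : (ZMod 2)[X]).natDegree ≤ n - s := by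
      compute_degree <;> omega
    rw [e, natDegree_add_eq_left_of_natDegree_lt, natDegree_X_pow]
    rw [natDegree_X_pow]; omega
  have := irr_reverse _ (by
    simp [coeff_X_pow, (show n ≠ 0 by omega).symm, (show 0 ≠ n - s by omega), (show 0 ≠ n - 2 * s by omega), (show 0 ≠ n - 3 * s by omega)]) hf
  rw [reverse, hd] at this
  convert this using 1
  rw [← C_1]
  simp only [reflect_add, reflect_monomial, reflect_C]
  rw [revAt_le (le_refl n), revAt_le (show n - s ≤ n by omega), revAt_le (show n - 2 * s ≤ n by omega), revAt_le (show n - 3 * s ≤ n by omega)]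
  rw [show n - n = 0 by omega, show n - (n - s) = s by omega, show n - (n - 2 * s) = 2 * s by omega, show n - (n - 3 * s) = 3 * s by omega]
  simp
  ring
end

section
/- Let s be an even positive integer and n an odd integer with n > 3s, and let f(X) = X^n + X^(n-s) + X^(n-2s) + X^(n-3s) + 1 in F_2[X]. Let t_f denote the number of irreducible factors of f in F_2[X], counted with multiplicity. Then t_f is odd if n ≡ 1 or n ≡ -1 (mod 8), and t_f is even otherwise. -/
open Polynomial

lemma aux_sign {α β : Type*} [Fintype α] [DecidableEq α] [DecidableEq β] (π : Equiv.Perm α)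
    (m : α → β) (h : ∀ i j, m i = m j ↔ π.SameCycle i j) :
    Equiv.Perm.sign π = (-1) ^ (Fintype.card α + (Finset.univ.image m).card) := by
  classical
  have h1 : (π.support.image m).card = Multiset.card π.cycleType := by
    have e1 : π.cycleFactorsFinset = π.support.image π.cycleOf := by
      ext c
      simp only [Finset.mem_image]
      constructor
      · intro hc
        obtain ⟨a, ha⟩ := (Equiv.Perm.mem_cycleFactorsFinset_iff.mp hc).1.nonempty_support
        have := (Equiv.Perm.cycle_is_cycleOf ha hc)
        exact ⟨a, Equiv.Perm.mem_cycleFactorsFinset_support_le hc ha, this.symm⟩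
      · rintro ⟨a, ha, rfl⟩
        exact Equiv.Perm.cycleOf_mem_cycleFactorsFinset_iff.mpr ha
    have e2 : Multiset.card π.cycleType = π.cycleFactorsFinset.card := by
      rw [Equiv.Perm.cycleType_def]; simp
    rw [e2, e1]
    let g : β → Equiv.Perm α := fun b => if hb : ∃ a, m a = b then π.cycleOf hb.choose else 1
    have hg : ∀ a, g (m a) = π.cycleOf a := by
      intro a
      have hb : ∃ a', m a' = m a := ⟨a, rfl⟩
      simp only [g, dif_pos hb]
      exact ((h _ _).mp hb.choose_spec).cycleOf_eq
    have e3 : π.support.image π.cycleOf = (π.support.image m).image g := by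
      rw [Finset.image_image]; congr 1; ext1 a; exact (hg a).symm
    rw [e3, Finset.card_image_of_injOn (s := π.support.image m) (f := g)]
    intro b hb b' hb' hbb
    simp only [Finset.coe_image, Set.mem_image, Finset.mem_coe] at hb hb'
    obtain ⟨a, ha, rfl⟩ := hb
    obtain ⟨a', ha', rfl⟩ := hb'
    rw [hg, hg] at hbb
    rw [h]
    have : a' ∈ (π.cycleOf a).support := by
      rw [hbb, Equiv.Perm.mem_support_cycleOf_iff]
      exact ⟨Equiv.Perm.SameCycle.refl _ _, ha'⟩
    exact (Equiv.Perm.mem_support_cycleOf_iff.mp this).1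
  have hfix : ∀ i ∈ π.supportᶜ, π i = i := by
    intro i hi; simpa using hi
  have h2 : (π.supportᶜ.image m).card = Fintype.card α - π.support.card := by
    rw [Finset.card_image_of_injOn, Finset.card_compl]
    intro i hi j hj hij
    obtain ⟨z, hz⟩ := (h i j).mp hij
    rw [← hz]
    exact ((Equiv.Perm.zpow_apply_eq_self_of_apply_eq_self (hfix i hi) z)).symm
  have h3 : (Finset.univ.image m).card = (π.support.image m).card + (π.supportᶜ.image m).card := by
    rw [← Finset.card_union_of_disjoint, ← Finset.image_union, Finset.union_compl]
    rw [Finset.disjoint_left]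
    intro b hb hb'
    simp only [Finset.mem_image] at hb hb'
    obtain ⟨a, ha, rfl⟩ := hb
    obtain ⟨a', ha', haa⟩ := hb'
    obtain ⟨z, hz⟩ := (h a' a).mp haa
    rw [Equiv.Perm.zpow_apply_eq_self_of_apply_eq_self (hfix a' ha') z] at hz
    subst hz
    simp at ha ha'
    exact ha ha'
  have h4 : π.support.card ≤ Fintype.card α := Finset.card_le_univ _
  rw [Equiv.Perm.sign_of_cycleType, Equiv.Perm.sum_cycleType, h3, h1, h2]
  have : Fintype.card α + (Multiset.card π.cycleType + (Fintype.card α - π.support.card))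
    = π.support.card + Multiset.card π.cycleType + 2 * (Fintype.card α - π.support.card) := by omega
  rw [this, pow_add _ _ (2 * _), pow_mul]; simp

lemma aux_card {k : Type*} [Field k] [Algebra (ZMod 2) k] [DecidableEq k] {n : ℕ} (f : (ZMod 2)[X])
    (hf0 : f ≠ 0) (hsq : Squarefree f) (x : Fin n → k)
    (hf : f.map (algebraMap (ZMod 2) k) = ∏ i, (X - C (x i))) :
    Multiset.card (UniqueFactorizationMonoid.factors f) =
      (Finset.univ.image (fun i => minpoly (ZMod 2) (x i))).card := by
  classical
  have hroot : ∀ i, aeval (x i) f = 0 := by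
    intro i
    rw [← eval_map_algebraMap, hf, eval_prod]
    exact Finset.prod_eq_zero (Finset.mem_univ i) (by simp)
  have hint : ∀ i, IsIntegral (ZMod 2) (x i) := fun i =>
    (isAlgebraic_iff_isIntegral.mp ⟨f, hf0, hroot i⟩)
  have h1 : Multiset.card (UniqueFactorizationMonoid.factors f) =
      Multiset.card (UniqueFactorizationMonoid.normalizedFactors f) := by
    unfold UniqueFactorizationMonoid.normalizedFactors; rw [Multiset.card_map]
  rw [h1, ← Multiset.toFinset_card_of_nodup
    ((UniqueFactorizationMonoid.squarefree_iff_nodup_normalizedFactors hf0).mp hsq)]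
  congr 1
  ext p
  rw [Multiset.mem_toFinset, UniqueFactorizationMonoid.mem_normalizedFactors_iff' hf0]
  simp only [Finset.mem_image, Finset.mem_univ, true_and]
  constructor
  · rintro ⟨hp, hn, hd⟩
    have hpm : p.Monic := by
      have := monic_normalize hp.ne_zero
      rwa [hn] at this
    have hd' : p.map (algebraMap (ZMod 2) k) ∣ ∏ i, (X - C (x i)) := by
      rw [← hf]; exact Polynomial.map_dvd _ hd
    by_contra hcon
    push Not at hcon
    have hcop : IsCoprime (p.map (algebraMap (ZMod 2) k)) (∏ i, (X - C (x i))) := by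
      apply IsCoprime.prod_right
      intro i _
      refine IsCoprime.symm ?_
      refine (irreducible_X_sub_C (x i)).coprime_iff_not_dvd.mpr ?_
      intro hdv
      rw [dvd_iff_isRoot, IsRoot, eval_map_algebraMap] at hdv
      exact hcon i (minpoly.eq_of_irreducible_of_monic hp hdv hpm).symm
    have := hcop.isUnit_of_dvd' dvd_rfl hd'
    rw [isUnit_map] at this
    exact hp.not_isUnit this
  · rintro ⟨i, rfl⟩
    exact ⟨minpoly.irreducible (hint i), (minpoly.monic (hint i)).normalize_eq_self,
      minpoly.dvd _ _ (hroot i)⟩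

lemma aux_cycle {k : Type*} [Field k] [Algebra (ZMod 2) k] [Finite k] {n : ℕ}
    (x : Fin n → k) (hx : Function.Injective x) (π : Equiv.Perm (Fin n))
    (hπ : ∀ i, x (π i) = x i ^ 2) (i j : Fin n) :
    minpoly (ZMod 2) (x i) = minpoly (ZMod 2) (x j) ↔ π.SameCycle i j := by
  have hpow : ∀ (m : ℕ) i, x ((π ^ m) i) =
      (FiniteField.frobeniusAlgEquivOfAlgebraic (ZMod 2) k ^ m) (x i) := by
    intro m
    induction m with
    | zero => intro i; simp
    | succ m ih => 
      intro i
      rw [pow_succ', pow_succ', Equiv.Perm.mul_apply, hπ, ih, AlgEquiv.mul_apply]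
      simp
  constructor
  · intro h
    obtain ⟨g, hg⟩ := (Normal.minpoly_eq_iff_mem_orbit k).mp h.symm
    obtain ⟨m, rfl⟩ := (FiniteField.bijective_frobeniusAlgEquivOfAlgebraic_pow (ZMod 2) k).2 g
    refine ⟨(m : ℕ), hx ?_⟩
    rw [zpow_natCast, hpow]
    exact hg
  · intro h
    obtain ⟨m, hm⟩ := h.exists_nat_pow_eq
    refine ((Normal.minpoly_eq_iff_mem_orbit k).mpr
      ⟨FiniteField.frobeniusAlgEquivOfAlgebraic (ZMod 2) k ^ m, ?_⟩).symm
    rw [← hm, hpow]; rfl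

lemma aux_final {O k : Type*} [CommRing O] [IsDomain O] [Field k] [CharP k 2] (φ : O →+* k)
    (σ : O →+* O) (hφ : ∀ z, φ (σ z) = φ z ^ 2) (hker : ∀ z, φ z = 0 → (2 : O) ∣ z)
    (h2 : (2 : O) ≠ 0) (δ w : O) (c : ℤ) (ε : ℤˣ) (hσ : σ δ = ((ε : ℤ) : O) * δ)
    (hδ : δ ^ 2 = 1 + 4 * c + 8 * w) : ε = 1 ↔ Even c := by
  have k2 : (2 : k) = 0 := CharTwo.two_eq_zero
  have f2 : φ 2 = 0 := by rw [map_ofNat, k2]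
  have h1 : φ (δ - 1) = 0 := by
    have h := congrArg φ hδ
    have e : (1 : O) + 4 * c + 8 * w = 1 + 2 * (2 * c + 4 * w) := by ring
    rw [e] at h
    simp only [map_pow, map_add, map_one, map_mul, f2] at h
    rw [map_sub, map_one]
    have : (φ δ - 1) ^ 2 = 0 := by linear_combination h + (1 - φ δ) * k2
    exact pow_eq_zero_iff (two_ne_zero) |>.mp this
  obtain ⟨γ, hγ⟩ := hker _ h1
  have hd : δ = 1 + 2 * γ := by linear_combination hγ
  subst hd
  have h3 : γ ^ 2 + γ = c + 2 * w := by
    apply mul_left_cancel₀ (mul_ne_zero h2 h2)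
    linear_combination hδ
  have h4 : φ γ ^ 2 + φ γ = (c : k) := by
    have h := congrArg φ h3
    simpa [k2, f2] using h
  have hpar : Even c ↔ (c : k) = 0 := by
    rw [CharP.intCast_eq_zero_iff k 2 c, even_iff_two_dvd]; rfl
  rw [hpar, ← h4]
  have hs : σ (1 + 2 * γ) = 1 + 2 * σ γ := by rw [map_add, map_mul, map_one, map_ofNat]
  rw [hs] at hσ
  have h5 := hφ γ
  rcases Int.units_eq_one_or ε with rfl | rfl
  · have : σ γ = γ := by
      apply mul_left_cancel₀ h2
      simp at hσ
      rcases hσ with h | h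
      · rw [h]
      · exact absurd h h2
    rw [this] at h5
    simp only [true_iff]
    linear_combination φ γ * k2 - h5
  · have : σ γ = -1 - γ := by
      apply mul_left_cancel₀ h2
      simp at hσ
      linear_combination hσ
    rw [this] at h5
    simp only [map_sub, map_neg, map_one] at h5
    constructor
    · intro h; exact absurd h (by decide)
    · intro h
      exfalso
      have : (1 : k) = 0 := by linear_combination -h - h5
      exact one_ne_zero this

noncomputable def pent (R : Type*) [CommRing R] (d s : ℕ) : R[X] :=
  X ^ (d + 3 * s) + X ^ (d + 2 * s) + X ^ (d + s) + X ^ d + 1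

lemma aux_prod {O ι : Type*} [CommRing O] [DecidableEq ι] (S : Finset ι) (N r : O) (u : ι → O) :
    ∃ e w : O, (∑ i ∈ S, u i) ^ 2 = ∑ i ∈ S, u i ^ 2 + 2 * e ∧
      N ^ 2 * ∏ i ∈ S, (N + 2 * r * u i) = N ^ (S.card + 2) +
        N ^ (S.card + 1) * (2 * r) * ∑ i ∈ S, u i + N ^ S.card * (4 * r ^ 2) * e + 8 * w := by
  induction S using Finset.induction_on with
  | empty => exact ⟨0, 0, by simp, by simp⟩
  | insert j S hj ih =>
    obtain ⟨e, w, h1, h2⟩ := ih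
    refine ⟨e + u j * ∑ i ∈ S, u i, w * (N + 2 * r * u j) + N ^ S.card * r ^ 3 * e * u j, ?_, ?_⟩
    · rw [Finset.sum_insert hj, Finset.sum_insert hj]
      linear_combination h1
    · rw [Finset.sum_insert hj, Finset.prod_insert hj, Finset.card_insert_of_notMem hj]
      linear_combination (N + 2 * r * u j) * h2

lemma aux_psum {O : Type*} [CommRing O] {n : ℕ} (x : Fin n → O)
    (hc : ∀ i < n, Odd i → (∏ i, (X - C (x i))).coeff (n - i) = 0) :
    ∀ k < n, Odd k → ∑ i, x i ^ k = 0 := by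
  have he : ∀ i < n, Odd i → MvPolynomial.aeval x (MvPolynomial.esymm (Fin n) O i) = 0 := by
    intro i hi ho
    have h := hc i hi ho
    rw [MvPolynomial.aeval_esymm_eq_multiset_esymm]
    have h' := Multiset.prod_X_sub_C_coeff (Finset.univ.val.map x) (k := n - i) (by simp)
    rw [Multiset.map_map] at h'
    have e : n - (n - i) = i := by omega
    simp only [Multiset.card_map, Finset.card_val, Finset.card_univ, Fintype.card_fin, e] at h'
    have h'' : (Multiset.map ((fun t => X - C t) ∘ x) Finset.univ.val).prod =
      ∏ i, (X - C (x i)) := rfl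
    rw [h'', h, ho.neg_one_pow] at h'
    linear_combination h'
  intro k
  induction k using Nat.strong_induction_on with
  | _ k ih =>
    intro hk ho
    have h := congrArg (MvPolynomial.aeval x)
      (MvPolynomial.psum_eq_mul_esymm_sub_sum (Fin n) O k ho.pos)
    rw [map_sub, map_mul, he k hk ho, map_sum, Finset.sum_eq_zero] at h
    · simpa [MvPolynomial.psum] using h
    · rintro ⟨a, b⟩ hab
      simp only [Finset.mem_filter, Set.mem_Ioo] at hab
      obtain ⟨hab, h0, h1⟩ := hab
      have hab := Finset.HasAntidiagonal.mem_antidiagonal.mp hab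
      simp only at hab
      subst hab
      rw [map_mul, map_mul]
      rcases Nat.even_or_odd a with ha | ha
      · have hb : Odd b := by
          rcases Nat.even_or_odd b with hb | hb
          · exact absurd (ha.add hb) (by simpa using ho)
          · exact hb
        have := ih b (by omega) (by omega) hb
        simp only [MvPolynomial.psum, map_sum, map_pow, MvPolynomial.aeval_X, this, mul_zero]
      · simp [he a (by omega) ha]

lemma aux_disc {O : Type*} [CommRing O] (m : ℕ) (x : Fin (2 * m + 1) → O) (F : O[X])
    (hF : F = ∏ i, (X - C (x i))) :
    ∏ i, F.derivative.eval (x i) = (-1) ^ m * (Matrix.vandermonde x).det ^ 2 := by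
  have h1 : ∀ i, F.derivative.eval (x i) = ∏ j ∈ {i}ᶜ, (x i - x j) := by
    intro i
    rw [hF, derivative_prod_finset, eval_finsetSum, Finset.sum_eq_single i]
    · rw [eval_mul, eval_prod]
      simp [Finset.compl_singleton]
    · intro j _ hj
      rw [eval_mul, eval_prod, Finset.prod_eq_zero (i := i)]
      · simp
      · simp [hj.symm]
      · simp
    · simp
  rw [Finset.prod_congr rfl (fun i _ => h1 i)]
  rw [← Finset.prod_prod_Ioi_mul_eq_prod_prod_off_diag (fun j i => x i - x j), Matrix.det_vandermonde]
  have h2 : ∀ i j : Fin (2 * m + 1), (x i - x j) * (x j - x i) = (-1) * ((x j - x i) ^ 2) := by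
    intro i j; ring
  simp only [h2, Finset.prod_mul_distrib, Finset.prod_pow, Finset.prod_const, Fin.card_Ioi]
  congr 1
  rw [Finset.prod_pow_eq_pow_sum]
  have : ∑ i : Fin (2 * m + 1), (2 * m + 1 - 1 - (i : ℕ)) = m + 2 * m ^ 2 := by
    rw [Fin.sum_univ_eq_sum_range (fun i => 2 * m + 1 - 1 - i), Finset.sum_range_reflect (fun i => i)]
    have := Finset.sum_range_id_mul_two (2 * m + 1)
    simp at this ⊢
    nlinarith
  rw [this, pow_add, pow_mul]; simp

lemma aux_main {O : Type*} [CommRing O] [IsDomain O] (h2 : (2 : O) ≠ 0) (d r m : ℕ)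
    (hr : 0 < r) (hd : Odd d) (hm : d + 3 * (2 * r) = 2 * m + 1) (x : Fin (2 * m + 1) → O)
    (hF : pent O d (2 * r) = ∏ i, (X - C (x i))) :
    ∃ w : O, (Matrix.vandermonde x).det ^ 2 = (-1) ^ m * (2 * m + 1) ^ (2 * m + 1) + 8 * w := by
  have hp : ∀ k < 2 * m + 1, Odd k → ∑ i, x i ^ k = 0 := by
    apply aux_psum
    rintro i hi ⟨j, rfl⟩
    obtain ⟨c, rfl⟩ := hd
    rw [← hF]
    simp only [pent, coeff_add, coeff_X_pow, coeff_one]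
    rw [if_neg, if_neg, if_neg, if_neg, if_neg] <;> first | simp; done | omega
  have hx : ∀ i, x i ^ (d + 3 * (2 * r)) + x i ^ (d + 2 * (2 * r)) + x i ^ (d + 2 * r) + x i ^ d + 1
      = 0 := by
    intro i
    have := congrArg (eval (x i)) hF
    rw [eval_prod, Finset.prod_eq_zero (Finset.mem_univ i) (by simp)] at this
    simpa [pent] using this
  have hprod : ∏ i, x i = -1 := by
    have := congrArg (eval 0) hF
    have hd0 : d ≠ 0 := by rintro rfl; simp at hd
    rw [eval_prod] at this
    simp [pent, hd0, Finset.prod_neg, pow_succ, pow_mul] at this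
    linear_combination this
  let u : Fin (2 * m + 1) → O := fun i =>
    x i ^ (d + 2 * (2 * r)) + 2 * x i ^ (d + 2 * r) + 3 * x i ^ d
  have hder : ∀ i, x i * (pent O d (2 * r)).derivative.eval (x i) =
      -1 * (((2 * m + 1 : ℕ) : O) + 2 * r * u i) := by
    intro i
    obtain ⟨c, rfl⟩ := hd
    have e1 : 2 * c + 1 + 3 * (2 * r) = (2 * c + 3 * (2 * r)) + 1 := by ring
    have e2 : 2 * c + 1 + 2 * (2 * r) = (2 * c + 2 * (2 * r)) + 1 := by ring
    have e3 : 2 * c + 1 + (2 * r) = (2 * c + (2 * r)) + 1 := by ring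
    have h := hx i
    rw [← hm]
    simp only [pent, u]
    rw [e1, e2, e3] at h ⊢
    simp
    linear_combination (2 * c + 1 + 6 * r) * h
  have s1 : ∑ i, x i ^ (d + 2 * (2 * r)) = 0 := hp _ (by omega) (by
    obtain ⟨c, rfl⟩ := hd; exact ⟨c + 2 * r, by ring⟩)
  have s2 : ∑ i, x i ^ (d + 2 * r) = 0 := hp _ (by omega) (by
    obtain ⟨c, rfl⟩ := hd; exact ⟨c + r, by ring⟩)
  have s3 : ∑ i, x i ^ d = 0 := hp _ (by omega) hd
  have su : ∑ i, u i = 0 := by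
    simp only [u, Finset.sum_add_distrib, ← Finset.mul_sum, s1, s2, s3]; ring
  have sq : ∀ k, ∑ i, x i ^ k = 0 → ∃ a, ∑ i, x i ^ (2 * k) = 2 * a := by
    intro k hk
    obtain ⟨e, -, h, -⟩ := aux_prod Finset.univ 0 0 (fun i => x i ^ k)
    refine ⟨-e, ?_⟩
    rw [hk] at h
    simp only [← pow_mul, mul_comm k] at h
    linear_combination -h
  obtain ⟨a, ha⟩ := sq _ s2
  obtain ⟨b, hb⟩ := sq _ s3
  have s4 : ∑ i, x i ^ (2 * (d + 2 * (2 * r))) = ∑ i, x i ^ (2 * d) := by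
    have : ∀ i, x i ^ (2 * (d + 2 * (2 * r))) = x i ^ (2 * d) + x i ^ d - x i ^ (d + 2 * r) := by
      intro i
      have h := hx i
      -- x^(d-s') relation
      have e : x i ^ (2 * (d + 2 * (2 * r))) - x i ^ (2 * d) - x i ^ d + x i ^ (d + 2 * r) =
        x i ^ d * (x i ^ (2 * r) - 1) * (x i ^ (d + 3 * (2 * r)) + x i ^ (d + 2 * (2 * r)) + x i ^ (d + 2 * r) + x i ^ d + 1) := by
        ring
      rw [h] at e
      linear_combination e
    simp only [this, Finset.sum_sub_distrib, Finset.sum_add_distrib, s2, s3]; ring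
  have su2 : ∃ q, ∑ i, u i ^ 2 = 4 * q := by
    have : ∀ i, u i ^ 2 = x i ^ (2 * (d + 2 * (2 * r))) + 10 * x i ^ (2 * (d + 2 * r)) +
      9 * x i ^ (2 * d) + 4 * (x i ^ (2 * d + 3 * (2 * r)) + 3 * x i ^ (2 * d + 2 * r)) := by
      intro i; simp only [u]; ring
    refine ⟨5 * b + 5 * a + ∑ i, (x i ^ (2 * d + 3 * (2 * r)) + 3 * x i ^ (2 * d + 2 * r)), ?_⟩
    simp only [this]
    rw [Finset.sum_add_distrib, Finset.sum_add_distrib, Finset.sum_add_distrib, ← Finset.mul_sum,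
      ← Finset.mul_sum, ← Finset.mul_sum, s4, ha, hb]
    ring
  obtain ⟨q, hq⟩ := su2
  obtain ⟨e, w, he, hw⟩ := aux_prod Finset.univ ((2 * m + 1 : ℕ) : O) r u
  have he2 : e = -2 * q := by
    rw [su, hq] at he
    apply mul_left_cancel₀ h2
    linear_combination -he
  have hD : ∏ i, (pent O d (2 * r)).derivative.eval (x i) =
      ∏ i, (((2 * m + 1 : ℕ) : O) + 2 * r * u i) := by
    have := Finset.prod_congr (s₁ := Finset.univ) rfl (fun i _ => hder i)
    rw [Finset.prod_mul_distrib, Finset.prod_mul_distrib, hprod] at this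
    simp only [Finset.prod_const, Finset.card_univ, Fintype.card_fin, pow_succ, pow_mul] at this
    simp at this
    simpa using this
  rw [aux_disc m x _ hF] at hD
  obtain ⟨t, ht⟩ : ∃ t : ℕ, (2 * m + 1) ^ 2 = 8 * t + 1 := by
    have : (2 * m + 1) ^ 2 % 8 = 1 := by
      rw [Nat.pow_mod]
      have : (2 * m + 1) % 8 = 1 ∨ (2 * m + 1) % 8 = 3 ∨ (2 * m + 1) % 8 = 5 ∨ (2 * m + 1) % 8 = 7 := by omega
      rcases this with h | h | h | h <;> rw [h]
    exact ⟨(2 * m + 1) ^ 2 / 8, by omega⟩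
  have ht' : ((2 * m + 1 : ℕ) : O) ^ 2 = 8 * t + 1 := by exact_mod_cast congrArg (Nat.cast : ℕ → O) ht
  rw [← hD, su, he2] at hw
  simp only [Finset.card_univ, Fintype.card_fin] at hw
  have hm1 : ((-1 : O) ^ m) * (-1) ^ m = 1 := by rw [← mul_pow]; simp
  set D := (Matrix.vandermonde x).det ^ 2
  set N := ((2 * m + 1 : ℕ) : O)
  have hN : (2 * m + 1 : O) = N := by simp [N]
  rw [hN]
  refine ⟨(-1) ^ m * (w + t * N ^ (2 * m + 1) - N ^ (2 * m + 1) * r ^ 2 * q) - t * D, ?_⟩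
  have e3 : N ^ (2 * m + 1 + 2) = (8 * t + 1) * N ^ (2 * m + 1) := by rw [pow_add, ht']; ring
  rw [e3] at hw
  rw [ht'] at hw
  linear_combination (-1) ^ m * hw - (8 * t + 1) * D * hm1

lemma pent_map {R S : Type*} [CommRing R] [CommRing S] (φ : R →+* S) (d s : ℕ) :
    (pent R d s).map φ = pent S d s := by
  simp [pent]

lemma pent_monic {R : Type*} [CommRing R] [Nontrivial R] {d s : ℕ} (hd : 0 < d) (hs : 0 < s) :
    (pent R d s).Monic ∧ (pent R d s).natDegree = d + 3 * s := by
  have h : pent R d s = X ^ (d + 3 * s) + (X ^ (d + 2 * s) + X ^ (d + s) + X ^ d + 1) := by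
    simp only [pent]; ring
  have hdeg : (X ^ (d + 2 * s) + X ^ (d + s) + X ^ d + 1 : R[X]).degree < ((d + 3 * s : ℕ) : WithBot ℕ) := by
    refine (degree_add_le _ _).trans_lt (max_lt ((degree_add_le _ _).trans_lt (max_lt
      ((degree_add_le _ _).trans_lt (max_lt ?_ ?_)) ?_)) ?_)
    · rw [degree_X_pow]; exact_mod_cast (by omega)
    · rw [degree_X_pow]; exact_mod_cast (by omega)
    · rw [degree_X_pow]; exact_mod_cast (by omega)
    · rw [degree_one]; exact_mod_cast (by omega)
  have hm : (pent R d s).Monic := by rw [h]; exact monic_X_pow_add hdeg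
  refine ⟨hm, natDegree_eq_of_degree_eq_some ?_⟩
  rw [h, degree_add_eq_left_of_degree_lt (by rwa [degree_X_pow]), degree_X_pow]

lemma pent_sep (c r : ℕ) : (pent (ZMod 2) (2 * c + 1) (2 * r)).Separable := by
  refine ⟨1, X, ?_⟩
  have e1 : 2 * c + 1 + 3 * (2 * r) = 2 * (c + 3 * r) + 1 := by ring
  have e2 : 2 * c + 1 + 2 * (2 * r) = 2 * (c + 2 * r) + 1 := by ring
  have e3 : 2 * c + 1 + (2 * r) = 2 * (c + r) + 1 := by ring
  have two : (2 : (ZMod 2)[X]) = 0 := CharTwo.two_eq_zero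
  have key : ∀ a : ℕ, X * derivative (X ^ (2 * a + 1) : (ZMod 2)[X]) = X ^ (2 * a + 1) := by
    intro a
    rw [derivative_X_pow]
    have : ((2 * a + 1 : ℕ) : ZMod 2) = 1 := by
      push_cast; rw [show (2 : ZMod 2) = 0 from rfl]; ring
    rw [this]; simp [pow_succ]; ring
  rw [pent, e1, e2, e3]
  rw [derivative_add, derivative_add, derivative_add, derivative_add, derivative_one]
  linear_combination key (c + 3 * r) + key (c + 2 * r) + key (c + r) + key c + (X ^ (2 * (c + 3 * r) + 1) + X ^ (2 * (c + 2 * r) + 1) +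
    X ^ (2 * (c + r) + 1) + X ^ (2 * c + 1)) * two

lemma aux_split {O : Type*} [CommRing O] [IsDomain O] {n : ℕ} (F : O[X]) (hF : F.Monic)
    (hn : F.natDegree = n) (x : Fin n → O) (hx : Function.Injective x)
    (hr : ∀ i, F.eval (x i) = 0) : F = ∏ i, (X - C (x i)) := by
  have h1 : ((Finset.univ.val.map x).map (fun a => X - C a)).prod = ∏ i, (X - C (x i)) := by
    rw [Multiset.map_map]; rfl
  have hm : (∏ i, (X - C (x i))).Monic := monic_prod_of_monic _ _ (fun i _ => monic_X_sub_C _)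
  apply eq_of_monic_of_dvd_of_natDegree_le hm hF
  · rw [← h1, Multiset.prod_X_sub_C_dvd_iff_le_roots hF.ne_zero,
      Multiset.le_iff_subset (Finset.univ.nodup.map hx)]
    intro a ha
    simp only [Multiset.mem_map] at ha
    obtain ⟨i, -, rfl⟩ := ha
    exact (mem_roots hF.ne_zero).mpr (hr i)
  · rw [natDegree_prod_of_monic _ _ (fun i _ => monic_X_sub_C _)]
    simp [hn]

lemma aux_cast (O : Type*) [CommRing O] (m : ℕ) (a q : ℤ)
    (haq : (-1 : ℤ) ^ m * (2 * m + 1) ^ (2 * m + 1) = 1 + 4 * a + 8 * q) :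
    (-1 : O) ^ m * (2 * m + 1) ^ (2 * m + 1) = 1 + 4 * a + 8 * q := by
  have h := congrArg (Int.cast : ℤ → O) haq
  push_cast at h
  exact h

lemma aux_all (c r m : ℕ) (hr : 0 < r) (hm : 2 * c + 1 + 3 * (2 * r) = 2 * m + 1) :
    Odd (Multiset.card (UniqueFactorizationMonoid.factors (pent (ZMod 2) (2 * c + 1) (2 * r)))) ↔
      ((2 * m + 1) % 8 = 1 ∨ (2 * m + 1) % 8 = 7) := by
  classical
  set d := 2 * c + 1 with hd
  have hdo : Odd d := ⟨c, rfl⟩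
  set f := pent (ZMod 2) d (2 * r) with hf
  have hsep : f.Separable := pent_sep c r
  obtain ⟨hfm, hfd⟩ := pent_monic (R := ZMod 2) (d := d) (s := 2 * r) (by omega) (by omega)
  let k := f.SplittingField
  have : Finite k := Module.finite_of_finite (ZMod 2)
  have : CharP k 2 := charP_of_injective_algebraMap (algebraMap (ZMod 2) k).injective 2
  have : PerfectRing k 2 := PerfectRing.ofFiniteOfIsReduced 2 k
  have hcard := card_rootSet_eq_natDegree (K := k) hsep (SplittingField.splits f)
  rw [hfd, hm] at hcard
  let eqv := (Fintype.equivFinOfCardEq hcard).symm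
  let y : Fin (2 * m + 1) → k := fun i => (eqv i : k)
  have hy : Function.Injective y := fun i j h => eqv.injective (Subtype.ext h)
  have hfk : f.map (algebraMap (ZMod 2) k) = pent k d (2 * r) := pent_map _ _ _
  have hyr : ∀ i, (pent k d (2 * r)).eval (y i) = 0 := by
    intro i
    have := (eqv i).2
    rw [mem_rootSet] at this
    rw [← hfk, eval_map_algebraMap]; exact this.2
  obtain ⟨hkm, hkd⟩ := pent_monic (R := k) (d := d) (s := 2 * r) (by omega) (by omega)
  have hfy := aux_split _ hkm (hkd.trans hm) y hy hyr
  have hderiv : ∀ i, (pent k d (2 * r)).derivative.eval (y i) ≠ 0 := by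
    intro i h0
    have : (pent k d (2 * r)).Separable := by rw [← hfk]; exact hsep.map
    obtain ⟨a, b, hab⟩ := this
    have := congrArg (eval (y i)) hab
    simp [hyr i, h0] at this
  -- Witt vectors
  let O := WittVector 2 k
  let φ : O →+* k := WittVector.constantCoeff
  let σ : O →+* O := WittVector.frobenius
  have hφσ : ∀ z, φ (σ z) = φ z ^ 2 := fun z => WittVector.coeff_frobenius_charP 2 z 0
  have hmem : ∀ z, z ∈ Ideal.span {((2 : ℕ) : O)} ↔ φ z = 0 := fun z =>
    WittVector.mem_span_p_iff_coeff_zero_eq_zero z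
  have hker : ∀ z, φ z = 0 → (2 : O) ∣ z := by
    intro z hz
    have := (hmem z).mpr hz
    rw [Ideal.mem_span_singleton] at this
    exact_mod_cast this
  have h2 : (2 : O) ≠ 0 := by
    have := WittVector.p_nonzero 2 k
    exact_mod_cast this
  obtain ⟨hOm, hOd⟩ := pent_monic (R := O) (d := d) (s := 2 * r) (by omega) (by omega)
  have hOk : (pent O d (2 * r)).map φ = pent k d (2 * r) := pent_map _ _ _
  have hlift : ∀ i, ∃ a : O, (pent O d (2 * r)).eval a = 0 ∧ φ a = y i := by
    intro i
    obtain ⟨a₀, ha₀⟩ := WittVector.constantCoeff_surjective 2 (y i)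
    have ha₀ : φ a₀ = y i := ha₀
    obtain ⟨a, h1, h3⟩ := HenselianRing.is_henselian (I := Ideal.span {((2 : ℕ) : O)})
      (pent O d (2 * r)) hOm a₀ (by
        rw [hmem, ← eval_map_apply, hOk, ha₀]; exact hyr i) (by
        apply IsUnit.map
        apply WittVector.isUnit_of_coeff_zero_ne_zero
        change φ _ ≠ 0
        rw [← eval_map_apply, ← derivative_map, hOk, ha₀]; exact hderiv i)
    refine ⟨a, h1, ?_⟩
    rw [hmem, map_sub, sub_eq_zero] at h3
    rw [h3, ha₀]
  choose x hx0 hxy using hlift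
  have hx : Function.Injective x := fun i j h => hy (by rw [← hxy, ← hxy, h])
  have hFx := aux_split _ hOm (hOd.trans hm) x hx hx0
  have hperm : ∀ i, ∃ j, σ (x i) = x j := by
    intro i
    have h : (pent O d (2 * r)).eval (σ (x i)) = 0 := by
      rw [← pent_map σ, eval_map_apply, hx0, map_zero]
    rw [hFx, eval_prod, Finset.prod_eq_zero_iff] at h
    obtain ⟨j, -, hj⟩ := h
    refine ⟨j, ?_⟩
    simpa [sub_eq_zero] using hj
  choose p hp using hperm
  have hpy : ∀ i, y (p i) = y i ^ 2 := by
    intro i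
    rw [← hxy, ← hp, hφσ, hxy]
  have hpi : Function.Injective p := by
    intro i j h
    apply hy
    have : y i ^ 2 = y j ^ 2 := by rw [← hpy, ← hpy, h]
    exact frobenius_inj k 2 this
  let π : Equiv.Perm (Fin (2 * m + 1)) := Equiv.ofBijective p (Finite.injective_iff_bijective.mp hpi)
  have hπ : ∀ i, π i = p i := fun i => rfl
  have hdet : σ (Matrix.vandermonde x).det =
      (((Equiv.Perm.sign π : ℤˣ) : ℤ) : O) * (Matrix.vandermonde x).det := by
    rw [← Matrix.det_permute, RingHom.map_det]
    congr 1
    ext i j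
    simp [Matrix.vandermonde_apply, hp, hπ]
  obtain ⟨w, hw⟩ := aux_main h2 d r m hr hdo hm x hFx
  -- the integer
  obtain ⟨a, q, haq, hpar⟩ : ∃ a q : ℤ, (-1 : ℤ) ^ m * (2 * m + 1) ^ (2 * m + 1) = 1 + 4 * a + 8 * q
      ∧ (Even a ↔ ((2 * m + 1) % 8 = 1 ∨ (2 * m + 1) % 8 = 7)) := by
    obtain ⟨t, ht⟩ : ∃ t : ℤ, (2 * m + 1 : ℤ) ^ (2 * m + 1) = (2 * m + 1) + 8 * t := by
      have h8 : (8 : ℤ) ∣ (2 * m + 1) ^ 2 - 1 := by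
        obtain ⟨z, hz⟩ := Int.even_mul_succ_self (m : ℤ)
        exact ⟨z, by linear_combination 4 * hz⟩
      have h9 : ((2 * m + 1 : ℤ) ^ 2 - 1) ∣ ((2 * m + 1 : ℤ) ^ 2) ^ m - 1 := sub_one_dvd_pow_sub_one _ _
      obtain ⟨z, hz⟩ := h8.trans h9
      exact ⟨(2 * m + 1) * z, by rw [pow_succ, pow_mul]; linear_combination (2 * m + 1 : ℤ) * hz⟩
    rw [ht]
    rcases Nat.even_or_odd' m with ⟨b, rfl | rfl⟩
    · refine ⟨b, t, ?_, ?_⟩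
      · rw [pow_mul]; push_cast; norm_num; ring
      · rw [Int.even_coe_nat, Nat.even_iff]; omega
    · refine ⟨-b - 1, -t, ?_, ?_⟩
      · rw [pow_succ, pow_mul]; push_cast; norm_num; ring
      · rw [Int.even_iff]; omega
  have hfin := aux_final φ σ hφσ hker h2 (Matrix.vandermonde x).det (q + w) a
    (Equiv.Perm.sign π) hdet (by
      rw [hw, aux_cast O m a q haq]; ring)
  rw [← hpar, ← hfin, aux_card f hfm.ne_zero hsep.squarefree y (hfk.trans hfy),
    aux_sign π (fun i => minpoly (ZMod 2) (y i)) (aux_cycle y hy π hpy)]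
  rw [Fintype.card_fin, neg_one_pow_eq_one_iff_even (by decide), Nat.even_add, Nat.even_add_one]
  simp

theorem class2_pentanomial_factor_parity (s n : ℕ) (hs : Even s) (hs0 : 0 < s)
    (hodd : Odd n) (hn : 3 * s < n) :
    Odd (Multiset.card (UniqueFactorizationMonoid.factors
        (X ^ n + X ^ (n - s) + X ^ (n - 2 * s) + X ^ (n - 3 * s) + 1 :
          Polynomial (ZMod 2)))) ↔ (n % 8 = 1 ∨ n % 8 = 7) := by
  obtain ⟨r, rfl⟩ := hs
  obtain ⟨m, rfl⟩ := hodd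
  have h := aux_all (m - 3 * r) r m (by omega) (by omega)
  have e : pent (ZMod 2) (2 * (m - 3 * r) + 1) (2 * r) =
      X ^ (2 * m + 1) + X ^ (2 * m + 1 - (r + r)) + X ^ (2 * m + 1 - 2 * (r + r)) +
        X ^ (2 * m + 1 - 3 * (r + r)) + 1 := by
    unfold pent
    have e0 : 2 * (m - 3 * r) + 1 + 3 * (2 * r) = 2 * m + 1 := by omega
    have e1 : 2 * (m - 3 * r) + 1 + 2 * (2 * r) = 2 * m + 1 - (r + r) := by omega
    have e2 : 2 * (m - 3 * r) + 1 + 2 * r = 2 * m + 1 - 2 * (r + r) := by omega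
    have e3 : 2 * (m - 3 * r) + 1 = 2 * m + 1 - 3 * (r + r) := by omega
    rw [e0, e1, e2, e3]
  rw [e] at h
  exact h
end

section
/- Let n > k > 0 be integers with exactly one of n, k odd, and let t denote the number of irreducible factors (counted with multiplicity) of X^n + X^k + 1 in F_2[X]. Then t is even in exactly the following cases: (1) n even, k odd, n ≠ 2k, and nk/2 ≡ 0 or 1 (mod 4); (2) n odd, k even, k does not divide 2n, and n ≡ 3 or −3 (mod 8); (3) n odd, k even, k divides 2n, and n ≡ 1 or −1 (mod 8). In all other cases (with exactly one of n, k odd), t is odd. -/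
open Polynomial

theorem sw_card_image {α β γ : Type*} [DecidableEq β] [DecidableEq γ] (s : Finset α)
    (f : α → β) (g : α → γ) (h : ∀ a ∈ s, ∀ b ∈ s, f a = f b ↔ g a = g b) :
    (s.image f).card = (s.image g).card := by
  classical
  induction s using Finset.induction_on with
  | empty => simp
  | insert a s ha ih =>
    have ih' := ih (fun x hx y hy => h x (Finset.mem_insert_of_mem hx) y (Finset.mem_insert_of_mem hy))
    rw [Finset.image_insert, Finset.image_insert]
    have e : f a ∈ s.image f ↔ g a ∈ s.image g := by
      simp only [Finset.mem_image]
      constructor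
      · rintro ⟨b, hb, e⟩
        exact ⟨b, hb, (h b (Finset.mem_insert_of_mem hb) a (Finset.mem_insert_self _ _)).1 e⟩
      · rintro ⟨b, hb, e⟩
        exact ⟨b, hb, (h b (Finset.mem_insert_of_mem hb) a (Finset.mem_insert_self _ _)).2 e⟩
    rw [Finset.card_insert_eq_ite, Finset.card_insert_eq_ite, ih']
    simp only [e]

theorem sw_sign {α β : Type*} [Fintype α] [DecidableEq α] [DecidableEq β] (π : Equiv.Perm α)
    (p : α → β) (h : ∀ a b, p a = p b ↔ π.SameCycle a b) :
    Equiv.Perm.sign π = (-1) ^ (Fintype.card α + (Finset.univ.image p).card) := by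
  have h1 : (Finset.univ.image p).card = (π.support.image p).card + (π.supportᶜ.image p).card := by
    rw [← Finset.card_union_of_disjoint, ← Finset.image_union, Finset.union_compl]
    rw [Finset.disjoint_left]
    intro b hb hb'
    rw [Finset.mem_image] at hb hb'
    obtain ⟨a, ha, rfl⟩ := hb
    obtain ⟨c, hc, e⟩ := hb'
    have := ((h _ _).1 e).mem_support_iff
    simp only [Finset.mem_compl] at hc
    tauto
  have h2 : (π.supportᶜ.image p).card = (π.supportᶜ).card := by
    apply Finset.card_image_of_injOn
    intro a ha b hb e
    have h3 := (h _ _).1 e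
    simp only [Finset.coe_compl, Set.mem_compl_iff, Finset.mem_coe, Equiv.Perm.notMem_support] at ha
    obtain ⟨m, hm⟩ := h3
    rw [← hm, Equiv.Perm.zpow_apply_eq_self_of_apply_eq_self ha]
  have h3 : (π.support.image p).card = π.cycleType.card := by
    rw [sw_card_image π.support p π.cycleOf]
    · rw [Equiv.Perm.cycleType_def, Multiset.card_map, Finset.card_val]
      congr 1
      ext c
      simp only [Finset.mem_image]
      constructor
      · rintro ⟨a, ha, rfl⟩
        exact Equiv.Perm.cycleOf_mem_cycleFactorsFinset_iff.2 ha
      · intro hc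
        obtain ⟨a, ha⟩ := (Equiv.Perm.mem_cycleFactorsFinset_iff.1 hc).1.nonempty_support
        refine ⟨a, Equiv.Perm.mem_cycleFactorsFinset_support_le hc ha, ?_⟩
        exact (Equiv.Perm.cycle_is_cycleOf ha hc).symm
    · intro a ha b hb
      rw [h, Equiv.Perm.sameCycle_iff_cycleOf_eq_of_mem_support ha hb]
  rw [Equiv.Perm.sign_of_cycleType, Equiv.Perm.sum_cycleType, h1, h2, h3, Finset.card_compl]
  have h4 : π.support.card ≤ Fintype.card α := Finset.card_le_univ _
  obtain ⟨c, hc⟩ := Nat.exists_eq_add_of_le h4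
  rw [hc, Nat.add_sub_cancel_left]
  rw [show π.support.card + c + (π.cycleType.card + c) = (π.support.card + π.cycleType.card) + 2 * c by ring]
  rw [pow_add _ _ (2*c), pow_mul]; simp

theorem sw_sign_frob {k : Type*} [Field k] [Finite k] [Algebra (ZMod 2) k] {n : ℕ}
    (f : (ZMod 2)[X]) (y : Fin n → k) (hy : Function.Injective y)
    (hf : f.map (algebraMap (ZMod 2) k) = ∏ i, (X - C (y i)))
    (π : Equiv.Perm (Fin n)) (hπ : ∀ i, y (π i) = y i ^ 2) :
    Equiv.Perm.sign π = (-1) ^ (n + Multiset.card (UniqueFactorizationMonoid.factors f)) := by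
  classical
  have hsep : f.Separable := by
    rw [← separable_map (algebraMap (ZMod 2) k), hf]
    exact separable_prod_X_sub_C_iff.2 hy
  have hf0 : f ≠ 0 := hsep.ne_zero
  have hroot : ∀ i, aeval (y i) f = 0 := by
    intro i
    rw [aeval_def, ← eval_map, hf, eval_prod]
    exact Finset.prod_eq_zero (Finset.mem_univ i) (by simp)
  have hcard : Multiset.card (UniqueFactorizationMonoid.factors f) =
      (Finset.univ.image (fun i => minpoly (ZMod 2) (y i))).card := by
    have h1 : Multiset.card (UniqueFactorizationMonoid.factors f) =
      (UniqueFactorizationMonoid.normalizedFactors f).toFinset.card := by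
      rw [Multiset.toFinset_card_of_nodup
        ((UniqueFactorizationMonoid.squarefree_iff_nodup_normalizedFactors hf0).1 hsep.squarefree)]
      simp [UniqueFactorizationMonoid.normalizedFactors]
    rw [h1]
    congr 1
    ext g
    simp only [Multiset.mem_toFinset, Finset.mem_image, Finset.mem_univ, true_and]
    rw [UniqueFactorizationMonoid.mem_normalizedFactors_iff' hf0]
    constructor
    · rintro ⟨hg, hn, hd⟩
      have hgm : g.Monic := by
        rw [← hn]; exact monic_normalize hg.ne_zero
      have hd' : g.map (algebraMap (ZMod 2) k) ∣ ∏ i, (X - C (y i)) := by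
        rw [← hf]; exact Polynomial.map_dvd _ hd
      have hsp : (g.map (algebraMap (ZMod 2) k)).Splits :=
        Splits.of_dvd (Splits.prod (fun i _ => Splits.X_sub_C _))
          (Finset.prod_ne_zero_iff.2 fun i _ => X_sub_C_ne_zero _) hd'
      obtain ⟨z, hz⟩ := hsp.exists_eval_eq_zero (by
        rw [degree_map]; exact (degree_pos_of_irreducible hg).ne')
      have hz2 : eval z (∏ i, (X - C (y i))) = 0 := eval_eq_zero_of_dvd_of_eval_eq_zero hd' hz
      rw [eval_prod, Finset.prod_eq_zero_iff] at hz2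
      obtain ⟨i, -, hi⟩ := hz2
      have hi : z = y i := by simpa [sub_eq_zero] using hi
      refine ⟨i, (minpoly.eq_of_irreducible_of_monic hg ?_ hgm).symm⟩
      rw [aeval_def, ← eval_map, ← hi, hz]
    · rintro ⟨i, rfl⟩
      have hint : IsIntegral (ZMod 2) (y i) := Algebra.IsIntegral.isIntegral _
      exact ⟨minpoly.irreducible hint, (minpoly.monic hint).normalize_eq_self, minpoly.dvd _ _ (hroot i)⟩
  rw [hcard]
  have key := sw_sign π (fun i => minpoly (ZMod 2) (y i)) ?_
  · rwa [Fintype.card_fin] at key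
  have hpow : ∀ (m : ℕ) i, y ((π ^ m) i) = ((FiniteField.frobeniusAlgEquivOfAlgebraic (ZMod 2) k) ^ m) (y i) := by
    intro m
    induction m with
    | zero => intro i; simp
    | succ m ih =>
      intro i
      rw [pow_succ', pow_succ', Equiv.Perm.mul_apply, hπ, ih, AlgEquiv.mul_apply]
      simp [FiniteField.coe_frobeniusAlgEquivOfAlgebraic, ZMod.card]
  intro a b
  constructor
  · intro h
    obtain ⟨σ, hσ⟩ := isConjRoot_iff_exists_algEquiv.1 (show IsConjRoot (ZMod 2) (y b) (y a) from h.symm)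
    obtain ⟨m, rfl⟩ := (FiniteField.bijective_frobeniusAlgEquivOfAlgebraic_pow (ZMod 2) k).2 σ
    refine ⟨(m : ℕ), ?_⟩
    apply hy
    rw [zpow_natCast, hpow]
    exact hσ
  · intro h
    obtain ⟨m, -, hm⟩ := h.exists_pow_eq'
    show minpoly (ZMod 2) (y a) = minpoly (ZMod 2) (y b)
    rw [← hm, hpow, minpoly.algEquiv_eq]

open scoped NumberField in
theorem sw_stick {K : Type*} [Field K] [NumberField K] [IsGalois ℚ K] {n : ℕ} (F : ℤ[X])
    (x : Fin n → 𝓞 K) (hF : F.map (algebraMap ℤ (𝓞 K)) = ∏ i, (X - C (x i))) (D : ℤ)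
    (hD : (D : 𝓞 K) = (∏ i, ∏ j ∈ Finset.Ioi i, (x j - x i)) ^ 2) (hodd : D % 2 = 1) :
    D % 8 = 1 ↔ Even (n + Multiset.card (UniqueFactorizationMonoid.factors
      (F.map (Int.castRingHom (ZMod 2))))) := by
  classical
  obtain ⟨δ, hδ⟩ : ∃ δ, δ = ∏ i, ∏ j ∈ Finset.Ioi i, (x j - x i) := ⟨_, rfl⟩
  obtain ⟨S, hS⟩ : ∃ S, S = ∏ i, ∏ j ∈ Finset.Ioi i, (x j + x i) := ⟨_, rfl⟩
  rw [← hδ] at hD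
  have hδ0 : δ ≠ 0 := by
    rintro rfl
    have : D = 0 := by
      have : (D : 𝓞 K) = 0 := by rw [hD]; ring
      exact_mod_cast this
    omega
  have hδv : δ = (Matrix.vandermonde x).det := by rw [Matrix.det_vandermonde, hδ]
  have hSδ : S * δ = (Matrix.vandermonde (fun i => x i ^ 2)).det := by
    rw [Matrix.det_vandermonde, hδ, hS, ← Finset.prod_mul_distrib]
    refine Finset.prod_congr rfl fun i _ => ?_
    rw [← Finset.prod_mul_distrib]
    refine Finset.prod_congr rfl fun j _ => ?_
    ring
  have hx : Function.Injective x := by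
    rw [← Matrix.det_vandermonde_ne_zero_iff, ← hδv]; exact hδ0
  -- permutation attached to a Galois element
  have hperm : ∀ g : K ≃ₐ[ℚ] K, ∃ π : Equiv.Perm (Fin n), ∀ i, g • x i = x (π i) := by
    intro g
    have h1 : ∀ i, ∃ j, g • x i = x j := by
      intro i
      have h2 : aeval (x i) F = 0 := by
        rw [aeval_def, ← eval_map, hF, eval_prod]
        exact Finset.prod_eq_zero (Finset.mem_univ i) (by simp)
      have h3 : aeval (g • x i) F = 0 := by
        have : g • x i = (MulSemiringAction.toAlgHom ℤ (𝓞 K) g) (x i) := rfl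
        rw [this, aeval_algHom_apply, h2, map_zero]
      rw [aeval_def, ← eval_map, hF, eval_prod, Finset.prod_eq_zero_iff] at h3
      obtain ⟨j, -, hj⟩ := h3
      exact ⟨j, by simpa [sub_eq_zero] using hj⟩
    choose p hp using h1
    have hpi : Function.Injective p := by
      intro a b hab
      apply hx
      apply MulAction.injective g
      show g • x a = g • x b
      rw [hp, hp, hab]
    exact ⟨Equiv.ofBijective p (Finite.injective_iff_bijective.1 hpi), hp⟩
  have hdet : ∀ (g : K ≃ₐ[ℚ] K) (π : Equiv.Perm (Fin n)) (w : Fin n → 𝓞 K)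
      (_ : ∀ i, g • w i = w (π i)), g • (Matrix.vandermonde w).det =
        ((Equiv.Perm.sign π : ℤ) : 𝓞 K) * (Matrix.vandermonde w).det := by
    intro g π w hw
    rw [← Matrix.det_permute]
    have : g • (Matrix.vandermonde w).det =
      (MulSemiringAction.toRingHom _ (𝓞 K) g) (Matrix.vandermonde w).det := rfl
    rw [this, RingHom.map_det]
    congr 1
    ext i j
    simp [Matrix.vandermonde, hw]
  have hgδ : ∀ (g : K ≃ₐ[ℚ] K) (π : Equiv.Perm (Fin n)) (_ : ∀ i, g • x i = x (π i)),
      g • δ = ((Equiv.Perm.sign π : ℤ) : 𝓞 K) * δ := by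
    intro g π h
    rw [hδv]; exact hdet g π x h
  have hsgn : ∀ π : Equiv.Perm (Fin n), (((Equiv.Perm.sign π : ℤ) : 𝓞 K)) ≠ 0 := by
    intro π; rcases Int.units_eq_one_or (Equiv.Perm.sign π) with h | h <;> simp [h]
  have hgS : ∀ (g : K ≃ₐ[ℚ] K), g • S = S := by
    intro g
    obtain ⟨π, hπ⟩ := hperm g
    have h1 := hdet g π (fun i => x i ^ 2) (fun i => by rw [smul_pow', hπ])
    rw [← hSδ, smul_mul', hgδ g π hπ] at h1
    apply mul_right_cancel₀ (mul_ne_zero (hsgn π) hδ0)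
    linear_combination h1
  obtain ⟨s0, hs0⟩ : ∃ s0 : ℤ, (s0 : 𝓞 K) = S := by
    obtain ⟨a, ha⟩ := Algebra.IsInvariant.isInvariant (A := ℤ) (G := K ≃ₐ[ℚ] K) S hgS
    exact ⟨a, by simpa using ha⟩
  have h2 : ∃ β, S = δ + 2 * β := by
    have : (Ideal.Quotient.mk (Ideal.span {(2 : 𝓞 K)})) S = Ideal.Quotient.mk _ δ := by
      rw [hS, hδ]
      simp only [map_prod]
      refine Finset.prod_congr rfl fun i _ => Finset.prod_congr rfl fun j _ => ?_
      rw [Ideal.Quotient.eq, Ideal.mem_span_singleton]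
      exact ⟨x i, by ring⟩
    rw [Ideal.Quotient.eq, Ideal.mem_span_singleton] at this
    obtain ⟨β, hβ⟩ := this
    exact ⟨β, by linear_combination hβ⟩
  obtain ⟨β, hβ⟩ := h2
  have h4 : ∀ g : K ≃ₐ[ℚ] K, ∀ m : ℤ, g • (m : 𝓞 K) = m := by
    intro g m
    exact map_intCast (MulSemiringAction.toRingHom _ (𝓞 K) g) m
  have he4 : (((s0 ^ 2 - D : ℤ)) : 𝓞 K) = 4 * (β ^ 2 + β * δ) := by
    push_cast
    rw [hs0, hD, hβ]; ring
  obtain ⟨e0, he0⟩ : ∃ e0 : ℤ, (e0 : 𝓞 K) = β ^ 2 + β * δ := by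
    obtain ⟨a, ha⟩ := Algebra.IsInvariant.isInvariant (A := ℤ) (G := K ≃ₐ[ℚ] K) (β ^ 2 + β * δ) (by
      intro g
      have := h4 g (s0 ^ 2 - D)
      rw [he4, smul_mul'] at this
      have h5 : g • (4 : 𝓞 K) = 4 := by simpa using h4 g 4
      rw [h5] at this
      exact mul_left_cancel₀ (by norm_num) this)
    exact ⟨a, by simpa using ha⟩
  have hsD : s0 ^ 2 - D = 4 * e0 := by
    rw [← he0] at he4
    exact_mod_cast he4
  have hs0odd : s0 % 2 = 1 := by
    rcases Int.emod_two_eq_zero_or_one s0 with h | h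
    · obtain ⟨c, rfl⟩ := Int.dvd_of_emod_eq_zero h
      ring_nf at hsD
      omega
    · exact h
  have hD8 : D % 8 = 1 ↔ e0 % 2 = 0 := by
    have : s0 ^ 2 % 8 = 1 := by
      have : s0 % 8 = 1 ∨ s0 % 8 = 3 ∨ s0 % 8 = 5 ∨ s0 % 8 = 7 := by omega
      rcases this with h | h | h | h <;> simp [pow_two, Int.mul_emod, h]
    omega
  rw [hD8]
  -- the prime above 2
  have hmax : (Ideal.span {(2 : ℤ)}).IsMaximal :=
    PrincipalIdealRing.isMaximal_of_irreducible Int.prime_two.irreducible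
  obtain ⟨P, hP, hPc⟩ := Ideal.exists_ideal_over_maximal_of_isIntegral (S := 𝓞 K)
    (Ideal.span {(2 : ℤ)}) (by
      rw [(RingHom.injective_iff_ker_eq_bot _).1 (FaithfulSMul.algebraMap_injective ℤ (𝓞 K))]
      exact bot_le)
  have hPmem : ∀ m : ℤ, (m : 𝓞 K) ∈ P ↔ m % 2 = 0 := by
    intro m
    have : m ∈ Ideal.comap (algebraMap ℤ (𝓞 K)) P ↔ m ∈ Ideal.span {(2 : ℤ)} := by rw [hPc]
    rw [Ideal.mem_comap, Ideal.mem_span_singleton] at this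
    simp only [algebraMap_int_eq, eq_intCast] at this
    rw [this]; omega
  have h2P : (2 : 𝓞 K) ∈ P := by simpa using (hPmem 2).2 (by norm_num)
  have hPbot : P ≠ ⊥ := by
    rintro rfl
    simp at h2P
  have hfin : Finite (𝓞 K ⧸ P) := Ideal.finiteQuotientOfFreeOfNeBot P hPbot
  obtain ⟨σ, hσ⟩ := IsArithFrobAt.exists_of_isInvariant ℤ (K ≃ₐ[ℚ] K) P
  have hcard : Nat.card (ℤ ⧸ P.under ℤ) = 2 := by
    rw [Ideal.under_def, hPc, Nat.card_congr (Int.quotientSpanEquivZMod 2).toEquiv]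
    simp
  let _ : Field (𝓞 K ⧸ P) := Ideal.Quotient.field P
  obtain ⟨q, hq⟩ : ∃ q : 𝓞 K →+* 𝓞 K ⧸ P, q = Ideal.Quotient.mk P := ⟨_, rfl⟩
  have hqz : ∀ a, q a = 0 ↔ a ∈ P := by intro a; rw [hq]; exact Ideal.Quotient.eq_zero_iff_mem
  have hfrob : ∀ a, q (σ • a) = q a ^ 2 := by
    intro a
    have := hσ a
    rw [hcard] at this
    rw [← map_pow, ← sub_eq_zero, ← map_sub, hqz]
    exact this
  have h20 : (2 : 𝓞 K ⧸ P) = 0 := by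
    have := (hqz 2).2 h2P
    rwa [map_ofNat] at this
  have : CharP (𝓞 K ⧸ P) 2 := CharTwo.of_one_ne_zero_of_two_eq_zero one_ne_zero h20
  let _ : Algebra (ZMod 2) (𝓞 K ⧸ P) := ZMod.algebra _ 2
  have hqS : q S = 1 := by
    have : q ((s0 - 1 : ℤ) : 𝓞 K) = 0 := by
      rw [hqz, hPmem]; omega
    rw [Int.cast_sub, map_sub, hs0] at this
    simpa [sub_eq_zero] using this
  have hqδ : q δ = 1 := by
    have h := hqS
    rw [hβ, map_add, map_mul, map_ofNat, h20] at h
    simpa using h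
  obtain ⟨π, hπ⟩ := hperm σ
  have hyinj : Function.Injective (fun i => q (x i)) := by
    rw [← Matrix.det_vandermonde_ne_zero_iff]
    have : (Matrix.vandermonde (fun i => q (x i))).det = q δ := by
      rw [hδ, Matrix.det_vandermonde]; simp
    rw [this, hqδ]; exact one_ne_zero
  have hfin := sw_sign_frob (F.map (Int.castRingHom (ZMod 2))) (fun i => q (x i)) hyinj (by
    have := congrArg (Polynomial.map q) hF
    rw [Polynomial.map_map] at this ⊢
    rw [RingHom.ext_int ((algebraMap (ZMod 2) (𝓞 K ⧸ P)).comp (Int.castRingHom (ZMod 2)))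
      (q.comp (algebraMap ℤ (𝓞 K))), this]
    simp [Polynomial.map_prod]) π (by intro i; simp only [← hπ, hfrob])
  have hσδ := hgδ σ π hπ
  have hσβ : q (σ • β) = q β ^ 2 := hfrob β
  have hSσ : S = σ • δ + 2 * σ • β := by
    conv_lhs => rw [← hgS σ, hβ]
    rw [smul_add, smul_mul']
    congr 2
    simpa using h4 σ 2
  have he : e0 % 2 = 0 ↔ q (β ^ 2 + β * δ) = 0 := by
    rw [hqz, ← he0, hPmem]
  rw [he, map_add, map_mul, map_pow, hqδ]
  have key : q β ^ 2 + q β * 1 = 0 ↔ Equiv.Perm.sign π = 1 := by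
    rcases Int.units_eq_one_or (Equiv.Perm.sign π) with h | h
    · simp only [h, iff_true]
      rw [h] at hσδ
      have : σ • β = β := by
        apply mul_left_cancel₀ (two_ne_zero : (2 : 𝓞 K) ≠ 0)
        simp only [Units.val_one, Int.cast_one, one_mul] at hσδ
        rw [hσδ] at hSσ
        linear_combination hβ - hSσ
      rw [← hσβ, this]
      linear_combination (q β) * h20
    · rw [h] at hσδ
      have : σ • β = β + δ := by
        apply mul_left_cancel₀ (two_ne_zero : (2 : 𝓞 K) ≠ 0)
        simp only [Units.val_neg, Units.val_one, Int.cast_neg, Int.cast_one, neg_mul, one_mul] at hσδ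
        rw [hσδ] at hSσ
        linear_combination hβ - hSσ
      rw [← hσβ, this, map_add, hqδ, h]
      have h1 : q β + 1 + q β * 1 = 1 := by linear_combination (q β) * h20
      rw [h1]
      simp
  rw [key, hfin]
  rcases Nat.even_or_odd (n + Multiset.card (UniqueFactorizationMonoid.factors
      (F.map (Int.castRingHom (ZMod 2))))) with h | h
  · simp [h]
  · simp [h.neg_one_pow, Nat.not_even_iff_odd.2 h]

theorem sw_prod_periodic {M : Type*} [CommMonoid M] (g : ℕ → M) (K d : ℕ)
    (hg : ∀ j, g (j + K) = g j) :
    ∏ j ∈ Finset.range (d * K), g j = (∏ j ∈ Finset.range K, g j) ^ d := by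
  have h : ∀ d j, g (d * K + j) = g j := by
    intro d
    induction d with
    | zero => intro j; simp
    | succ d ih => intro j; rw [← ih j, ← hg (d * K + j)]; congr 1; ring
  induction d with
  | zero => simp
  | succ d ih =>
    rw [Nat.succ_mul, Finset.prod_range_add, ih, pow_succ]
    simp only [h]

/-- product of the values of `m X^k + n` at the roots of `X^n - X^k - 1`. -/
theorem sw_res {L : Type*} [Field L] [IsAlgClosed L] [CharZero L] (n k m d N K : ℕ)
    (hn : n = d * N) (hk : k = d * K) (hm : n = k + m) (hd : 0 < d) (hK : 0 < K) (hKN : K < N)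
    (hc : N.Coprime K) (hpar : Odd (N + K)) (hnk : Even (n * k))
    (x : Fin n → L) (hx : (X ^ n - X ^ k - 1 : L[X]) = ∏ i, (X - C (x i))) :
    ∏ i, ((m : L) * x i ^ k + n) = ((m : L) ^ (N - K) * k ^ K + n ^ N) ^ d := by
  have hk0 : 0 < k := by rw [hk]; positivity
  have hm0 : 0 < m := by
    have : d * K < d * N := Nat.mul_lt_mul_of_pos_left hKN hd
    omega
  have hmL : (m : L) ≠ 0 := by exact_mod_cast hm0.ne'
  have hnm : (n : L) = k + m := by rw [hm]; push_cast; ring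
  obtain ⟨u, hu⟩ : ∃ u : L, (m : L) * u = -n := ⟨-n / m, by field_simp⟩
  have hu1 : (m : L) * (u + 1) = -k := by rw [mul_add, hu, hnm]; ring
  obtain ⟨z, hz⟩ := IsAlgClosed.exists_pow_nat_eq u hk0
  have : NeZero k := ⟨hk0.ne'⟩
  have : NeZero (k : L) := ⟨by exact_mod_cast hk0.ne'⟩
  obtain ⟨ζ, hζ⟩ := HasEnoughRootsOfUnity.exists_primitiveRoot L k
  have hω : IsPrimitiveRoot (ζ ^ n) K := by
    rw [hn, pow_mul]
    exact (hζ.pow hk0 hk).pow_of_coprime N hc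
  have e1 : ∀ a : L, a ^ k - u = ∏ j ∈ Finset.range k, (a - ζ ^ j * z) := by
    intro a
    have := congrArg (eval a) (X_pow_sub_C_eq_prod hζ hk0 hz)
    simpa [eval_prod] using this
  have e2 : ∀ a : L, a ^ n - a ^ k - 1 = ∏ i, (a - x i) := by
    intro a
    have := congrArg (eval a) hx
    simpa [eval_prod] using this
  have e3 : ∀ a b : L, a ^ K - b ^ K = ∏ j ∈ Finset.range K, (a - (ζ ^ n) ^ j * b) := by
    intro a b
    have := congrArg (eval a) (X_pow_sub_C_eq_prod hω hK (rfl : b ^ K = b ^ K))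
    simpa [eval_prod] using this
  have e4 : ∏ i, (x i ^ k - u) = ((-1) ^ K * ((u + 1) ^ K - u ^ N)) ^ d := by
    simp only [e1]
    rw [Finset.prod_comm]
    have : ∀ j ∈ Finset.range k, ∏ i, (x i - ζ ^ j * z) =
        (-1) ^ n * (-1) * ((u + 1) - (ζ ^ n) ^ j * z ^ n) := by
      intro j _
      have h1 : ∏ i, (x i - ζ ^ j * z) = (-1) ^ n * ∏ i, (ζ ^ j * z - x i) := by
        have : ∀ i, x i - ζ ^ j * z = (-1) * (ζ ^ j * z - x i) := fun i => by ring
        simp only [this]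
        rw [Finset.prod_mul_distrib]; simp
      rw [h1, ← e2]
      have h2 : (ζ ^ j * z) ^ k = u := by
        rw [mul_pow, hz, ← pow_mul, mul_comm j k, pow_mul, hζ.pow_eq_one]; simp
      rw [h2]; ring
    rw [Finset.prod_congr rfl this, Finset.prod_mul_distrib]
    have h5 : ∏ j ∈ Finset.range k, (u + 1 - (ζ ^ n) ^ j * z ^ n) = ((u + 1) ^ K - u ^ N) ^ d := by
      conv_lhs => rw [hk]
      rw [sw_prod_periodic, ← e3]
      · congr 2
        rw [← hz, ← pow_mul, ← pow_mul]; congr 1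
        rw [hn, hk]; ring
      · intro j
        rw [pow_add, hω.pow_eq_one, mul_one]
    rw [h5, Finset.prod_const, Finset.card_range, mul_pow, mul_pow, ← pow_mul, hnk.neg_one_pow, one_mul]
    congr 1
    rw [← pow_mul, hk, mul_comm]
  have e5 : ∀ i, (m : L) * x i ^ k + n = m * (x i ^ k - u) := by
    intro i; rw [mul_sub, hu]; ring
  simp only [e5]
  rw [Finset.prod_mul_distrib, e4, Finset.prod_const, Finset.card_univ, Fintype.card_fin]
  conv_lhs => rw [hn]
  rw [mul_comm d N, pow_mul, ← mul_pow]
  congr 1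
  have e6 : (m : L) ^ N = m ^ (N - K) * m ^ K := by rw [← pow_add]; congr 1; omega
  have e7 : (m : L) ^ K * (u + 1) ^ K = (-1) ^ K * k ^ K := by
    rw [← mul_pow, hu1, ← mul_pow]; ring
  have e8 : (m : L) ^ N * u ^ N = (-1) ^ N * n ^ N := by
    rw [← mul_pow, hu, ← mul_pow]; ring
  have e9 : ((-1 : L) ^ K) * (-1) ^ K = 1 := by rw [← mul_pow]; simp
  have e10 : ((-1 : L) ^ N) * (-1) ^ K = -1 := by rw [← pow_add, hpar.neg_one_pow]
  calc (m : L) ^ N * ((-1) ^ K * ((u + 1) ^ K - u ^ N))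
      = (-1) ^ K * (m ^ (N - K) * (m ^ K * (u + 1) ^ K)) - (-1) ^ K * (m ^ N * u ^ N) := by
        rw [← mul_assoc _ ((m : L) ^ K), ← e6]; ring
    _ = ((-1) ^ K * (-1) ^ K) * (m ^ (N - K) * k ^ K) - ((-1) ^ N * (-1) ^ K) * n ^ N := by
        rw [e7, e8]; ring
    _ = _ := by rw [e9, e10]; ring

theorem sw_disc {L : Type*} [Field L] [IsAlgClosed L] [CharZero L] (n k m d N K : ℕ)
    (hn : n = d * N) (hk : k = d * K) (hm : n = k + m) (hd : 0 < d) (hK : 0 < K) (hKN : K < N)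
    (hc : N.Coprime K) (hpar : Odd (N + K)) (hnk : Even (n * k))
    (x : Fin n → L) (hx : (X ^ n - X ^ k - 1 : L[X]) = ∏ i, (X - C (x i))) :
    (∏ i, ∏ j ∈ Finset.Ioi i, (x j - x i)) ^ 2 =
      (-1) ^ (n * (n - 1) / 2 + n + 1) * ((m : L) ^ (N - K) * k ^ K + n ^ N) ^ d := by
  have hk0 : 0 < k := by rw [hk]; positivity
  have hn0 : 0 < n := by omega
  have e2 : ∀ a : L, a ^ n - a ^ k - 1 = ∏ i, (a - x i) := by
    intro a
    have := congrArg (eval a) hx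
    simpa [eval_prod] using this
  have hroot : ∀ i, x i ^ n = x i ^ k + 1 := by
    intro i
    have := e2 (x i)
    rw [Finset.prod_eq_zero (Finset.mem_univ i) (sub_self _)] at this
    linear_combination this
  have hprod : ∏ i, x i = (-1) ^ (n + 1) := by
    have := e2 0
    rw [zero_pow hn0.ne', zero_pow hk0.ne'] at this
    simp only [zero_sub, Finset.prod_neg, sub_zero, Finset.card_univ, Fintype.card_fin] at this
    have h1 : ((-1 : L) ^ n) * (-1) ^ n = 1 := by rw [← mul_pow]; simp
    rw [pow_succ]
    linear_combination (-(-1 : L) ^ n) * this - (∏ i, x i) * h1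
  have hder : ∀ i, x i * ∏ j ∈ {i}ᶜ, (x i - x j) = m * x i ^ k + n := by
    intro i
    have h1 := Lagrange.eval_nodal_derivative_eval_node_eq (v := x) (Finset.mem_univ i)
    rw [Lagrange.eval_nodal, Lagrange.nodal, ← hx] at h1
    have h2 : ({i}ᶜ : Finset (Fin n)) = Finset.univ.erase i := by ext; simp
    rw [h2, ← h1]
    simp only [derivative_sub, derivative_X_pow, derivative_one, eval_sub, eval_mul, eval_pow, eval_X,
      eval_natCast, eval_zero, map_natCast]
    have h3 : x i * x i ^ (n - 1) = x i ^ n := by rw [← pow_succ']; congr 1; omega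
    have h4 : x i * x i ^ (k - 1) = x i ^ k := by rw [← pow_succ']; congr 1; omega
    have hnm : (n : L) = k + m := by rw [hm]; push_cast; ring
    have h5 := hroot i
    linear_combination (n : L) * h3 - k * h4 + n * h5 + (x i ^ k) * hnm
  have hall := sw_res n k m d N K hn hk hm hd hK hKN hc hpar hnk x hx
  simp only [← hder] at hall
  rw [Finset.prod_mul_distrib, hprod] at hall
  have hoff := Finset.prod_prod_Ioi_mul_eq_prod_prod_off_diag (fun a b => x b - x a)
  rw [← hoff] at hall
  have hsq : ∏ i, ∏ j ∈ Finset.Ioi i, ((x i - x j) * (x j - x i)) =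
      (-1) ^ (n * (n - 1) / 2) * (∏ i, ∏ j ∈ Finset.Ioi i, (x j - x i)) ^ 2 := by
    have : ∀ i j, (x i - x j) * (x j - x i) = (-1) * (x j - x i) ^ 2 := fun i j => by ring
    simp only [this, Finset.prod_mul_distrib, Finset.prod_pow]
    congr 1
    simp only [Finset.prod_const, Fin.card_Ioi]
    rw [Finset.prod_pow_eq_pow_sum]
    congr 1
    rw [← Finset.sum_range_id, Fin.sum_univ_eq_sum_range (fun i => n - 1 - i)]
    exact Finset.sum_range_reflect (fun i => i) n
  rw [hsq] at hall
  rw [← hall]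
  have h1 : ∀ a : ℕ, ((-1 : L) ^ a) * (-1) ^ a = 1 := fun a => by rw [← mul_pow]; simp
  rw [show n * (n - 1) / 2 + n + 1 = n * (n - 1) / 2 + (n + 1) by ring, pow_add]
  have a1 := h1 (n * (n - 1) / 2)
  have a2 := h1 (n + 1)
  generalize (-1 : L) ^ (n * (n - 1) / 2) = A at *
  generalize (-1 : L) ^ (n + 1) = B at *
  generalize (∏ i, ∏ j ∈ Finset.Ioi i, (x j - x i)) ^ 2 = T
  linear_combination (-T) * a1 - T * A * A * a2

theorem sw_normal {K : Type*} [Field K] (p : K[X]) : Normal K p.SplittingField :=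
  Normal.of_isSplittingField p

open scoped NumberField in
theorem sw_main0 (E L : Type*) [Field E] [NumberField E] [IsGalois ℚ E] [Field L] [IsAlgClosed L]
    [CharZero L] [Algebra E L] (n k m d N K : ℕ)
    (hn : n = d * N) (hk : k = d * K) (hm : n = k + m) (hd : 0 < d) (hK : 0 < K) (hKN : K < N)
    (hc : N.Coprime K) (hpar : Odd (N + K)) (hnk : Even (n * k))
    (D : ℤ) (hD : D = (-1) ^ (n * (n - 1) / 2 + n + 1) * ((m : ℤ) ^ (N - K) * k ^ K + n ^ N) ^ d)
    (hodd : D % 2 = 1)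
    (F : ℤ[X]) (hFdef : F = X ^ n - X ^ k - 1) (hmonic : F.Monic) (hnat : F.natDegree = n)
    (hsp : (F.map (algebraMap ℤ E)).Splits) :
    D % 8 = 1 ↔ Even (n + Multiset.card (UniqueFactorizationMonoid.factors
      (F.map (Int.castRingHom (ZMod 2))))) := by
  have hroots := hsp.eq_prod_roots_of_monic (hmonic.map _)
  have hcard : (F.map (algebraMap ℤ E)).roots.card = n := by
    rw [← hsp.natDegree_eq_card_roots, hmonic.natDegree_map, hnat]
  obtain ⟨y, hy⟩ : ∃ y : Fin n → E, F.map (algebraMap ℤ E) = ∏ i, (X - C (y i)) := by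
    generalize (F.map (algebraMap ℤ E)).roots = s at hroots hcard
    induction s using Quotient.inductionOn with
    | h l =>
      simp only [Multiset.quot_mk_to_coe, Multiset.coe_card] at hcard
      subst hcard
      refine ⟨l.get, ?_⟩
      rw [hroots]
      simp only [Multiset.quot_mk_to_coe, Multiset.map_coe, Multiset.prod_coe]
      rw [← List.prod_ofFn]
      congr 1
      apply List.ext_get <;> simp
  have hint : ∀ i, IsIntegral ℤ (y i) := by
    intro i
    refine ⟨F, hmonic, ?_⟩
    rw [← eval_map, hy, eval_prod]
    exact Finset.prod_eq_zero (Finset.mem_univ i) (by simp)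
  let x : Fin n → 𝓞 E := fun i => ⟨y i, hint i⟩
  have hxy : ∀ i, algebraMap (𝓞 E) E (x i) = y i := fun i => rfl
  have hinj : Function.Injective (algebraMap (𝓞 E) E) := FaithfulSMul.algebraMap_injective _ _
  have hF : F.map (algebraMap ℤ (𝓞 E)) = ∏ i, (X - C (x i)) := by
    apply Polynomial.map_injective _ hinj
    rw [Polynomial.map_map, RingHom.ext_int ((algebraMap (𝓞 E) E).comp (algebraMap ℤ (𝓞 E))) (algebraMap ℤ E), hy]
    simp [Polynomial.map_prod, hxy]
  refine sw_stick F x hF D ?_ hodd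
  have hinj2 : Function.Injective ((algebraMap E L).comp (algebraMap (𝓞 E) E)) :=
    (algebraMap E L).injective.comp hinj
  apply hinj2
  have hL : (X ^ n - X ^ k - 1 : L[X]) =
      ∏ i, (X - C (((algebraMap E L).comp (algebraMap (𝓞 E) E)) (x i))) := by
    have := congrArg (Polynomial.map ((algebraMap E L).comp (algebraMap (𝓞 E) E))) hF
    rw [Polynomial.map_map, hFdef] at this
    simpa [Polynomial.map_prod] using this
  have := sw_disc n k m d N K hn hk hm hd hK hKN hc hpar hnk _ hL
  rw [map_intCast, hD, map_pow, map_prod]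
  simp only [map_prod, map_sub]
  rw [this]
  simp only [Int.cast_mul, Int.cast_pow, Int.cast_add, Int.cast_neg, Int.cast_one, Int.cast_natCast]


theorem sw_main (n k m d N K : ℕ)
    (hn : n = d * N) (hk : k = d * K) (hm : n = k + m) (hd : 0 < d) (hK : 0 < K) (hKN : K < N)
    (hc : N.Coprime K) (hpar : Odd (N + K)) (hnk : Even (n * k))
    (D : ℤ) (hD : D = (-1) ^ (n * (n - 1) / 2 + n + 1) * ((m : ℤ) ^ (N - K) * k ^ K + n ^ N) ^ d)
    (hodd : D % 2 = 1) :
    D % 8 = 1 ↔ Even (n + Multiset.card (UniqueFactorizationMonoid.factors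
      (X ^ n + X ^ k + 1 : (ZMod 2)[X]))) := by
  obtain ⟨F, hFdef⟩ : ∃ F : ℤ[X], F = X ^ n - X ^ k - 1 := ⟨_, rfl⟩
  have hkn : k < n := by rw [hn, hk]; exact Nat.mul_lt_mul_of_pos_left hKN hd
  have hFe : F = X ^ n + (-X ^ k - 1) := by rw [hFdef]; ring
  have hdeg : (-X ^ k - 1 : ℤ[X]).degree < n := by
    refine lt_of_le_of_lt (degree_sub_le _ _) ?_
    rw [degree_neg, degree_X_pow, degree_one, max_lt_iff]
    exact ⟨by exact_mod_cast hkn, by exact_mod_cast (show 0 < n by omega)⟩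
  have hmonic : F.Monic := by
    rw [hFe]; exact monic_X_pow_add hdeg
  have hnat : F.natDegree = n := by
    rw [hFe, natDegree_eq_of_degree_eq_some]
    rw [degree_add_eq_left_of_degree_lt (by rwa [degree_X_pow]), degree_X_pow]
  have hmod : F.map (Int.castRingHom (ZMod 2)) = X ^ n + X ^ k + 1 := by
    rw [hFdef]
    simp [CharTwo.sub_eq_add]
  rw [← hmod]
  let E := (F.map (algebraMap ℤ ℚ)).SplittingField
  have hN := sw_normal (F.map (algebraMap ℤ ℚ))
  have : CharZero E := charZero_of_injective_algebraMap (algebraMap ℚ E).injective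
  have : NumberField E := ⟨⟩
  have : Normal ℚ E := by
    convert hN
    exact Subsingleton.elim _ _
  have : IsGalois ℚ E := ⟨⟩
  have hsp : (F.map (algebraMap ℤ E)).Splits := by
    have := SplittingField.splits (F.map (algebraMap ℤ ℚ))
    rw [Polynomial.map_map] at this
    rwa [RingHom.ext_int (algebraMap ℤ E) ((algebraMap ℚ E).comp (algebraMap ℤ ℚ))]
  exact sw_main0 E (AlgebraicClosure E) n k m d N K hn hk hm hd hK hKN hc hpar hnk D hD hodd F hFdef
    hmonic hnat hsp

theorem sw_odd_sq (a : ℤ) (h : a % 2 = 1) : a ^ 2 % 8 = 1 := by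
  have : a % 8 = 1 ∨ a % 8 = 3 ∨ a % 8 = 5 ∨ a % 8 = 7 := by omega
  rcases this with h | h | h | h <;> simp [pow_two, Int.mul_emod, h]

theorem sw_odd_pow (a : ℤ) (d : ℕ) (h : a % 2 = 1) (hd : Odd d) : a ^ d % 8 = a % 8 := by
  obtain ⟨c, rfl⟩ := hd
  have : a ^ (2 * c + 1) ≡ 1 ^ c * a [ZMOD 8] := by
    rw [pow_succ, pow_mul]
    exact Int.ModEq.mul_right _ (Int.ModEq.pow _ (sw_odd_sq a h))
  rw [one_pow, one_mul] at this
  exact this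

theorem sw_even_pow (a : ℤ) (d : ℕ) (h : a % 2 = 0) (hd : 3 ≤ d) : a ^ d % 8 = 0 := by
  obtain ⟨c, rfl⟩ := Int.dvd_of_emod_eq_zero h
  obtain ⟨e, rfl⟩ := Nat.exists_eq_add_of_le hd
  apply Int.emod_eq_zero_of_dvd
  exact ⟨c ^ 3 * (2 * c) ^ e, by ring⟩

theorem sw_even_sq (a : ℤ) (h : a % 4 = 2) : a ^ 2 % 8 = 4 := by
  have : a % 8 = 2 ∨ a % 8 = 6 := by omega
  rcases this with h | h <;> simp [pow_two, Int.mul_emod, h]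

set_option maxHeartbeats 1000000 in
theorem swan_trinomial (n k : ℕ) (hk : 0 < k) (hkn : k < n)
    (hparity : (Odd n ∧ Even k) ∨ (Even n ∧ Odd k)) :
    Even (Multiset.card (UniqueFactorizationMonoid.factors
        (X ^ n + X ^ k + 1 : Polynomial (ZMod 2)))) ↔
      ((Even n ∧ Odd k ∧ n ≠ 2 * k ∧ (n * k / 2 % 4 = 0 ∨ n * k / 2 % 4 = 1)) ∨
       (Odd n ∧ Even k ∧ ¬ (k ∣ 2 * n) ∧ (n % 8 = 3 ∨ n % 8 = 5)) ∨
       (Odd n ∧ Even k ∧ k ∣ 2 * n ∧ (n % 8 = 1 ∨ n % 8 = 7))) := by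
  obtain ⟨d, N, K, hd, hc, hn, hk'⟩ : ∃ d N K, 0 < d ∧ N.Coprime K ∧ n = d * N ∧ k = d * K := by
    obtain ⟨N, K, h1, h2, h3⟩ := Nat.exists_coprime n k
    exact ⟨n.gcd k, N, K, Nat.gcd_pos_of_pos_right _ hk, h1, by rw [mul_comm]; exact h2,
      by rw [mul_comm]; exact h3⟩
  obtain ⟨m, hm⟩ : ∃ m, n = k + m := ⟨n - k, by omega⟩
  have hK : 0 < K := Nat.pos_of_ne_zero (by rintro rfl; simp at hk'; omega)
  have hKN : K < N := by
    rw [hn, hk'] at hkn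
    exact Nat.lt_of_mul_lt_mul_left hkn
  have hdodd : Odd d := by
    rcases hparity with ⟨h, -⟩ | ⟨-, h⟩
    · rw [hn, Nat.odd_mul] at h; exact h.1
    · rw [hk', Nat.odd_mul] at h; exact h.1
  have hpar : Odd (N + K) := by
    rw [hn, hk'] at hparity
    simp only [Nat.odd_mul, Nat.even_mul, Nat.not_even_iff_odd.2 hdodd, hdodd, true_and, false_or] at hparity
    rcases hparity with ⟨h1, h2⟩ | ⟨h1, h2⟩
    · exact h1.add_even h2
    · exact h1.add_odd h2
  have hnk : Even (n * k) := by
    rcases hparity with ⟨-, h⟩ | ⟨h, -⟩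
    · exact h.mul_left _
    · exact h.mul_right _
  obtain ⟨T, hT⟩ : ∃ T : ℤ, T = (m : ℤ) ^ (N - K) * k ^ K + n ^ N := ⟨_, rfl⟩
  obtain ⟨s, hs⟩ : ∃ s : ℤ, s = (-1) ^ (n * (n - 1) / 2 + n + 1) := ⟨_, rfl⟩
  have hmain := fun h => sw_main n k m d N K hn hk' hm hd hK hKN hc hpar hnk (s * T ^ d) (by rw [hT, hs]) h
  have hTd : T % 2 = 1 → (s * T ^ d) % 8 = (s * T) % 8 := by
    intro h
    rw [Int.mul_emod, sw_odd_pow T d h hdodd, ← Int.mul_emod]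
  have hm2 : (m : ℤ) % 2 = 1 := by
    rcases hparity with ⟨⟨a, ha⟩, ⟨b, hb⟩⟩ | ⟨⟨a, ha⟩, ⟨b, hb⟩⟩ <;> omega
  have hmNK : (m : ℤ) ^ (N - K) % 8 = m % 8 := by
    apply sw_odd_pow _ _ hm2
    rcases hpar with ⟨a, ha⟩
    exact ⟨a - K, by omega⟩
  have hmz : (m : ℤ) = n - k := by rw [hm]; push_cast; ring
  generalize Multiset.card (UniqueFactorizationMonoid.factors
        (X ^ n + X ^ k + 1 : Polynomial (ZMod 2))) = t at *
  rcases hparity with ⟨hno, hke⟩ | ⟨hne, hko⟩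
  · -- n odd, k even
    have hNo : Odd N := by rw [hn, Nat.odd_mul] at hno; exact hno.2
    have hKe : Even K := by
      rw [hk', Nat.even_mul] at hke; exact hke.resolve_left (Nat.not_even_iff_odd.2 hdodd)
    have hn2 : (n : ℤ) % 2 = 1 := by obtain ⟨a, ha⟩ := hno; omega
    have hnN := sw_odd_pow (n : ℤ) N hn2 hNo
    have hdvd : k ∣ 2 * n ↔ K = 2 := by
      rw [hn, hk', show 2 * (d * N) = d * (2 * N) by ring, Nat.mul_dvd_mul_iff_left hd]
      constructor
      · intro h
        have h1 : K ∣ 2 := hc.symm.dvd_of_dvd_mul_right h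
        obtain ⟨a, ha⟩ := hKe
        have := Nat.le_of_dvd (by norm_num) h1
        omega
      · rintro rfl; exact Dvd.intro _ rfl
    have hkK : (k : ℤ) ^ K % 8 = if K = 2 then 4 else 0 := by
      split_ifs with h
      · rw [h]
        apply sw_even_sq
        obtain ⟨a, ha⟩ := hdodd
        rw [hk', h, ha]; push_cast; omega
      · apply sw_even_pow
        · obtain ⟨a, ha⟩ := hke; omega
        · obtain ⟨a, ha⟩ := hKe; omega
    have hT8 : T % 8 = ((if K = 2 then 4 else 0) + n) % 8 := by
      have h1 : ((m : ℤ) ^ (N - K) * k ^ K) % 8 = if K = 2 then 4 else 0 := by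
        rw [Int.mul_emod, hmNK, hkK]
        split_ifs
        · omega
        · simp
      rw [hT, Int.add_emod, h1, hnN]; simp
    have hs' : (n % 4 = 1 → s = 1) ∧ (n % 4 = 3 → s = -1) := by
      obtain ⟨a, ha⟩ := hno
      have h1 : n * (n - 1) / 2 = n * a := by
        rw [ha, show 2 * a + 1 - 1 = a * 2 by omega, ← mul_assoc, Nat.mul_div_cancel _ (by norm_num)]
      have h2 : s = (-1) ^ a := by
        rw [hs, h1, ha, show (2 * a + 1) * a + (2 * a + 1) + 1 = a + 2 * (a * a + a + 1) by ring, pow_add, pow_mul]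
        simp
      rw [h2]
      constructor
      · intro h; exact Even.neg_one_pow (Nat.even_iff.2 (by omega))
      · intro h; exact Odd.neg_one_pow (Nat.odd_iff.2 (by omega))
    have hne : ¬ Even n := Nat.not_even_iff_odd.2 hno
    simp only [hno, hke, hne, true_and, false_and, false_or, hdvd]
    have hne2 : n % 2 = 1 := Nat.odd_iff.1 hno
    have hT1 : T % 2 = 1 := by split_ifs at hT8 <;> omega
    have hs1 : s = 1 ∨ s = -1 := by
      have := hs'.1; have := hs'.2; omega
    have hTd' := hTd hT1
    have hm' := hmain (by rcases hs1 with h | h <;> rw [h] at hTd' ⊢ <;> omega)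
    rw [hTd'] at hm'
    rw [Nat.even_iff] at hm' ⊢
    split_ifs at hT8 with hK2 <;> simp only [hK2, not_true, not_false_iff, true_and, false_and, or_false, false_or]
    all_goals
      rcases (show n % 4 = 1 ∨ n % 4 = 3 by omega) with h4 | h4
      · rw [hs'.1 h4] at hm'; omega
      · rw [hs'.2 h4] at hm'; omega
  · -- n even, k odd
    have hKo : Odd K := by rw [hk', Nat.odd_mul] at hko; exact hko.2
    have hNe : Even N := by
      rw [hn, Nat.even_mul] at hne; exact hne.resolve_left (Nat.not_even_iff_odd.2 hdodd)
    have hk2 : (k : ℤ) % 2 = 1 := by obtain ⟨a, ha⟩ := hko; omega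
    have hkK := sw_odd_pow (k : ℤ) K hk2 hKo
    have hN2 : n = 2 * k ↔ N = 2 := by
      rw [hn, hk', show 2 * (d * K) = d * (2 * K) by ring, Nat.mul_right_inj hd.ne']
      constructor
      · rintro h
        rw [h] at hc
        have : K ∣ Nat.gcd (2 * K) K := Nat.dvd_gcd (Dvd.intro_left _ rfl) dvd_rfl
        rw [Nat.Coprime.gcd_eq_one hc, Nat.dvd_one] at this
        omega
      · intro h; omega
    have hnN : (n : ℤ) ^ N % 8 = if N = 2 then 4 else 0 := by
      split_ifs with h
      · rw [h]
        apply sw_even_sq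
        have := hN2.2 h
        omega
      · apply sw_even_pow
        · obtain ⟨a, ha⟩ := hne; omega
        · obtain ⟨a, ha⟩ := hNe; omega
    obtain ⟨a, ha⟩ := id hne
    have hh : n * k / 2 = a * k := by
      rw [ha, show (a + a) * k = (a * k) * 2 by ring, Nat.mul_div_cancel _ (by norm_num)]
    obtain ⟨w, hw⟩ : ∃ w, w = a * k := ⟨_, rfl⟩
    have hT8 : T % 8 = (2 * (w : ℤ) - 1 + (if N = 2 then 4 else 0)) % 8 := by
      have h1 : ((m : ℤ) ^ (N - K) * k ^ K) % 8 = (2 * (w : ℤ) - 1) % 8 := by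
        rw [Int.mul_emod, hmNK, hkK, ← Int.mul_emod, hmz, hw, ha]
        have := sw_odd_sq k hk2
        push_cast
        rw [show ((a : ℤ) + a - k) * k = 2 * (a * k) - k ^ 2 by ring]
        omega
      rw [hT]; omega
    have hs' : (a % 2 = 0 → s = -1) ∧ (a % 2 = 1 → s = 1) := by
      have h1 : n * (n - 1) / 2 = a * (n - 1) := by
        rw [ha, show (a + a) * (a + a - 1) = (a * (a + a - 1)) * 2 by ring, Nat.mul_div_cancel _ (by norm_num)]
      have hn1 : Odd (n - 1) := Nat.odd_iff.2 (by omega)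
      rw [hs, h1, pow_succ, pow_add, hne.neg_one_pow, mul_comm a, pow_mul, hn1.neg_one_pow]
      constructor
      · intro h; rw [Even.neg_one_pow (Nat.even_iff.2 h)]; norm_num
      · intro h; rw [Odd.neg_one_pow (Nat.odd_iff.2 h)]; norm_num
    have hwa : w % 2 = a % 2 := by
      rw [hw, Nat.mul_mod, Nat.odd_iff.1 hko]; simp
    have hno : ¬ Odd n := Nat.not_odd_iff_even.2 hne
    have hn2 := Nat.even_iff.1 hne
    simp only [hne, hko, hno, true_and, false_and, or_false, ne_eq, hN2, hh, ← hw]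
    have hT1 : T % 2 = 1 := by split_ifs at hT8 <;> omega
    have hs1 : s = 1 ∨ s = -1 := by
      have := hs'.1; have := hs'.2; omega
    have hTd' := hTd hT1
    have hm' := hmain (by rcases hs1 with h | h <;> rw [h] at hTd' ⊢ <;> omega)
    rw [hTd'] at hm'
    rw [Nat.even_iff] at hm' ⊢
    have haN : N = 2 → a % 2 = 1 := by
      intro h
      have := hN2.2 h
      omega
    split_ifs at hT8 with h2 <;> simp only [h2, not_true, not_false_iff, true_and, false_and]
    · rw [hs'.2 (haN h2)] at hm'
      have h5 := haN h2
      have h6 : (w : ℤ) % 8 = 1 := by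
        have h7 : a = k := by have := hN2.2 h2; omega
        rw [hw, h7]
        have := sw_odd_sq k hk2
        push_cast
        rwa [← pow_two]
      rw [iff_false]
      intro h8
      have h9 := hm'.2 (by omega)
      omega
    · rcases Nat.mod_two_eq_zero_or_one a with h4 | h4
      · rw [hs'.1 h4] at hm'; omega
      · rw [hs'.2 h4] at hm'; omega
end

section
/- Let f ∈ F_2[X] be a squarefree polynomial of degree n ≥ 1, let F ∈ ℤ[X] be any monic polynomial of degree n whose reduction modulo 2 is f, and let D(F) = ∏_{1 ≤ i < j ≤ n} (α_i − α_j)^2 ∈ ℤ be the discriminant of F, where α_1, ..., α_n ∈ ℂ are the roots of F counted with multiplicity. Let t_f denote the number of irreducible factors of f in F_2[X]. Then t_f ≡ n (mod 2) if and only if D(F) ≡ 1 (mod 8). -/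
open Polynomial Finset

namespace Swan

/-- Products over unordered pairs are invariant under permutations. -/
theorem prod_Ioi_comp {M : Type*} [CommMonoid M] {n : ℕ} (σ : Equiv.Perm (Fin n))
    (f : Fin n → Fin n → M) (hf : ∀ i j, f i j = f j i) :
    ∏ i, ∏ j ∈ Finset.Ioi i, f (σ i) (σ j) = ∏ i, ∏ j ∈ Finset.Ioi i, f i j := by
  simp_rw [Finset.prod_sigma']
  set D := (Finset.univ : Finset (Fin n)).sigma Finset.Ioi with hD
  have hφD : D.image (fun x ↦ ⟨σ x.1 ⊓ σ x.2, σ x.1 ⊔ σ x.2⟩) = D := by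
    ext ⟨x1, x2⟩
    suffices (∃ a, ∃ b > a, σ a ⊓ σ b = x1 ∧ σ a ⊔ σ b = x2) ↔ x1 < x2 by simpa [hD]
    refine ⟨?_, fun hlt ↦ ?_⟩
    · rintro ⟨i, j, hij, rfl, rfl⟩
      exact inf_le_sup.lt_of_ne <| by simp [hij.ne]
    obtain hlt' | hle := lt_or_ge (σ.symm x1) (σ.symm x2)
    · exact ⟨_, _, hlt', by simp [hlt.le]⟩
    exact ⟨_, _, hle.lt_of_ne (by simp [hlt.ne']), by simp [hlt.le]⟩
  nth_rw 2 [← hφD]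
  rw [Finset.prod_image fun x hx y hy ↦ Finset.injOn_of_card_image_eq (by rw [hφD]) hx hy]
  refine Finset.prod_congr rfl fun ⟨x₁, x₂⟩ hx ↦ ?_
  obtain hlt | hle := lt_or_ge (σ x₁) (σ x₂)
  · simp [inf_eq_left.2 hlt.le, sup_eq_right.2 hlt.le]
  · simp only [inf_eq_right.2 hle, sup_eq_left.2 hle]
    exact hf _ _

theorem card_image_eq_of_ker {α β γ : Type*} [DecidableEq β] [DecidableEq γ] (s : Finset α)
    (f : α → β) (g : α → γ) (h : ∀ x ∈ s, ∀ y ∈ s, f x = f y ↔ g x = g y) :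
    (s.image f).card = (s.image g).card := by
  have h1 : ((s.image fun x => (f x, g x)).image Prod.fst).card =
      (s.image fun x => (f x, g x)).card := by
    apply Finset.card_image_of_injOn
    intro p hp q hq hpq
    obtain ⟨x, hx, rfl⟩ := Finset.mem_image.1 (Finset.mem_coe.1 hp)
    obtain ⟨y, hy, rfl⟩ := Finset.mem_image.1 (Finset.mem_coe.1 hq)
    exact Prod.ext hpq ((h x hx y hy).1 hpq)
  have h2 : ((s.image fun x => (f x, g x)).image Prod.snd).card =
      (s.image fun x => (f x, g x)).card := by
    apply Finset.card_image_of_injOn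
    intro p hp q hq hpq
    obtain ⟨x, hx, rfl⟩ := Finset.mem_image.1 (Finset.mem_coe.1 hp)
    obtain ⟨y, hy, rfl⟩ := Finset.mem_image.1 (Finset.mem_coe.1 hq)
    exact Prod.ext ((h x hx y hy).2 hpq) hpq
  rw [Finset.image_image] at h1 h2
  exact h1.trans h2.symm

/-- The sign in terms of any invariant whose fibres are the cycles. -/
theorem sign_eq_of_fibers {α T : Type*} [Fintype α] [DecidableEq α] [DecidableEq T]
    (σ : Equiv.Perm α) (c : α → T) (hc : ∀ x y, c x = c y ↔ σ.SameCycle x y) :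
    Equiv.Perm.sign σ = (-1 : ℤˣ) ^ (Fintype.card α + (univ.image c).card) := by
  have h1 : (σ.support.image c).card = σ.cycleType.card := by
    have e1 : σ.cycleFactorsFinset = σ.support.image (fun x => σ.cycleOf x) := by
      ext g
      simp only [Finset.mem_image]
      constructor
      · intro hg
        obtain ⟨x, hx⟩ := Equiv.Perm.IsCycle.nonempty_support
          (Equiv.Perm.mem_cycleFactorsFinset_iff.mp hg).1
        refine ⟨x, ?_, (Equiv.Perm.cycle_is_cycleOf hx hg).symm⟩
        exact Equiv.Perm.mem_cycleFactorsFinset_support_le hg hx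
      · rintro ⟨x, hx, rfl⟩
        exact Equiv.Perm.cycleOf_mem_cycleFactorsFinset_iff.2 hx
    have e2 : σ.cycleType.card = σ.cycleFactorsFinset.card := by
      simp [Equiv.Perm.cycleType_def]
    rw [e2, e1]
    refine card_image_eq_of_ker _ _ _ fun x hx y hy => ?_
    rw [hc, Equiv.Perm.sameCycle_iff_cycleOf_eq_of_mem_support hx hy]
  have h2 : (σ.supportᶜ.image c).card = σ.supportᶜ.card := by
    apply Finset.card_image_of_injOn
    intro x hx y hy h
    have hx' : σ x = x := by simpa using hx
    have := (hc x y).1 h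
    exact Equiv.Perm.SameCycle.eq_of_left this hx'
  have h3 : (univ.image c).card = (σ.support.image c).card + (σ.supportᶜ.image c).card := by
    rw [← Finset.card_union_of_disjoint, ← Finset.image_union, Finset.union_compl]
    rw [Finset.disjoint_left]
    intro t ht ht'
    obtain ⟨x, hx, rfl⟩ := Finset.mem_image.1 ht
    obtain ⟨y, hy, h⟩ := Finset.mem_image.1 ht'
    have hy' : σ y = y := by simpa using hy
    have := Equiv.Perm.SameCycle.eq_of_left ((hc y x).1 h) hy'
    subst this
    exact (Equiv.Perm.mem_support.1 hx) hy'
  have h4 := Finset.card_add_card_compl σ.support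
  rw [Equiv.Perm.sign_of_cycleType, Equiv.Perm.sum_cycleType, h3, h1, h2, ← h4]
  rw [show #σ.support + #σ.supportᶜ + (σ.cycleType.card + #σ.supportᶜ) =
    (#σ.support + σ.cycleType.card) + 2 * #σ.supportᶜ by ring, pow_add _ _ (2 * _), pow_mul]
  simp

/-- A symmetric polynomial evaluated at all the roots of a monic integral polynomial. -/
theorem symm_eval_mem {R : Type*} [CommRing R] {n : ℕ} (a : Fin n → R) (F : ℤ[X])
    (hF : F.map (Int.castRingHom R) = ∏ i, (X - C (a i)))
    (p : MvPolynomial (Fin n) ℤ) (hp : p.IsSymmetric) :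
    ∃ s : ℤ, (s : R) = MvPolynomial.aeval a p := by
  obtain ⟨q, hq⟩ := MvPolynomial.esymmAlgHom_surjective (σ := Fin n) (n := n) ℤ (by simp) ⟨p, hp⟩
  have hq' : MvPolynomial.aeval (fun i : Fin n ↦ MvPolynomial.esymm (Fin n) ℤ (i + 1)) q = p := by
    rw [← MvPolynomial.esymmAlgHom_apply, hq]
  have he : ∀ i : Fin n, ∃ s : ℤ,
      (s : R) = MvPolynomial.aeval a (MvPolynomial.esymm (Fin n) ℤ (i + 1)) := by
    intro i
    have h := Multiset.prod_X_sub_C_coeff (univ.val.map a) (k := n - (i + 1)) (by simp)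
    rw [Multiset.map_map] at h
    have h' : F.map (Int.castRingHom R) =
      (Multiset.map ((fun t => X - C t) ∘ a) univ.val).prod := hF
    rw [← h', coeff_map] at h
    have hi : n - (n - (i + 1)) = (i : ℕ) + 1 := by omega
    simp only [Multiset.card_map, Finset.card_val, Finset.card_univ, Fintype.card_fin, hi] at h
    refine ⟨(-1) ^ (i + 1 : ℕ) * F.coeff (n - (i + 1)), ?_⟩
    rw [MvPolynomial.aeval_esymm_eq_multiset_esymm]
    push_cast
    simp only [eq_intCast] at h
    rw [h, ← mul_assoc, ← pow_add, ← two_mul, pow_mul]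
    simp
  choose s hs using he
  refine ⟨MvPolynomial.aeval s q, ?_⟩
  have key : (Algebra.ofId ℤ R).comp (MvPolynomial.aeval s) = (MvPolynomial.aeval a).comp
      (MvPolynomial.aeval fun i : Fin n ↦ MvPolynomial.esymm (Fin n) ℤ (i + 1)) := by
    apply MvPolynomial.algHom_ext
    intro i
    simpa [Algebra.ofId_apply] using hs i
  rw [← hq']
  simpa [Algebra.ofId_apply] using DFunLike.congr_fun key q

theorem S_int {R : Type*} [CommRing R] {n : ℕ} (a : Fin n → R) (F : ℤ[X])
    (hF : F.map (Int.castRingHom R) = ∏ i, (X - C (a i))) :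
    ∃ s : ℤ, (s : R) = ∏ i : Fin n, ∏ j ∈ Finset.Ioi i, (a i + a j) := by
  obtain ⟨s, hs⟩ := symm_eval_mem a F hF
    (∏ i : Fin n, ∏ j ∈ Finset.Ioi i, (MvPolynomial.X i + MvPolynomial.X j)) (by
      intro σ
      simp only [map_prod, map_add, MvPolynomial.rename_X]
      exact prod_Ioi_comp σ (fun i j => (MvPolynomial.X i + MvPolynomial.X j :
        MvPolynomial (Fin n) ℤ)) (fun i j => add_comm _ _))
  exact ⟨s, by simpa using hs⟩

theorem expand {ι O k : Type*} [CommRing O] [Field k] (φ : O →+* k) (h2 : (2 : k) = 0)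
    (s : Finset ι) (u v : ι → O) (hu : ∀ i ∈ s, φ (u i) ≠ 0) :
    ∃ Q : O, ∏ i ∈ s, (u i ^ 2 - 4 * v i) = (∏ i ∈ s, u i) ^ 2 - 4 * Q ∧
      φ Q = (φ (∏ i ∈ s, u i)) ^ 2 * ∑ i ∈ s, φ (v i) / φ (u i) ^ 2 := by
  classical
  have h4 : φ 4 = 0 := by
    rw [show (4 : O) = 2 * 2 by norm_num, map_mul, map_ofNat, h2, zero_mul]
  induction s using Finset.induction_on with
  | empty => exact ⟨0, by simp⟩
  | insert a s ha ih =>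
    obtain ⟨Q, h, hQ⟩ := ih (fun i hi => hu i (Finset.mem_insert_of_mem hi))
    have hua := hu a (Finset.mem_insert_self _ _)
    refine ⟨Q * u a ^ 2 + (∏ i ∈ s, u i) ^ 2 * v a - 4 * (Q * v a), ?_, ?_⟩
    · rw [Finset.prod_insert ha, Finset.prod_insert ha, h]; ring
    · rw [Finset.prod_insert ha, Finset.sum_insert ha]
      simp only [map_sub, map_add, map_mul, map_pow, h4, hQ]
      field_simp
      ring

/-- Effect of a permutation on the Berlekamp sum. -/
theorem berlekamp {k : Type*} [Field k] (h2 : (2 : k) = 0) {n : ℕ} (a : Fin n → k)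
    (ha : Function.Injective a) (σ : Equiv.Perm (Fin n)) (hσ : ∀ i, a (σ i) = a i ^ 2) :
    (∑ i : Fin n, ∑ j ∈ Finset.Ioi i, a i * a j / (a i + a j) ^ 2 = 0) ↔
      Equiv.Perm.sign σ = 1 := by
  have hneg : ∀ x : k, -x = x := fun x => by linear_combination (-x) * h2
  have hne : ∀ i j, i ≠ j → a i + a j ≠ 0 := fun i j hij h => hij (ha (by
    linear_combination h - a j * h2))
  set g : Fin n → Fin n → k := fun i j => a i / (a i + a j) with hg
  have hflip : ∀ i j, i ≠ j → g i j = 1 + g j i := by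
    intro i j hij
    have h1 := hne i j hij
    have h1' := hne j i hij.symm
    simp only [hg]
    field_simp
    linear_combination (-a j^2 - a j * a i) * h2
  set g' : Fin n → Fin n → k := fun i j => if i < j then g i j else g j i with hg'
  have hsym : ∀ i j, i ≠ j → g' i j = g' j i := by
    intro i j hij
    rcases lt_or_gt_of_ne hij with h | h <;> simp [hg', h, h.not_gt]
  have hsym' : ∀ i j, g' i j = g' j i := by
    intro i j
    by_cases h : i = j
    · rw [h]
    · exact hsym i j h
  have hinv := prod_Ioi_comp (M := Multiplicative k) σ (fun i j => Multiplicative.ofAdd (g' i j))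
    (fun i j => by rw [hsym'])
  have hinv' : ∑ i, ∑ j ∈ Finset.Ioi i, g' (σ i) (σ j) = ∑ i, ∑ j ∈ Finset.Ioi i, g' i j := hinv
  have hB : ∀ i j, i ≠ j → a i * a j / (a i + a j) ^ 2 =
      g (σ i) (σ j) + g i j := by
    intro i j hij
    have h1 := hne i j hij
    have h3 : a i ^ 2 + a j ^ 2 = (a i + a j) ^ 2 := by linear_combination (- a i * a j) * h2
    simp only [hg, hσ, h3]
    field_simp
    linear_combination (-a i ^ 2) * h2
  have hparity : ∀ m : ℕ, ((m : k) = 0 ↔ (-1 : ℤˣ) ^ m = 1) := by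
    intro m
    rcases Nat.even_or_odd m with h | h
    · rw [h.neg_one_pow]
      obtain ⟨r, rfl⟩ := h
      simp only [iff_true]
      push_cast
      linear_combination (r : k) * h2
    · rw [h.neg_one_pow]
      obtain ⟨r, rfl⟩ := h
      have : ((2 * r + 1 : ℕ) : k) = 1 := by push_cast; linear_combination (r : k) * h2
      rw [this]
      simp
  have hS : ∑ i : Fin n, ∑ j ∈ Finset.Ioi i, a i * a j / (a i + a j) ^ 2 =
      ((∑ i : Fin n, ∑ j ∈ Finset.Ioi i, (if σ i < σ j then 0 else 1) : ℕ) : k) := by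
    have e : ∀ i : Fin n, ∀ j ∈ Finset.Ioi i, a i * a j / (a i + a j) ^ 2 =
        g' (σ i) (σ j) + g' i j + ((if σ i < σ j then 0 else 1 : ℕ) : k) := by
      intro i j hij
      have hlt : i < j := Finset.mem_Ioi.1 hij
      have hs : σ i ≠ σ j := fun h => hlt.ne (σ.injective h)
      rw [hB i j hlt.ne]
      have : g' i j = g i j := by simp [hg', hlt]
      rw [this]
      by_cases h : σ i < σ j
      · simp [hg', h]
      · simp only [hg', h, if_false]
        rw [hflip _ _ hs]
        push_cast
        ring
    rw [Finset.sum_congr rfl (fun i _ => Finset.sum_congr rfl (e i))]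
    simp only [Finset.sum_add_distrib, hinv']
    push_cast
    linear_combination (∑ i, ∑ j ∈ Finset.Ioi i, g' i j) * h2
  rw [hS, hparity, Equiv.Perm.sign_eq_prod_prod_Ioi]
  simp_rw [← Finset.prod_pow_eq_pow_sum]
  have : ∀ i j, (-1 : ℤˣ) ^ (if σ i < σ j then 0 else 1) = if σ i < σ j then 1 else -1 := by
    intro i j; split_ifs <;> simp
  simp_rw [this]


/-- Points with the same minimal polynomial are in one Frobenius cycle. -/
theorem minpoly_eq_iff {k : Type*} [Field k] [Algebra (ZMod 2) k] {n : ℕ} (a : Fin n → k)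
    (ha : Function.Injective a) (hint : ∀ i, IsIntegral (ZMod 2) (a i))
    (σ : Equiv.Perm (Fin n)) (hσ : ∀ i, a (σ i) = a i ^ 2) (i j : Fin n) :
    minpoly (ZMod 2) (a i) = minpoly (ZMod 2) (a j) ↔ σ.SameCycle i j := by
  classical
  haveI : CharP k 2 := charP_of_injective_algebraMap (algebraMap (ZMod 2) k).injective 2
  constructor
  · intro h
    set s : Finset (Fin n) := univ.filter fun y => σ.SameCycle i y with hs
    set g : k[X] := ∏ y ∈ s, (X - C (a y)) with hg
    have hgf : g.map (frobenius k 2) = g := by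
      rw [hg, Polynomial.map_prod]
      simp only [Polynomial.map_sub, Polynomial.map_X, Polynomial.map_C, frobenius_def, ← hσ]
      refine Finset.prod_bij (fun y _ => σ y) ?_ ?_ ?_ ?_
      · intro y hy
        simpa [hs] using hy
      · intro y _ z _ hyz
        exact σ.injective hyz
      · intro y hy
        refine ⟨σ.symm y, ?_, by simp⟩
        have : σ.SameCycle i y := by simpa [hs] using hy
        simp only [hs, Finset.mem_filter, Finset.mem_univ, true_and]
        rw [← Equiv.Perm.sameCycle_apply_right]
        simpa using this
      · intro y _
        rfl
    have hcoef : ∀ m, g.coeff m ∈ (algebraMap (ZMod 2) k).range := by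
      intro m
      have h1 : g.coeff m ^ 2 = g.coeff m := by
        conv_rhs => rw [← hgf]
        rw [coeff_map, frobenius_def]
      have h2 : g.coeff m * (g.coeff m - 1) = 0 := by linear_combination h1
      rcases mul_eq_zero.1 h2 with h3 | h3
      · exact ⟨0, by simp [h3]⟩
      · exact ⟨1, by simp [sub_eq_zero.1 h3]⟩
    obtain ⟨q, hq⟩ : ∃ q : (ZMod 2)[X], q.map (algebraMap (ZMod 2) k) = g := by
      have : g ∈ Polynomial.lifts (algebraMap (ZMod 2) k) := by
        rw [Polynomial.lifts_iff_coeff_lifts]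
        intro m
        exact hcoef m
      exact (Polynomial.mem_lifts g).1 this
    have hqi : aeval (a i) q = 0 := by
      rw [← eval_map_algebraMap, hq, hg, eval_prod]
      exact Finset.prod_eq_zero (i := i) (by simp [hs, Equiv.Perm.SameCycle.refl]) (by simp)
    have hqj : aeval (a j) q = 0 := by
      have := minpoly.dvd _ _ hqi
      rw [h] at this
      exact (minpoly.dvd_iff).1 this
    rw [← eval_map_algebraMap, hq, hg, eval_prod, Finset.prod_eq_zero_iff] at hqj
    obtain ⟨y, hy, hy0⟩ := hqj
    have : j = y := ha (by simpa [sub_eq_zero] using hy0)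
    subst this
    simpa [hs] using hy
  · have step : ∀ x, minpoly (ZMod 2) (a x) = minpoly (ZMod 2) (a (σ x)) := by
      intro x
      refine (minpoly.eq_of_irreducible_of_monic (minpoly.irreducible (hint x)) ?_
        (minpoly.monic (hint x)))
      rw [hσ]
      have h0 := minpoly.aeval (ZMod 2) (a x)
      rw [show a x ^ 2 = frobenius k 2 (a x) from rfl]
      have h5 := ZMod.expand_card (minpoly (ZMod 2) (a x))
      have h6 := congrArg (aeval (a x)) h5
      rw [map_pow, h0, expand_aeval] at h6
      simpa [frobenius_def] using h6
    rintro ⟨m, rfl⟩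
    have stepn : ∀ (m : ℕ) x, minpoly (ZMod 2) (a x) = minpoly (ZMod 2) (a ((σ ^ m) x)) := by
      intro m
      induction m with
      | zero => intro x; rfl
      | succ m ih =>
        intro x
        rw [pow_succ', Equiv.Perm.mul_apply, ← step, ← ih]
    obtain ⟨m, rfl | rfl⟩ := m.eq_nat_or_neg
    · simpa using stepn m i
    · have := stepn m ((σ ^ (-(m : ℤ))) i)
      rw [this]
      simp

theorem card_factors {k : Type*} [Field k] [Algebra (ZMod 2) k] [DecidableEq (ZMod 2)[X]] {n : ℕ}
    (a : Fin n → k) (f : (ZMod 2)[X]) (hsf : Squarefree f)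
    (hf : f.map (algebraMap (ZMod 2) k) = ∏ i, (X - C (a i))) :
    Multiset.card (UniqueFactorizationMonoid.factors f) =
      (univ.image fun i => minpoly (ZMod 2) (a i)).card := by
  have hf0 : f ≠ 0 := hsf.ne_zero
  have hroot : ∀ x : k, aeval x f = 0 ↔ ∃ i, x = a i := by
    intro x
    rw [← eval_map_algebraMap, hf, eval_prod, Finset.prod_eq_zero_iff]
    simp [sub_eq_zero]
  have hint : ∀ i, IsIntegral (ZMod 2) (a i) := fun i =>
    isAlgebraic_iff_isIntegral.1 ⟨f, hf0, (hroot _).2 ⟨i, rfl⟩⟩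
  have h1 : Multiset.card (UniqueFactorizationMonoid.factors f) =
      Multiset.card (UniqueFactorizationMonoid.normalizedFactors f) := by
    simp [UniqueFactorizationMonoid.normalizedFactors]
  have hnd := (UniqueFactorizationMonoid.squarefree_iff_nodup_normalizedFactors hf0).1 hsf
  rw [h1, ← Multiset.toFinset_card_of_nodup hnd]
  congr 1
  ext p
  rw [Multiset.mem_toFinset, Finset.mem_image]
  constructor
  · intro hp
    have hirr := UniqueFactorizationMonoid.irreducible_of_normalized_factor p hp
    have hdvd := UniqueFactorizationMonoid.dvd_of_mem_normalizedFactors hp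
    have hmon : p.Monic := by
      have := UniqueFactorizationMonoid.normalize_normalized_factor p hp
      rw [← this]
      exact Polynomial.monic_normalize hirr.ne_zero
    have hspl : (f.map (algebraMap (ZMod 2) k)).Splits := by
      rw [hf]
      exact Polynomial.Splits.prod fun i _ => Polynomial.Splits.X_sub_C _
    have hspl' : (p.map (algebraMap (ZMod 2) k)).Splits :=
      hspl.of_dvd (Polynomial.map_ne_zero hf0) (Polynomial.map_dvd _ hdvd)
    obtain ⟨x, hx⟩ := hspl'.exists_eval_eq_zero (by
      rw [Polynomial.degree_map]; exact hirr.degree_pos.ne')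
    rw [eval_map_algebraMap] at hx
    obtain ⟨i, rfl⟩ := (hroot x).1 (by
      obtain ⟨r, rfl⟩ := hdvd
      rw [map_mul, hx, zero_mul])
    exact ⟨i, Finset.mem_univ _, (minpoly.eq_of_irreducible_of_monic hirr hx hmon).symm⟩
  · rintro ⟨i, -, rfl⟩
    rw [UniqueFactorizationMonoid.mem_normalizedFactors_iff' hf0]
    exact ⟨minpoly.irreducible (hint i), (minpoly.monic (hint i)).normalize_eq_self,
      minpoly.dvd _ _ ((hroot _).2 ⟨i, rfl⟩)⟩

/-- The Frobenius permutation of the roots. -/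
theorem exists_perm {k : Type*} [Field k] [Algebra (ZMod 2) k] {n : ℕ}
    (a : Fin n → k) (ha : Function.Injective a) (f : (ZMod 2)[X])
    (hf : f.map (algebraMap (ZMod 2) k) = ∏ i, (X - C (a i))) :
    ∃ σ : Equiv.Perm (Fin n), ∀ i, a (σ i) = a i ^ 2 := by
  haveI : CharP k 2 := charP_of_injective_algebraMap (algebraMap (ZMod 2) k).injective 2
  have hroot : ∀ x : k, aeval x f = 0 ↔ ∃ i, a i = x := by
    intro x
    rw [← eval_map_algebraMap, hf, eval_prod, Finset.prod_eq_zero_iff]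
    simp [sub_eq_zero, eq_comm]
  have h : ∀ i, ∃ j, a j = a i ^ 2 := by
    intro i
    rw [← hroot]
    have h6 := congrArg (aeval (a i)) (ZMod.expand_card f)
    rw [map_pow, (hroot (a i)).2 ⟨i, rfl⟩, expand_aeval] at h6
    simpa using h6
  choose s hs using h
  have hinj : Function.Injective s := by
    intro i j hij
    apply ha
    apply (frobenius_inj k 2)
    simp only [frobenius_def]
    rw [← hs, ← hs, hij]
  exact ⟨Equiv.ofBijective s (Finite.injective_iff_bijective.1 hinj), hs⟩

end Swan

theorem swan_parity_criterion (n : ℕ) (hn : 1 ≤ n) (f : Polynomial (ZMod 2))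
    (hsf : Squarefree f) (hfdeg : f.natDegree = n)
    (F : Polynomial ℤ) (hmonic : F.Monic) (hFdeg : F.natDegree = n)
    (hred : F.map (Int.castRingHom (ZMod 2)) = f)
    (α : Fin n → ℂ)
    (hroots : F.map (Int.castRingHom ℂ) = ∏ i : Fin n, (X - C (α i)))
    (D : ℤ)
    (hD : (D : ℂ) = ∏ i : Fin n, ∏ j ∈ Finset.Ioi i, (α i - α j) ^ 2) :
    (Multiset.card (UniqueFactorizationMonoid.factors f) ≡ n [MOD 2]) ↔
      D ≡ 1 [ZMOD 8] := by
  classical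
  -- lift the roots to the ring of algebraic integers
  have hαint : ∀ i, IsIntegral ℤ (α i) := by
    intro i
    refine ⟨F, hmonic, ?_⟩
    have : (F.map (Int.castRingHom ℂ)).eval (α i) = 0 := by
      rw [hroots, eval_prod]
      exact Finset.prod_eq_zero (Finset.mem_univ i) (by simp)
    rw [eval_map] at this
    exact this
  let O := integralClosure ℤ ℂ
  let b : Fin n → O := fun i => ⟨α i, hαint i⟩
  have hinjO : Function.Injective (algebraMap O ℂ) := Subtype.val_injective
  have hFO : F.map (Int.castRingHom O) = ∏ i, (X - C (b i)) := by
    apply Polynomial.map_injective (algebraMap O ℂ) hinjO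
    rw [Polynomial.map_map, Polynomial.map_prod]
    simp only [Polynomial.map_sub, Polynomial.map_X, Polynomial.map_C]
    rw [RingHom.ext_int ((algebraMap O ℂ).comp (Int.castRingHom O)) (Int.castRingHom ℂ), hroots]
    rfl
  have hDO : (D : O) = ∏ i : Fin n, ∏ j ∈ Finset.Ioi i, (b i - b j) ^ 2 := by
    apply hinjO
    simp only [map_prod, map_pow, map_sub, map_intCast]
    exact hD
  -- an integer divisible by m in O is divisible by m
  have hdivO : ∀ (m e : ℤ), m ≠ 0 → (m : O) ∣ (e : O) → m ∣ e := by
    rintro m e hm ⟨c, hc⟩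
    have hc' : (e : ℂ) = m * (c : ℂ) := by
      have := congrArg (algebraMap O ℂ) hc
      simpa using this
    have hmC : (m : ℂ) ≠ 0 := by exact_mod_cast hm
    have hcq : (c : ℂ) = algebraMap ℚ ℂ ((e : ℚ) / m) := by
      rw [map_div₀, map_intCast, map_intCast, hc']
      field_simp
    have hcint : IsIntegral ℤ ((e : ℚ) / m) := by
      have h1 : IsIntegral ℤ (algebraMap ℚ ℂ ((e : ℚ) / m)) := by
        rw [← hcq]; exact c.2
      exact (isIntegral_algebraMap_iff (algebraMap ℚ ℂ).injective).1 h1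
    obtain ⟨z, hz⟩ := IsIntegrallyClosed.isIntegral_iff.1 hcint
    refine ⟨z, ?_⟩
    have hmQ : (m : ℚ) ≠ 0 := by exact_mod_cast hm
    have : (z : ℚ) * m = e := by
      rw [show (z : ℚ) = (e : ℚ) / m from hz]
      field_simp
    have h' : z * m = e := by exact_mod_cast this
    rw [← h', mul_comm]
  -- a maximal ideal above 2
  have hnu : ¬ IsUnit (2 : O) := by
    intro h
    have h1 := hdivO 2 1 (by norm_num) (by
      have := h.dvd (a := (1 : O))
      simpa using this)
    norm_num at h1
  obtain ⟨M, hM, h2M⟩ := exists_max_ideal_of_mem_nonunits (mem_nonunits_iff.2 hnu)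
  letI : Field (O ⧸ M) := Ideal.Quotient.field M
  let φ : O →+* O ⧸ M := Ideal.Quotient.mk M
  have h2k : (2 : O ⧸ M) = 0 := by
    have : φ 2 = 0 := Ideal.Quotient.eq_zero_iff_mem.2 h2M
    exact (map_ofNat φ 2).symm.trans this
  haveI : CharP (O ⧸ M) 2 := CharTwo.of_one_ne_zero_of_two_eq_zero one_ne_zero h2k
  letI : Algebra (ZMod 2) (O ⧸ M) := ZMod.algebra _ 2
  let a : Fin n → O ⧸ M := fun i => φ (b i)
  have hfk : f.map (algebraMap (ZMod 2) (O ⧸ M)) = ∏ i, (X - C (a i)) := by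
    have := congrArg (Polynomial.map φ) hFO
    rw [Polynomial.map_map, Polynomial.map_prod] at this
    simp only [Polynomial.map_sub, Polynomial.map_X, Polynomial.map_C] at this
    rw [← hred, Polynomial.map_map]
    rw [RingHom.ext_int ((algebraMap (ZMod 2) (O ⧸ M)).comp (Int.castRingHom (ZMod 2)))
      (φ.comp (Int.castRingHom O))]
    exact this
  have hsep : f.Separable := PerfectField.separable_iff_squarefree.2 hsf
  have ha : Function.Injective a := by
    have := hsep.map (f := algebraMap (ZMod 2) (O ⧸ M))
    rw [hfk] at this
    exact this.injective_of_prod_X_sub_C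
  have hint : ∀ i, IsIntegral (ZMod 2) (a i) := fun i =>
    isAlgebraic_iff_isIntegral.1 ⟨f, hsf.ne_zero, by
      rw [← eval_map_algebraMap, hfk, eval_prod]
      exact Finset.prod_eq_zero (Finset.mem_univ i) (by simp)⟩
  obtain ⟨σ, hσ⟩ := Swan.exists_perm a ha f hfk
  have hsign := Swan.sign_eq_of_fibers σ (fun i => minpoly (ZMod 2) (a i))
    (Swan.minpoly_eq_iff a ha hint σ hσ)
  rw [← Swan.card_factors a f hsf hfk, Fintype.card_fin] at hsign
  have hB := Swan.berlekamp h2k a ha σ hσ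
  have hparity : (Multiset.card (UniqueFactorizationMonoid.factors f) ≡ n [MOD 2]) ↔
      Equiv.Perm.sign σ = 1 := by
    rw [hsign]
    rcases Nat.even_or_odd (n + Multiset.card (UniqueFactorizationMonoid.factors f)) with h | h
    · rw [h.neg_one_pow]
      simp only [iff_true]
      have := Nat.even_iff.1 h
      unfold Nat.ModEq
      omega
    · rw [h.neg_one_pow]
      have := Nat.odd_iff.1 h
      unfold Nat.ModEq
      constructor
      · intro; omega
      · intro h'; exact absurd h' (by decide)
  rw [hparity, ← hB]
  have hkint : ∀ e : ℤ, φ (e : O) = 0 ↔ (2 : ℤ) ∣ e := by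
    intro e
    rw [map_intCast]
    exact_mod_cast CharP.intCast_eq_zero_iff (O ⧸ M) 2 e
  have hne : ∀ i j, i ≠ j → φ (b i + b j) ≠ 0 := fun i j hij h => hij (ha (by
    rw [map_add] at h
    linear_combination h - a j * h2k))
  -- expansion
  obtain ⟨s, hs⟩ := Swan.S_int b F hFO
  obtain ⟨Q, hQ, hφQ⟩ := Swan.expand φ h2k ((Finset.univ : Finset (Fin n)).sigma Finset.Ioi)
    (fun p => b p.1 + b p.2) (fun p => b p.1 * b p.2) (by
      rintro ⟨i, j⟩ hp
      have : i < j := by simpa using hp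
      exact hne i j this.ne)
  rw [← Finset.prod_sigma' (f := fun i j => b i + b j), ← hs,
    ← Finset.prod_sigma' (f := fun i j => (b i + b j) ^ 2 - 4 * (b i * b j))] at hQ
  rw [← Finset.prod_sigma' (f := fun i j => b i + b j), ← hs,
    ← Finset.sum_sigma' (f := fun i j => φ (b i * b j) / φ (b i + b j) ^ 2)] at hφQ
  have hDQ : (D : O) = (s : O) ^ 2 - 4 * Q := by
    rw [hDO, ← hQ]
    refine Finset.prod_congr rfl fun i _ => Finset.prod_congr rfl fun j _ => ?_
    ring
  have hs0 : φ (s : O) ≠ 0 := by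
    rw [hs, map_prod]
    refine Finset.prod_ne_zero_iff.2 fun i _ => ?_
    rw [map_prod]
    exact Finset.prod_ne_zero_iff.2 fun j hj => hne i j (Finset.mem_Ioi.1 hj).ne
  have hsodd : ¬ (2 : ℤ) ∣ s := fun h => hs0 ((hkint s).2 h)
  have hs8 : (8 : ℤ) ∣ s ^ 2 - 1 := Int.eight_dvd_sq_sub_one_of_odd (by
    rw [← Int.not_even_iff_odd, even_iff_two_dvd]; exact hsodd)
  obtain ⟨r, hr⟩ := hs8
  obtain ⟨e, he⟩ : (4 : ℤ) ∣ D - s ^ 2 := hdivO 4 _ (by norm_num) ⟨-Q, by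
    push_cast
    rw [hDQ]; ring⟩
  have heQ : (e : O) = -Q := by
    have h4 : (4 : O) ≠ 0 := by norm_num
    apply mul_left_cancel₀ h4
    have : ((D - s ^ 2 : ℤ) : O) = ((4 * e : ℤ) : O) := by rw [he]
    push_cast at this
    rw [← this, hDQ]; ring
  have hsum : φ Q = 0 ↔
      ∑ i : Fin n, ∑ j ∈ Finset.Ioi i, a i * a j / (a i + a j) ^ 2 = 0 := by
    rw [hφQ]
    simp only [map_mul, map_add]
    rw [mul_eq_zero, or_iff_right (pow_ne_zero 2 hs0)]
  rw [← hsum]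
  have : φ Q = 0 ↔ (2 : ℤ) ∣ e := by
    rw [← hkint, heQ, map_neg, neg_eq_zero]
  rw [this, Int.modEq_iff_dvd]
  omega
end

section
/- Let s be an even positive integer, n an odd integer with n > 3s, and let α_1, ..., α_n ∈ ℂ be the roots, counted with multiplicity, of F(X) = X^n + X^(n-s) + X^(n-2s) + X^(n-3s) + 1 ∈ ℤ[X]. Then for every odd integer m with 0 < m < n, one has Σ_{i=1}^n α_i^m = 0. In particular S_{n-s} = S_{n-2s} = S_{n-3s} = 0, where S_m := Σ_{i=1}^n α_i^m. -/
open Polynomial Finset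

theorem odd_power_sums_vanish (s n : ℕ) (hs : Even s) (hs0 : 0 < s)
    (hodd : Odd n) (hn : 3 * s < n) (α : Fin n → ℂ)
    (hroots : (X ^ n + X ^ (n - s) + X ^ (n - 2 * s) + X ^ (n - 3 * s) + 1 :
        Polynomial ℤ).map (Int.castRingHom ℂ) =
      ∏ i : Fin n, (X - C (α i))) :
    (∀ m : ℕ, Odd m → 0 < m → m < n → ∑ i : Fin n, (α i) ^ m = 0) ∧
    (∑ i : Fin n, (α i) ^ (n - s) = 0) ∧
    (∑ i : Fin n, (α i) ^ (n - 2 * s) = 0) ∧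
    (∑ i : Fin n, (α i) ^ (n - 3 * s) = 0) := by
  have he : ∀ k : ℕ, Odd k → k < n →
      MvPolynomial.aeval α (MvPolynomial.esymm (Fin n) ℂ k) = 0 := by
    intro k hk hkn
    rw [MvPolynomial.aeval_esymm_eq_multiset_esymm]
    have h := Multiset.prod_X_sub_C_coeff (Finset.univ.val.map α) (k := n - k) (by simp)
    have h2 : (Multiset.map (fun t => X - C t) (Finset.univ.val.map α)).prod
        = ∏ i : Fin n, (X - C (α i)) := by
      rw [Multiset.map_map]; rfl
    rw [h2, ← hroots] at h
    have h3 : Multiset.card (Finset.univ.val.map α) - (n - k) = k := by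
      simp; omega
    rw [h3] at h
    have h4 : ((X ^ n + X ^ (n - s) + X ^ (n - 2 * s) + X ^ (n - 3 * s) + 1 :
        Polynomial ℤ).map (Int.castRingHom ℂ)).coeff (n - k) = 0 := by
      obtain ⟨a, rfl⟩ := hs
      obtain ⟨b, rfl⟩ := hk
      rw [coeff_map]
      simp only [coeff_add, coeff_X_pow, coeff_one]
      rw [if_neg (by omega), if_neg (by omega), if_neg (by omega), if_neg (by omega),
        if_neg (by omega)]
      simp
    rw [h4] at h
    simpa using h.symm
  have key : ∀ m : ℕ, Odd m → 0 < m → m < n → ∑ i : Fin n, (α i) ^ m = 0 := by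
    intro m
    induction m using Nat.strong_induction_on with
    | _ m ih =>
      intro hm h0 hmn
      have h := congrArg (MvPolynomial.aeval α)
        (MvPolynomial.psum_eq_mul_esymm_sub_sum (Fin n) ℂ m h0)
      have hp : ∀ j, MvPolynomial.aeval α (MvPolynomial.psum (Fin n) ℂ j)
          = ∑ i : Fin n, (α i) ^ j := by
        intro j; simp [MvPolynomial.psum]
      rw [hp, map_sub, map_mul, he m hm hmn, mul_zero, zero_sub, map_sum] at h
      rw [h, neg_eq_zero]
      refine Finset.sum_eq_zero ?_
      rintro ⟨a, b⟩ hab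
      simp only [Finset.mem_filter, HasAntidiagonal.mem_antidiagonal, Set.mem_Ioo] at hab
      obtain ⟨hab, ha0, ham⟩ := hab
      rw [map_mul, map_mul, hp]
      rcases Nat.even_or_odd a with hae | hao
      · have hb : Odd b := by
          rw [← hab] at hm
          exact (Nat.odd_add'.mp hm).mpr hae
        rw [ih b (by omega) hb hb.pos (by omega), mul_zero]
      · rw [he a hao (by omega), mul_zero, zero_mul]
  obtain ⟨a, rfl⟩ := hs
  obtain ⟨b, rfl⟩ := hodd
  refine ⟨key, key _ ?_ (by omega) (by omega), key _ ?_ (by omega) (by omega),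
    key _ ?_ (by omega) (by omega)⟩ <;> rw [Nat.odd_iff] <;> omega
end

section
/- Let s be an even positive integer, n an odd integer with n > 3s, and let α_1, ..., α_n ∈ ℂ be the roots, counted with multiplicity, of F(X) = X^n + X^(n-s) + X^(n-2s) + X^(n-3s) + 1 ∈ ℤ[X]. Then S_{2n-4s} := Σ_{i=1}^n α_i^(2n-4s) is an even rational integer; that is, there exists k ∈ ℤ with Σ_{i=1}^n α_i^(2n-4s) = 2k. -/
open Polynomial Finset

lemma aux_esymm {n : ℕ} (α : Fin n → ℂ) (j : ℕ) (hj : j ≤ n) :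
    (∏ i : Fin n, (X - C (α i))).coeff (n - j) =
      (-1) ^ j * MvPolynomial.aeval α (MvPolynomial.esymm (Fin n) ℤ j) := by
  rw [MvPolynomial.aeval_esymm_eq_multiset_esymm]
  have h := Multiset.prod_X_sub_C_coeff (Finset.univ.val.map α) (k := n - j) (by simp)
  simp only [Multiset.map_map, Multiset.card_map, Finset.card_val, Finset.card_univ,
    Fintype.card_fin, Nat.sub_sub_self hj] at h
  exact h

lemma aux_esymm_gt {n : ℕ} (j : ℕ) (hj : n < j) :
    MvPolynomial.esymm (Fin n) ℤ j = 0 := by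
  unfold MvPolynomial.esymm
  rw [Finset.powersetCard_eq_empty.2 (by simpa using hj)]
  simp

lemma aux_newton {n : ℕ} (α : Fin n → ℂ) (k : ℕ) (hk : 0 < k) :
    ∑ i, α i ^ k = (-1) ^ (k + 1) * k * MvPolynomial.aeval α (MvPolynomial.esymm (Fin n) ℤ k) -
      ∑ a ∈ antidiagonal k with a.1 ∈ Set.Ioo 0 k, (-1) ^ a.1 *
        MvPolynomial.aeval α (MvPolynomial.esymm (Fin n) ℤ a.1) * ∑ i, α i ^ a.2 := by
  have h := congrArg (MvPolynomial.aeval α) (MvPolynomial.psum_eq_mul_esymm_sub_sum (Fin n) ℤ k hk)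
  simpa [MvPolynomial.psum, map_sum] using h

lemma aux_int {n : ℕ} (α : Fin n → ℂ)
    (hE : ∀ j, ∃ z : ℤ, MvPolynomial.aeval α (MvPolynomial.esymm (Fin n) ℤ j) = (z : ℂ)) (k : ℕ)
    (hk : 0 < k) : ∑ i, α i ^ k ∈ (Int.castRingHom ℂ).range := by
  induction k using Nat.strong_induction_on with
  | _ k ih =>
    have hE' : ∀ j, MvPolynomial.aeval α (MvPolynomial.esymm (Fin n) ℤ j) ∈
        (Int.castRingHom ℂ).range := fun j => by
      obtain ⟨z, hz⟩ := hE j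
      exact ⟨z, by simp [hz]⟩
    rw [aux_newton α k hk]
    refine sub_mem (mul_mem (mul_mem (pow_mem (neg_mem (one_mem _)) _) (natCast_mem _ _)) (hE' _))
      (sum_mem fun a ha => mul_mem (mul_mem (pow_mem (neg_mem (one_mem _)) _) (hE' _)) ?_)
    simp only [mem_filter, HasAntidiagonal.mem_antidiagonal, Set.mem_Ioo] at ha
    exact ih _ (by omega) (by omega)

lemma aux_zero {n : ℕ} (α : Fin n → ℂ)
    (hE : ∀ j, Odd j → j < n → MvPolynomial.aeval α (MvPolynomial.esymm (Fin n) ℤ j) = 0) (k : ℕ)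
    (hk : Odd k) (hkn : k < n) : ∑ i, α i ^ k = 0 := by
  induction k using Nat.strong_induction_on with
  | _ k ih =>
    rw [aux_newton α k hk.pos, hE k hk hkn, Finset.sum_eq_zero]
    · simp
    intro a ha
    simp only [mem_filter, HasAntidiagonal.mem_antidiagonal, Set.mem_Ioo] at ha
    rcases Nat.even_or_odd a.1 with h | h
    · rw [ih a.2 (by omega) (by grind) (by omega)]; simp
    · rw [hE a.1 h (by omega)]; simp

theorem S_two_n_sub_four_s_even (s n : ℕ) (hs : Even s) (hs0 : 0 < s)
    (hodd : Odd n) (hn : 3 * s < n) (α : Fin n → ℂ)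
    (hroots : (X ^ n + X ^ (n - s) + X ^ (n - 2 * s) + X ^ (n - 3 * s) + 1 :
        Polynomial ℤ).map (Int.castRingHom ℂ) =
      ∏ i : Fin n, (X - C (α i))) :
    ∃ k : ℤ, ∑ i : Fin n, (α i) ^ (2 * n - 4 * s) = (2 * k : ℤ) := by
  have key : ∀ j ≤ n, MvPolynomial.aeval α (MvPolynomial.esymm (Fin n) ℤ j) =
      (((-1) ^ j * (X ^ n + X ^ (n - s) + X ^ (n - 2 * s) + X ^ (n - 3 * s) + 1 :
        Polynomial ℤ).coeff (n - j) : ℤ) : ℂ) := by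
    intro j hj
    have h := aux_esymm α j hj
    rw [← hroots, coeff_map] at h
    push_cast
    rw [eq_intCast] at h
    rw [h, ← mul_assoc, ← mul_pow]
    simp
  have hE : ∀ j, ∃ z : ℤ, MvPolynomial.aeval α (MvPolynomial.esymm (Fin n) ℤ j) = (z : ℂ) := by
    intro j
    rcases le_or_gt j n with h | h
    · exact ⟨_, key j h⟩
    · exact ⟨0, by simp [aux_esymm_gt j h]⟩
  have hE0 : ∀ j, Odd j → j < n →
      MvPolynomial.aeval α (MvPolynomial.esymm (Fin n) ℤ j) = 0 := by
    intro j hj hjn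
    rw [key j hjn.le]
    obtain ⟨a, rfl⟩ := hs
    obtain ⟨b, rfl⟩ := hodd
    obtain ⟨c, rfl⟩ := hj
    simp only [coeff_add, coeff_X_pow, coeff_one]
    rw [if_neg (by omega), if_neg (by omega), if_neg (by omega), if_neg (by omega),
      if_neg (by omega)]
    simp
  have hz := aux_zero α hE0 (n - 2 * s) (by obtain ⟨b, rfl⟩ := hodd; exact ⟨b - s, by omega⟩)
    (by omega)
  obtain ⟨N, hN⟩ := aux_int α hE (2 * n - 4 * s) (by omega)
  have hint : ∀ i, IsIntegral ℤ (α i) := by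
    intro i
    refine ⟨X ^ n + X ^ (n - s) + X ^ (n - 2 * s) + X ^ (n - 3 * s) + 1, ?_, ?_⟩
    · have h1 := monic_prod_X_sub_C α Finset.univ
      rw [← hroots] at h1
      exact monic_of_injective (RingHom.injective_int _) h1
    · rw [← eval_map, show algebraMap ℤ ℂ = Int.castRingHom ℂ from rfl, hroots, eval_prod]
      exact Finset.prod_eq_zero (Finset.mem_univ i) (by simp)
  set β : Fin n → ℂ := fun i => α i ^ (n - 2 * s) with hβ
  set e := MvPolynomial.aeval β (MvPolynomial.esymm (Fin n) ℤ 2) with he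
  have heint : IsIntegral ℤ e := by
    rw [he, MvPolynomial.esymm, map_sum]
    refine IsIntegral.sum _ fun t _ => ?_
    rw [map_prod]
    refine IsIntegral.prod _ fun i _ => ?_
    simpa [hβ] using (hint i).pow _
  have h2 : ∑ i, β i ^ 2 = -2 * e := by
    rw [aux_newton β 2 (by norm_num), Finset.sum_eq_zero]
    · rw [he]; norm_num
    · intro a ha
      simp only [mem_filter, HasAntidiagonal.mem_antidiagonal, Set.mem_Ioo] at ha
      rw [show a.2 = 1 by omega]
      simp [hz]
  have h3 : ∑ i, β i ^ 2 = ∑ i, α i ^ (2 * n - 4 * s) := by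
    refine Finset.sum_congr rfl fun i _ => ?_
    rw [hβ]
    simp only [← pow_mul]
    congr 1
    omega
  have h4 : e = algebraMap ℚ ℂ (-(N : ℚ) / 2) := by
    have : (N : ℂ) = -2 * e := by rw [← h2, h3, ← hN]; simp
    simp [this]
  rw [h4, isIntegral_algebraMap_iff (algebraMap ℚ ℂ).injective] at heint
  obtain ⟨z, hz'⟩ := IsIntegrallyClosed.isIntegral_iff.1 heint
  refine ⟨-z, ?_⟩
  rw [← h3, h2, h4, ← hz']
  simp
end

section
/- Let s be an even positive integer, n an odd integer with n > 3s, and let α_1, ..., α_n ∈ ℂ be the roots, counted with multiplicity, of F(X) = X^n + X^(n-s) + X^(n-2s) + X^(n-3s) + 1 ∈ ℤ[X]. Then S_{2n-2s} = S_{2n-6s}, where S_m := Σ_{i=1}^n α_i^m. -/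
open Polynomial Finset

theorem esymm_odd_zero (s n : ℕ) (hs : Even s)
    (hn : 3 * s < n) (α : Fin n → ℂ)
    (hroots : (X ^ n + X ^ (n - s) + X ^ (n - 2 * s) + X ^ (n - 3 * s) + 1 :
        Polynomial ℤ).map (Int.castRingHom ℂ) =
      ∏ i : Fin n, (X - C (α i))) (j : ℕ) (hj : Odd j) (hjn : j < n) :
    MvPolynomial.aeval α (MvPolynomial.esymm (Fin n) ℂ j) = 0 := by
  rw [MvPolynomial.aeval_esymm_eq_multiset_esymm]
  have h := Multiset.prod_X_sub_C_coeff (Finset.univ.val.map α) (k := n - j) (by simp)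
  have e : (Multiset.map (fun t => (X : ℂ[X]) - C t) (Finset.univ.val.map α)).prod
      = ∏ i : Fin n, (X - C (α i)) := by
    rw [Multiset.map_map]; rfl
  rw [e, ← hroots] at h
  have h2 : Multiset.card (Finset.univ.val.map α) - (n - j) = j := by simp; omega
  rw [h2] at h
  obtain ⟨t, rfl⟩ := hs
  obtain ⟨u, rfl⟩ := hj
  have h1 : n - (2 * u + 1) ≠ n := by omega
  have h3 : n - (2 * u + 1) ≠ n - (t + t) := by omega
  have h4 : n - (2 * u + 1) ≠ n - 2 * (t + t) := by omega
  have h5 : n - (2 * u + 1) ≠ n - 3 * (t + t) := by omega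
  have h6 : n - (2 * u + 1) ≠ 0 := by omega
  simp only [Polynomial.coeff_map, coeff_add, coeff_X_pow, coeff_one, h1, h3, h4, h5, h6,
    if_false] at h
  simpa using h.symm

theorem psum_odd_zero (s n : ℕ) (hs : Even s)
    (hn : 3 * s < n) (α : Fin n → ℂ)
    (hroots : (X ^ n + X ^ (n - s) + X ^ (n - 2 * s) + X ^ (n - 3 * s) + 1 :
        Polynomial ℤ).map (Int.castRingHom ℂ) =
      ∏ i : Fin n, (X - C (α i))) (k : ℕ) (hk : Odd k) (hkn : k < n) :
    MvPolynomial.aeval α (MvPolynomial.psum (Fin n) ℂ k) = 0 := by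
  induction k using Nat.strong_induction_on with
  | _ k ih =>
    have E := esymm_odd_zero s n hs hn α hroots
    rw [MvPolynomial.psum_eq_mul_esymm_sub_sum _ _ k hk.pos, map_sub, map_mul, E k hk hkn,
      mul_zero, zero_sub, neg_eq_zero, map_sum]
    refine Finset.sum_eq_zero fun a ha => ?_
    simp only [Finset.mem_filter, Finset.HasAntidiagonal.mem_antidiagonal, Set.mem_Ioo] at ha
    obtain ⟨h1, h2, h3⟩ := ha
    rw [map_mul, map_mul]
    rcases Nat.even_or_odd a.1 with h | h
    · have hb : Odd a.2 := by
        rw [← h1] at hk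
        exact (Nat.odd_add'.1 hk).2 h
      rw [ih a.2 (by omega) hb (by omega), mul_zero]
    · rw [E a.1 h (by omega), mul_zero, zero_mul]

theorem S_two_n_sub_two_s_eq (s n : ℕ) (hs : Even s) (hs0 : 0 < s)
    (hodd : Odd n) (hn : 3 * s < n) (α : Fin n → ℂ)
    (hroots : (X ^ n + X ^ (n - s) + X ^ (n - 2 * s) + X ^ (n - 3 * s) + 1 :
        Polynomial ℤ).map (Int.castRingHom ℂ) =
      ∏ i : Fin n, (X - C (α i))) :
    ∑ i : Fin n, (α i) ^ (2 * n - 2 * s) = ∑ i : Fin n, (α i) ^ (2 * n - 6 * s) := by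
  have P : ∀ k, Odd k → k < n → ∑ i : Fin n, (α i) ^ k = 0 := by
    intro k hk hkn
    simpa [MvPolynomial.psum] using psum_odd_zero s n hs hn α hroots k hk hkn
  have p2 := P (n - 2 * s) (by obtain ⟨t, rfl⟩ := hs; obtain ⟨u, rfl⟩ := hodd; grind) (by omega)
  have p3 := P (n - 3 * s) (by obtain ⟨t, rfl⟩ := hs; obtain ⟨u, rfl⟩ := hodd; grind) (by omega)
  have key : ∀ i, (α i) ^ (2 * n - 2 * s) =
      (α i) ^ (2 * n - 6 * s) - (α i) ^ (n - 2 * s) + (α i) ^ (n - 3 * s) := by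
    intro i
    have h := congrArg (Polynomial.eval (α i)) hroots
    rw [Polynomial.eval_prod, Finset.prod_eq_zero (Finset.mem_univ i) (by simp)] at h
    simp only [Polynomial.map_add, Polynomial.map_pow, Polynomial.map_X, Polynomial.map_one,
      eval_add, eval_pow, eval_X, eval_one] at h
    obtain ⟨m, rfl⟩ : ∃ m, n = 3 * s + m := ⟨n - 3 * s, by omega⟩
    rw [show 3 * s + m - s = 2 * s + m by omega, show 3 * s + m - 2 * s = s + m by omega,
      show 3 * s + m - 3 * s = m by omega] at h
    rw [show 2 * (3 * s + m) - 2 * s = 4 * s + 2 * m by omega,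
      show 2 * (3 * s + m) - 6 * s = 2 * m by omega,
      show 3 * s + m - 2 * s = s + m by omega,
      show 3 * s + m - 3 * s = m by omega]
    linear_combination ((α i) ^ m * ((α i) ^ s - 1)) * h
  rw [Finset.sum_congr rfl fun i _ => key i, Finset.sum_add_distrib, Finset.sum_sub_distrib,
    p2, p3]
  ring
end

section
/- Let s be an even positive integer, n an odd integer with n > 3s, and let α_1, ..., α_n ∈ ℂ be the roots, counted with multiplicity, of F(X) = X^n + X^(n-s) + X^(n-2s) + X^(n-3s) + 1 ∈ ℤ[X]. Then T_{n-s} = T_{n-3s}, where T_m := Σ_{1 ≤ i < j ≤ n} (α_i α_j)^m. In particular T_{n-s} + T_{n-3s} is an even integer. -/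
open Polynomial Finset

/-- Logarithmic derivative identity for a finite product of `1 - a_i Y`. -/
lemma logDeriv_aux {ι : Type*} (S : Finset ι) (a : ι → ℂ) :
    (∑ i ∈ S, PowerSeries.mk (fun m => if m = 0 then 0 else a i ^ m)) *
      (∏ i ∈ S, (1 - PowerSeries.C (a i) * PowerSeries.X)) =
    - (PowerSeries.X * PowerSeries.derivative ℂ
        (∏ i ∈ S, (1 - PowerSeries.C (a i) * PowerSeries.X))) := by
  classical
  induction S using Finset.induction_on with
  | empty => simp
  | insert i S hi ih =>
    rw [Finset.sum_insert hi, Finset.prod_insert hi, Derivation.leibniz]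
    have h1 : PowerSeries.mk (fun m => if m = 0 then 0 else a i ^ m) *
        (1 - PowerSeries.C (a i) * PowerSeries.X) = PowerSeries.C (a i) * PowerSeries.X := by
      ext m
      rw [mul_sub, mul_one, mul_left_comm]
      rcases m with _ | m
      · simp
      · rcases m with _ | m
        · simp [← mul_assoc, PowerSeries.coeff_succ_mul_X]
        · simp [← mul_assoc, PowerSeries.coeff_succ_mul_X, PowerSeries.coeff_X]
          ring
    have h2 : PowerSeries.derivative ℂ (1 - PowerSeries.C (a i) * PowerSeries.X) =
        - PowerSeries.C (a i) := by
      simp [map_sub, Derivation.leibniz]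
    rw [h2]
    simp only [smul_eq_mul]
    set Q := ∏ i ∈ S, (1 - PowerSeries.C (a i) * PowerSeries.X)
    set P := ∑ i ∈ S, PowerSeries.mk (fun m => if m = 0 then 0 else a i ^ m)
    linear_combination Q * h1 + (1 - PowerSeries.C (a i) * PowerSeries.X) * ih

lemma reverse_aux (s n : ℕ) (hs0 : 0 < s) (hn : 3 * s < n) (α : Fin n → ℂ)
    (hroots : (X ^ n + X ^ (n - s) + X ^ (n - 2 * s) + X ^ (n - 3 * s) + 1 :
        Polynomial ℤ).map (Int.castRingHom ℂ) =
      ∏ i : Fin n, (X - C (α i))) :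
    (∏ i : Fin n, (1 - C (α i) * X) : ℂ[X]) =
      1 + X ^ s + X ^ (2 * s) + X ^ (3 * s) + X ^ n := by
  apply Polynomial.funext
  intro z
  by_cases hz : z = 0
  · subst hz
    have h1 : s ≠ 0 := by omega
    have h2 : n ≠ 0 := by omega
    simp [eval_prod, h1, h2]
  · have h := congrArg (fun p => z ^ n * eval z⁻¹ p) hroots
    simp only [Polynomial.map_add, Polynomial.map_pow, map_X, Polynomial.map_one, eval_add,
      eval_pow, eval_X, eval_one, eval_prod, eval_sub, eval_C] at h
    have e : z ^ n * ∏ i : Fin n, (z⁻¹ - α i) = ∏ i : Fin n, (1 - α i * z) := by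
      have : z ^ n = ∏ i : Fin n, z := by simp
      rw [this, ← Finset.prod_mul_distrib]
      refine Finset.prod_congr rfl fun i _ => ?_
      field_simp
    have hk : ∀ k, k ≤ n → z ^ n * z⁻¹ ^ (n - k) = z ^ k := by
      intro k hk
      obtain ⟨d, rfl⟩ := Nat.exists_eq_add_of_le hk
      rw [Nat.add_sub_cancel_left, pow_add, mul_assoc, ← mul_pow, mul_inv_cancel₀ hz, one_pow,
        mul_one]
    rw [e, mul_add, mul_add, mul_add, mul_add, hk s (by omega), hk (2 * s) (by omega),
      hk (3 * s) (by omega)] at h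
    have h0 := hk 0 (by omega)
    simp only [Nat.sub_zero, pow_zero] at h0
    rw [h0] at h
    simp only [eval_prod, eval_sub, eval_mul, eval_add, eval_pow, eval_X, eval_one, eval_C]
    rw [← h]
    ring

lemma recurrence_aux (s n : ℕ) (hs0 : 0 < s) (hn : 3 * s < n) (α : Fin n → ℂ)
    (hroots : (X ^ n + X ^ (n - s) + X ^ (n - 2 * s) + X ^ (n - 3 * s) + 1 :
        Polynomial ℤ).map (Int.castRingHom ℂ) =
      ∏ i : Fin n, (X - C (α i))) (q : ℕ → ℂ)
    (hq : ∀ m, q m = if m = 0 then 0 else ∑ i, α i ^ m) (m : ℕ) :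
    q m - (if 4 * s ≤ m then q (m - 4 * s) else 0) + (if n ≤ m then q (m - n) else 0)
      - (if n + s ≤ m then q (m - (n + s)) else 0) =
    3 * s * (if m = 4 * s then 1 else 0) - s * (if m = s then 1 else 0)
      - s * (if m = 2 * s then 1 else 0) - s * (if m = 3 * s then 1 else 0)
      - n * (if m = n then 1 else 0) + n * (if m = n + s then 1 else 0) := by
  have hG := congrArg (fun p : ℂ[X] => (p : PowerSeries ℂ)) (reverse_aux s n hs0 hn α hroots)
  have hG' : (∏ i : Fin n, (1 - PowerSeries.C (α i) * PowerSeries.X) : PowerSeries ℂ) =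
      1 + PowerSeries.X ^ s + PowerSeries.X ^ (2 * s) + PowerSeries.X ^ (3 * s)
        + PowerSeries.X ^ n := by
    have e : ((∏ i : Fin n, (1 - C (α i) * X) : ℂ[X]) : PowerSeries ℂ) =
        ∏ i : Fin n, (1 - PowerSeries.C (α i) * PowerSeries.X) := by
      rw [← Polynomial.coeToPowerSeries.ringHom_apply, map_prod]
      simp
    rw [← e]
    simpa using hG
  have hL := logDeriv_aux Finset.univ α
  rw [hG'] at hL
  have hP : (∑ i : Fin n, PowerSeries.mk (fun m => if m = 0 then 0 else α i ^ m)) =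
      PowerSeries.mk q := by
    ext k
    rw [map_sum]
    simp only [PowerSeries.coeff_mk, hq]
    split_ifs <;> simp
  rw [hP] at hL
  have hX : ∀ k : ℕ, PowerSeries.X * PowerSeries.derivative ℂ (PowerSeries.X ^ k : PowerSeries ℂ)
      = PowerSeries.C (k : ℂ) * PowerSeries.X ^ k := by
    intro k
    rcases k with _ | k
    · simp
    · rw [Derivation.leibniz_pow]
      simp [pow_succ]
      ring
  simp only [map_add, mul_add, hX] at hL
  have key : PowerSeries.mk q - PowerSeries.mk q * PowerSeries.X ^ (4 * s)
      + PowerSeries.mk q * PowerSeries.X ^ n - PowerSeries.mk q * PowerSeries.X ^ (n + s) =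
      PowerSeries.C (3 * s : ℂ) * PowerSeries.X ^ (4 * s) - PowerSeries.C (s : ℂ) * PowerSeries.X ^ s
      - PowerSeries.C (s : ℂ) * PowerSeries.X ^ (2 * s)
      - PowerSeries.C (s : ℂ) * PowerSeries.X ^ (3 * s)
      - PowerSeries.C (n : ℂ) * PowerSeries.X ^ n
      + PowerSeries.C (n : ℂ) * PowerSeries.X ^ (n + s) := by
    have h1 : PowerSeries.derivative ℂ (1 : PowerSeries ℂ) = 0 := by simp
    rw [h1] at hL
    push_cast [map_mul] at hL ⊢
    simp only [map_mul, map_ofNat] at hL ⊢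
    linear_combination (1 - PowerSeries.X ^ s) * hL
  have := congrArg (PowerSeries.coeff m) key
  simp only [map_add, map_sub, PowerSeries.coeff_C_mul, PowerSeries.coeff_X_pow] at this
  simpa only [PowerSeries.coeff_mul_X_pow', PowerSeries.coeff_mk] using this

lemma odd_aux (s n : ℕ) (hs : Even s) (hs0 : 0 < s) (q : ℕ → ℂ)
    (hr : ∀ m, q m - (if 4 * s ≤ m then q (m - 4 * s) else 0) + (if n ≤ m then q (m - n) else 0)
      - (if n + s ≤ m then q (m - (n + s)) else 0) =
    3 * s * (if m = 4 * s then 1 else 0) - s * (if m = s then 1 else 0)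
      - s * (if m = 2 * s then 1 else 0) - s * (if m = 3 * s then 1 else 0)
      - n * (if m = n then 1 else 0) + n * (if m = n + s then 1 else 0)) (m : ℕ) :
    Odd m → m < n → q m = 0 := by
  obtain ⟨t, rfl⟩ := hs
  induction m using Nat.strong_induction_on with
  | _ m ih =>
    intro hm hmn
    have h := hr m
    obtain ⟨u, hu⟩ := hm
    rw [if_neg (by omega : ¬ n ≤ m), if_neg (by omega : ¬ n + (t + t) ≤ m),
      if_neg (by omega : ¬ m = 4 * (t + t)), if_neg (by omega : ¬ m = t + t),
      if_neg (by omega : ¬ m = 2 * (t + t)), if_neg (by omega : ¬ m = 3 * (t + t)),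
      if_neg (by omega : ¬ m = n), if_neg (by omega : ¬ m = n + (t + t))] at h
    by_cases h4 : 4 * (t + t) ≤ m
    · rw [if_pos h4, ih (m - 4 * (t + t)) (by omega) ⟨u - 4 * t, by omega⟩ (by omega)] at h
      simpa using h
    · rw [if_neg h4] at h
      simpa using h

lemma even_aux (s n : ℕ) (hs : Even s) (hs0 : 0 < s) (hodd : Odd n) (q : ℕ → ℂ)
    (hr : ∀ m, q m - (if 4 * s ≤ m then q (m - 4 * s) else 0) + (if n ≤ m then q (m - n) else 0)
      - (if n + s ≤ m then q (m - (n + s)) else 0) =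
    3 * s * (if m = 4 * s then 1 else 0) - s * (if m = s then 1 else 0)
      - s * (if m = 2 * s then 1 else 0) - s * (if m = 3 * s then 1 else 0)
      - n * (if m = n then 1 else 0) + n * (if m = n + s then 1 else 0)) (m : ℕ) :
    Even m → m < 2 * n → ¬ 4 * s ∣ m → q m = if s ∣ m then - (s : ℂ) else 0 := by
  have ho := odd_aux s n hs hs0 q hr
  induction m using Nat.strong_induction_on with
  | _ m ih =>
    intro hm hmn h4
    have h := hr m
    have a1 : (if n ≤ m then q (m - n) else 0) = 0 := by
      split_ifs with hh
      · exact ho _ (Nat.Even.sub_odd hh hm hodd) (by omega)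
      · rfl
    have a2 : (if n + s ≤ m then q (m - (n + s)) else 0) = 0 := by
      split_ifs with hh
      · exact ho _ (Nat.Even.sub_odd hh hm (hodd.add_even hs)) (by omega)
      · rfl
    have a3 : ¬ m = n := by rintro rfl; exact (Nat.not_even_iff_odd.2 hodd) hm
    have a4 : ¬ m = n + s := by
      rintro rfl; exact (Nat.not_even_iff_odd.2 (hodd.add_even hs)) hm
    have a5 : ¬ m = 4 * s := by rintro rfl; exact h4 dvd_rfl
    rw [a1, a2, if_neg a3, if_neg a4, if_neg a5] at h
    by_cases hle : 4 * s ≤ m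
    · have hd : s ∣ m - 4 * s ↔ s ∣ m := Nat.dvd_sub_iff_left hle (Dvd.intro_left 4 rfl)
      have hd4 : 4 * s ∣ m - 4 * s ↔ 4 * s ∣ m := Nat.dvd_sub_iff_left hle dvd_rfl
      rw [if_pos hle, ih (m - 4 * s) (by omega)
        (by rw [Nat.even_sub hle]; simp [hm, Nat.even_mul, hs]) (by omega) (by rwa [hd4]),
        if_neg (by omega : ¬ m = s), if_neg (by omega : ¬ m = 2 * s),
        if_neg (by omega : ¬ m = 3 * s)] at h
      simp only [hd] at h
      linear_combination h
    · rw [if_neg hle] at h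
      by_cases hd : s ∣ m
      · obtain ⟨c, rfl⟩ := hd
        have hc : c < 4 := by
          by_contra hc
          exact hle (by nlinarith)
        rw [if_pos (Dvd.intro c rfl)]
        have hc0 : c ≠ 0 := by rintro rfl; simp at h4
        have b1 : ¬ s = 2 * s := by omega
        have b2 : ¬ s = 3 * s := by omega
        have b3 : ¬ 2 * s = s := by omega
        have b4 : ¬ 2 * s = 3 * s := by omega
        have b5 : ¬ 3 * s = s := by omega
        have b6 : ¬ 3 * s = 2 * s := by omega
        rw [mul_comm s c] at h ⊢
        interval_cases c
        · exact absurd rfl hc0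
        · simp only [one_mul, b1, b2, if_true, if_false] at h ⊢
          linear_combination h
        · simp only [b3, b4, if_true, if_false] at h ⊢
          linear_combination h
        · simp only [b5, b6, if_true, if_false] at h ⊢
          linear_combination h
      · rw [if_neg (by rintro rfl; exact hd dvd_rfl),
          if_neg (by rintro rfl; exact hd (Dvd.intro_left 2 rfl)),
          if_neg (by rintro rfl; exact hd (Dvd.intro_left 3 rfl))] at h
        rw [if_neg hd]
        linear_combination h

lemma pair_aux (n : ℕ) (b : Fin n → ℂ) :
    (∑ i, b i) ^ 2 = ∑ i, b i ^ 2 + 2 * ∑ i : Fin n, ∑ j ∈ Finset.Ioi i, b i * b j := by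
  have h : ∑ i : Fin n, ∑ j ∈ Finset.Iio i, b i * b j =
      ∑ i : Fin n, ∑ j ∈ Finset.Ioi i, b i * b j := by
    rw [Finset.sum_comm' (t' := Finset.univ) (s' := fun j => Finset.Ioi j) (by simp)]
    exact Finset.sum_congr rfl fun i _ => Finset.sum_congr rfl fun j _ => mul_comm _ _
  have h2 : ∀ i : Fin n, ∑ j, b i * b j =
      ∑ j ∈ Finset.Iio i, b i * b j + b i ^ 2 + ∑ j ∈ Finset.Ioi i, b i * b j := by
    intro i
    have hu : (Finset.univ : Finset (Fin n)) = (Finset.Iio i ∪ {i}) ∪ Finset.Ioi i := by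
      ext j
      simp only [Finset.mem_univ, Finset.mem_union, Finset.mem_Iio, Finset.mem_singleton,
        Finset.mem_Ioi, true_iff, or_assoc]
      exact lt_trichotomy j i
    rw [hu, Finset.sum_union, Finset.sum_union]
    · simp [pow_two]
    · simp
    · rw [Finset.disjoint_left]
      intro j
      simp only [Finset.mem_union, Finset.mem_Iio, Finset.mem_singleton, Finset.mem_Ioi, not_lt]
      rintro (h | h)
      · exact h.le
      · exact h.le
  rw [pow_two, Finset.sum_mul_sum, Finset.sum_congr rfl fun i _ => h2 i]
  rw [Finset.sum_add_distrib, Finset.sum_add_distrib, h]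
  ring

theorem T_eq_and_sum_even (s n : ℕ) (hs : Even s) (hs0 : 0 < s)
    (hodd : Odd n) (hn : 3 * s < n) (α : Fin n → ℂ)
    (hroots : (X ^ n + X ^ (n - s) + X ^ (n - 2 * s) + X ^ (n - 3 * s) + 1 :
        Polynomial ℤ).map (Int.castRingHom ℂ) =
      ∏ i : Fin n, (X - C (α i))) :
    (∑ i : Fin n, ∑ j ∈ Finset.Ioi i, (α i * α j) ^ (n - s)) =
      (∑ i : Fin n, ∑ j ∈ Finset.Ioi i, (α i * α j) ^ (n - 3 * s)) ∧
    ∃ k : ℤ,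
      (∑ i : Fin n, ∑ j ∈ Finset.Ioi i, (α i * α j) ^ (n - s)) +
        (∑ i : Fin n, ∑ j ∈ Finset.Ioi i, (α i * α j) ^ (n - 3 * s)) = (2 * k : ℤ) := by
  obtain ⟨q, hq⟩ : ∃ q : ℕ → ℂ, ∀ m, q m = if m = 0 then 0 else ∑ i, α i ^ m := ⟨_, fun _ => rfl⟩
  have hr := recurrence_aux s n hs0 hn α hroots q hq
  have main : ∀ c, Odd c → c ≤ 3 → 2 * (∑ i : Fin n, ∑ j ∈ Finset.Ioi i,
      (α i * α j) ^ (n - c * s)) = if s ∣ 2 * n then (s : ℂ) else 0 := by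
    intro c hc hc3
    have hcs : c * s ≤ 3 * s := Nat.mul_le_mul_right s hc3
    have hc0 : 0 < c * s := Nat.mul_pos hc.pos hs0
    have hmo : Odd (n - c * s) := Nat.Odd.sub_even (by omega) hodd (hs.mul_left c)
    have h1 := odd_aux s n hs hs0 q hr (n - c * s) hmo (by omega)
    have h2 := even_aux s n hs hs0 hodd q hr (2 * (n - c * s)) (even_two_mul _) (by omega)
      (by
        intro h
        obtain ⟨u, hu⟩ := hmo
        have : 4 ∣ 2 * (n - c * s) := (Dvd.intro s rfl).trans h
        omega)
    have hd : s ∣ 2 * (n - c * s) ↔ s ∣ 2 * n := by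
      rw [Nat.mul_sub]
      exact Nat.dvd_sub_iff_left (by omega) ⟨2 * c, by ring⟩
    rw [hq, if_neg (by omega)] at h1 h2
    simp only [hd] at h2
    have hp := pair_aux n (fun i => α i ^ (n - c * s))
    simp only [← mul_pow, ← pow_mul] at hp
    rw [h1, mul_comm (n - c * s) 2, h2] at hp
    split_ifs at hp ⊢ <;> linear_combination -hp
  have m1 := main 1 (by decide) (by norm_num)
  have m3 := main 3 (by decide) (by norm_num)
  rw [one_mul] at m1
  refine ⟨by linear_combination (m1 - m3) / 2, ?_⟩
  obtain ⟨t, ht⟩ := hs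
  by_cases hd : s ∣ 2 * n
  · rw [if_pos hd] at m1 m3
    have ht' : (s : ℂ) = t + t := by rw [ht]; push_cast; ring
    refine ⟨t, ?_⟩
    push_cast
    linear_combination (m1 + m3) / 2 + ht'
  · rw [if_neg hd] at m1 m3
    refine ⟨0, ?_⟩
    push_cast
    linear_combination (m1 + m3) / 2
end

section
/- Let s be an even positive integer, n an odd integer with n > 3s, and let α_1, ..., α_n ∈ ℂ be the roots, counted with multiplicity, of F(X) = X^n + X^(n-s) + X^(n-2s) + X^(n-3s) + 1 ∈ ℤ[X]. Set H(X) := n·F(X) − X·F'(X) = s·X^(n-s) + 2s·X^(n-2s) + 3s·X^(n-3s) + n. Then the integer ∏_{i=1}^n H(α_i) satisfies ∏_{i=1}^n H(α_i) ≡ n + s·S_{n-s} + 2s·S_{n-2s} + 3s·S_{n-3s} + n·s^2·T_{n-s} + n·s^2·T_{n-3s} + 3n·s^2·(S_{n-s}·S_{n-3s} − S_{2n-4s}) (mod 8), where S_m := Σ_{i=1}^n α_i^m and T_m := Σ_{1 ≤ i < j ≤ n} (α_i α_j)^m. -/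
open Polynomial Finset

/-- Truncated expansion of a product modulo the cube of `y`. -/
theorem aux_prod_expand {A : Type*} [CommRing A] (y : A) : ∀ (m : ℕ) (β : Fin m → A),
    ∃ c : A, ∏ i, (1 + y * β i) = 1 + y * ∑ i, β i
      + y ^ 2 * ∑ i, ∑ j ∈ Finset.Ioi i, β i * β j + y ^ 3 * c := by
  intro m
  induction m with
  | zero => intro β; exact ⟨0, by simp⟩
  | succ m ih =>
    intro β
    obtain ⟨c, hc⟩ := ih (fun i => β i.succ)
    refine ⟨β 0 * (∑ i : Fin m, ∑ j ∈ Finset.Ioi i, β i.succ * β j.succ) + c + y * β 0 * c, ?_⟩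
    rw [Fin.prod_univ_succ, hc, Fin.sum_univ_succ, Fin.sum_univ_succ, Fin.sum_Ioi_zero,
      ← Finset.mul_sum]
    simp only [Fin.sum_Ioi_succ]
    ring

theorem aux_cross {A : Type*} [CommRing A] : ∀ (m : ℕ) (x y : Fin m → A),
    ∑ i, ∑ j ∈ Finset.Ioi i, (x i * y j + y i * x j)
      = (∑ i, x i) * (∑ i, y i) - ∑ i, x i * y i := by
  intro m
  induction m with
  | zero => intro x y; simp
  | succ m ih =>
    intro x y
    have h := ih (fun i => x i.succ) (fun i => y i.succ)
    simp only [Fin.sum_univ_succ, Fin.sum_Ioi_zero, Fin.sum_Ioi_succ]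
    rw [h, Finset.sum_add_distrib, ← Finset.mul_sum, ← Finset.mul_sum]
    ring

theorem aux_T {A : Type*} [CommRing A] (m : ℕ) (a b c : Fin m → A) :
    ∃ d : A, ∑ i, ∑ j ∈ Finset.Ioi i, (a i + 2 * b i + 3 * c i) * (a j + 2 * b j + 3 * c j)
      = ∑ i, ∑ j ∈ Finset.Ioi i, a i * a j + ∑ i, ∑ j ∈ Finset.Ioi i, c i * c j
        + 3 * ((∑ i, a i) * (∑ i, c i) - ∑ i, a i * c i) + 2 * d := by
  refine ⟨∑ i, ∑ j ∈ Finset.Ioi i, (b i * a j + a i * b j + 2 * b i * b j + 3 * b i * c j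
    + 3 * c i * b j + 4 * c i * c j), ?_⟩
  rw [← aux_cross]
  simp only [Finset.mul_sum, ← Finset.sum_add_distrib]
  refine Finset.sum_congr rfl fun i _ => Finset.sum_congr rfl fun j _ => ?_
  ring

/-- The expansion in a ring of characteristic dividing `8`. -/
theorem aux_ring {A : Type*} [CommRing A] (h8 : (8 : A) = 0) (n s : ℕ) (hs : Even s)
    (hodd : Odd n) (a b c : Fin n → A) :
    ∏ i, ((n : A) + s * (a i + 2 * b i + 3 * c i)) =
      (n : A) + s * ∑ i, a i + 2 * s * ∑ i, b i + 3 * s * ∑ i, c i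
        + n * s ^ 2 * ∑ i, ∑ j ∈ Finset.Ioi i, a i * a j
        + n * s ^ 2 * ∑ i, ∑ j ∈ Finset.Ioi i, c i * c j
        + 3 * n * s ^ 2 * ((∑ i, a i) * (∑ i, c i) - ∑ i, a i * c i) := by
  have hN : (n : A) * n = 1 := by
    have h : n * n % 8 = 1 := by
      have h1 : n % 8 = 1 ∨ n % 8 = 3 ∨ n % 8 = 5 ∨ n % 8 = 7 := by
        have := Nat.odd_iff.1 hodd
        omega
      rcases h1 with h | h | h | h <;> simp [Nat.mul_mod, h]
    have h2 : n * n = 8 * (n * n / 8) + 1 := by omega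
    have h3 := congrArg (Nat.cast : ℕ → A) h2
    push_cast at h3
    rw [h3, h8]; ring
  have hNn : (n : A) ^ n = n := by
    obtain ⟨k, hk⟩ := hodd
    have : (n : A) ^ (2 * k + 1) = n := by
      rw [pow_succ, pow_mul, pow_two, hN, one_pow, one_mul]
    rwa [← hk] at this
  obtain ⟨t, ht⟩ := hs
  have hst : (s : A) = 2 * t := by rw [ht]; push_cast; ring
  have hfac : ∀ i, (n : A) + s * (a i + 2 * b i + 3 * c i)
      = n * (1 + (n * s) * (a i + 2 * b i + 3 * c i)) := by
    intro i
    linear_combination (-(s : A) * (a i + 2 * b i + 3 * c i)) * hN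
  obtain ⟨e, he⟩ := aux_prod_expand ((n : A) * s) n (fun i => a i + 2 * b i + 3 * c i)
  obtain ⟨d, hd⟩ := aux_T n a b c
  have hS : ∑ i, (a i + 2 * b i + 3 * c i) = ∑ i, a i + 2 * ∑ i, b i + 3 * ∑ i, c i := by
    simp only [Finset.mul_sum, ← Finset.sum_add_distrib]
  rw [Finset.prod_congr rfl fun i _ => hfac i, Finset.prod_mul_distrib, he, hd, hS]
  simp only [Finset.prod_const, Finset.card_univ, Fintype.card_fin]
  rw [hNn, hst]
  generalize (∑ i, ∑ j ∈ Finset.Ioi i, a i * a j) = Ta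
  generalize (∑ i, ∑ j ∈ Finset.Ioi i, c i * c j) = Tc
  generalize (∑ i, a i * c i) = q
  generalize (∑ i, a i) = Sa
  generalize (∑ i, b i) = Sb
  generalize (∑ i, c i) = Sc
  generalize (n : A) = N at *
  generalize (t : A) = T at *
  linear_combination (2 * T * (Sa + 2 * Sb + 3 * Sc)
    + N * (2 * T) ^ 2 * (Ta + Tc + 3 * (Sa * Sc - q) + 2 * d)) * hN
    + (N ^ 4 * T ^ 3 * e + N * T ^ 2 * d) * h8

theorem aux_symm_cancel {m : ℕ} (k : ℤ) (hk : k ≠ 0) (p : MvPolynomial (Fin m) ℤ)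
    (h : (MvPolynomial.C k * p).IsSymmetric) : p.IsSymmetric := by
  intro e
  have h1 := h e
  rw [map_mul, MvPolynomial.rename_C] at h1
  exact mul_left_cancel₀ (by simpa using hk) h1

theorem aux_symm_sum {m : ℕ} (g : MvPolynomial (Fin m) ℤ → MvPolynomial (Fin m) ℤ)
    (hg : ∀ (e : Equiv.Perm (Fin m)) i, MvPolynomial.rename e (g (MvPolynomial.X i))
      = g (MvPolynomial.X (e i))) :
    (∑ i : Fin m, g (MvPolynomial.X i)).IsSymmetric := by
  intro e
  rw [map_sum]
  simp only [hg]
  exact Equiv.sum_comp e (fun i => g (MvPolynomial.X i))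

theorem aux_symm_pow {m : ℕ} (k : ℕ) :
    (∑ i : Fin m, (MvPolynomial.X i : MvPolynomial (Fin m) ℤ) ^ k).IsSymmetric :=
  aux_symm_sum (fun x => x ^ k) (by intro e i; simp)

theorem aux_symm_T {m : ℕ} (k : ℕ) :
    (∑ i : Fin m, ∑ j ∈ Finset.Ioi i, (MvPolynomial.X i : MvPolynomial (Fin m) ℤ) ^ k
      * MvPolynomial.X j ^ k).IsSymmetric := by
  apply aux_symm_cancel 2 (by norm_num)
  have h := aux_cross m (fun i => (MvPolynomial.X i : MvPolynomial (Fin m) ℤ) ^ k)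
    (fun i => MvPolynomial.X i ^ k)
  simp only [← two_mul, ← Finset.mul_sum] at h
  have h2 : (MvPolynomial.C 2 : MvPolynomial (Fin m) ℤ) = 2 := map_ofNat _ 2
  simp only [h2, ← Finset.mul_sum]
  rw [h]
  refine ((aux_symm_pow k).mul (aux_symm_pow k)).sub ?_
  simp only [← pow_add]
  exact aux_symm_pow (k + k)

/-- A symmetric integer polynomial in the roots of a monic integer polynomial is an integer. -/
theorem aux_symm_int {n : ℕ} (α : Fin n → ℂ) (F : Polynomial ℤ)
    (hroots : F.map (Int.castRingHom ℂ) = ∏ i : Fin n, (X - C (α i)))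
    (p : MvPolynomial (Fin n) ℤ) (hp : p.IsSymmetric) :
    ∃ z : ℤ, (z : ℂ) = MvPolynomial.aeval α p := by
  obtain ⟨q, hq⟩ := (MvPolynomial.esymmAlgHom_fin_bijective ℤ n).2 ⟨p, hp⟩
  have hq' := MvPolynomial.esymmAlgHom_apply (σ := Fin n) (R := ℤ) q
  rw [hq] at hq'
  change p = _ at hq'
  have hes : ∀ i : Fin n, ∃ z : ℤ, (z : ℂ)
      = MvPolynomial.aeval α (MvPolynomial.esymm (Fin n) ℤ (i + 1)) := by
    intro i
    have hi := i.2
    have hv := Multiset.prod_X_sub_C_coeff ((Finset.univ : Finset (Fin n)).val.map α)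
      (k := n - (i + 1)) (by simp)
    have hcard : n - (n - ((i : ℕ) + 1)) = i + 1 := by omega
    simp only [Multiset.map_map, Multiset.card_map, Finset.card_val, Finset.card_univ,
      Fintype.card_fin, hcard] at hv
    have hprod : (Multiset.map ((fun t => X - C t) ∘ α) (Finset.univ : Finset (Fin n)).val).prod
      = F.map (Int.castRingHom ℂ) := by rw [hroots]; rfl
    rw [hprod, Polynomial.coeff_map] at hv
    refine ⟨(-1) ^ ((i : ℕ) + 1) * F.coeff (n - (i + 1)), ?_⟩
    rw [MvPolynomial.aeval_esymm_eq_multiset_esymm]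
    push_cast
    rw [eq_intCast] at hv
    rw [hv, ← mul_assoc, ← mul_pow]
    simp
  choose z hz using hes
  refine ⟨MvPolynomial.aeval z q, ?_⟩
  rw [hq', ← AlgHom.comp_apply, MvPolynomial.comp_aeval]
  simp only [← hz]
  have := MvPolynomial.aeval_algebraMap_apply ℂ z q
  simpa [Function.comp_def] using this.symm

theorem prod_H_mod_eight_expansion (s n : ℕ) (hs : Even s) (hs0 : 0 < s)
    (hodd : Odd n) (hn : 3 * s < n) (α : Fin n → ℂ)
    (F : Polynomial ℤ)
    (hF : F = X ^ n + X ^ (n - s) + X ^ (n - 2 * s) + X ^ (n - 3 * s) + 1)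
    (hroots : F.map (Int.castRingHom ℂ) = ∏ i : Fin n, (X - C (α i))) :
    ∃ P Sns S2s S3s S4s Tns T3s : ℤ,
      (P : ℂ) = ∏ i : Fin n,
        Polynomial.aeval (α i) (C (n : ℤ) * F - X * Polynomial.derivative F) ∧
      (Sns : ℂ) = ∑ i : Fin n, (α i) ^ (n - s) ∧
      (S2s : ℂ) = ∑ i : Fin n, (α i) ^ (n - 2 * s) ∧
      (S3s : ℂ) = ∑ i : Fin n, (α i) ^ (n - 3 * s) ∧
      (S4s : ℂ) = ∑ i : Fin n, (α i) ^ (2 * n - 4 * s) ∧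
      (Tns : ℂ) = ∑ i : Fin n, ∑ j ∈ Finset.Ioi i, (α i * α j) ^ (n - s) ∧
      (T3s : ℂ) = ∑ i : Fin n, ∑ j ∈ Finset.Ioi i, (α i * α j) ^ (n - 3 * s) ∧
      P ≡ (n : ℤ) + s * Sns + 2 * s * S2s + 3 * s * S3s
            + n * s ^ 2 * Tns + n * s ^ 2 * T3s
            + 3 * n * s ^ 2 * (Sns * S3s - S4s) [ZMOD 8] := by
  have hA : ∀ i, Polynomial.aeval (α i) (C (n : ℤ) * F - X * Polynomial.derivative F)
      = (n : ℂ) + s * ((α i) ^ (n - s) + 2 * (α i) ^ (n - 2 * s) + 3 * (α i) ^ (n - 3 * s)) := by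
    intro i
    have hX : ∀ k : ℕ, 0 < k → (α i) * ((k : ℂ) * (α i) ^ (k - 1)) = k * (α i) ^ k := by
      intro k hk
      obtain ⟨l, rfl⟩ : ∃ l, k = l + 1 := ⟨k - 1, by omega⟩
      simp only [Nat.add_sub_cancel]
      ring
    have e0 := hX n (by omega)
    have e1 := hX (n - s) (by omega)
    have e2 := hX (n - 2 * s) (by omega)
    have e3 := hX (n - 3 * s) (by omega)
    have c1 : ((n - s : ℕ) : ℂ) = n - s := by rw [Nat.cast_sub (by omega)]
    have c2 : ((n - 2 * s : ℕ) : ℂ) = n - 2 * s := by rw [Nat.cast_sub (by omega)]; push_cast; ring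
    have c3 : ((n - 3 * s : ℕ) : ℂ) = n - 3 * s := by rw [Nat.cast_sub (by omega)]; push_cast; ring
    rw [c1] at e1
    rw [c2] at e2
    rw [c3] at e3
    rw [hF]
    simp only [map_add, map_sub, map_mul, map_pow, aeval_X, aeval_C, derivative_X_pow,
      derivative_one, map_one, map_zero, map_natCast, c1, c2, c3]
    linear_combination -e0 - e1 - e2 - e3
  have key := aux_symm_int α F hroots
  let x : Fin n → MvPolynomial (Fin n) ℤ := MvPolynomial.X
  let Pp : MvPolynomial (Fin n) ℤ :=
    ∏ i, ((n : MvPolynomial (Fin n) ℤ) + s * (x i ^ (n - s) + 2 * x i ^ (n - 2 * s)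
      + 3 * x i ^ (n - 3 * s)))
  let Rp : MvPolynomial (Fin n) ℤ :=
    (n : MvPolynomial (Fin n) ℤ) + s * ∑ i, x i ^ (n - s) + 2 * s * ∑ i, x i ^ (n - 2 * s)
      + 3 * s * ∑ i, x i ^ (n - 3 * s)
      + n * s ^ 2 * ∑ i, ∑ j ∈ Finset.Ioi i, x i ^ (n - s) * x j ^ (n - s)
      + n * s ^ 2 * ∑ i, ∑ j ∈ Finset.Ioi i, x i ^ (n - 3 * s) * x j ^ (n - 3 * s)
      + 3 * n * s ^ 2 * ((∑ i, x i ^ (n - s)) * (∑ i, x i ^ (n - 3 * s))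
        - ∑ i, x i ^ (2 * n - 4 * s))
  have hexp : n - s + (n - 3 * s) = 2 * n - 4 * s := by omega
  have hdvd : MvPolynomial.C ((8 : ℕ) : ℤ) ∣ Pp - Rp := by
    rw [MvPolynomial.C_dvd_iff_zmod, map_sub, sub_eq_zero]
    have h8 : (8 : MvPolynomial (Fin n) (ZMod 8)) = 0 := by
      have : (MvPolynomial.C (8 : ZMod 8) : MvPolynomial (Fin n) (ZMod 8)) = 8 := map_ofNat _ 8
      rw [← this, show (8 : ZMod 8) = 0 from rfl, map_zero]
    have h := aux_ring h8 n s hs hodd (fun i => (MvPolynomial.X i) ^ (n - s))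
      (fun i => (MvPolynomial.X i) ^ (n - 2 * s)) (fun i => (MvPolynomial.X i) ^ (n - 3 * s))
    simp only [← pow_add, hexp] at h
    simp only [Pp, Rp, x, map_add, map_sub, map_mul, map_pow, map_prod, map_sum, map_natCast,
      map_ofNat, MvPolynomial.map_X]
    exact h
  have hPs : Pp.IsSymmetric := by
    intro e
    simp only [Pp, x, map_add, map_mul, map_pow, map_prod, map_natCast, map_ofNat,
      MvPolynomial.rename_X]
    exact Equiv.prod_comp e (fun i => ((n : MvPolynomial (Fin n) ℤ) + s * (x i ^ (n - s)
      + 2 * x i ^ (n - 2 * s) + 3 * x i ^ (n - 3 * s))))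
  have hRs : Rp.IsSymmetric := by
    intro e
    have s1 := aux_symm_pow (m := n) (n - s) e
    have s2 := aux_symm_pow (m := n) (n - 2 * s) e
    have s3 := aux_symm_pow (m := n) (n - 3 * s) e
    have s4 := aux_symm_pow (m := n) (2 * n - 4 * s) e
    have t1 := aux_symm_T (m := n) (n - s) e
    have t3 := aux_symm_T (m := n) (n - 3 * s) e
    simp only [Rp, x, map_add, map_sub, map_mul, map_natCast, map_ofNat, s1, s2, s3, s4, t1, t3,
      map_pow (MvPolynomial.rename e) (s : MvPolynomial (Fin n) ℤ) 2]
  obtain ⟨Q, hQ⟩ := hdvd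
  have hQs : Q.IsSymmetric := by
    apply aux_symm_cancel ((8 : ℕ) : ℤ) (by norm_num)
    rw [← hQ]
    exact hPs.sub hRs
  obtain ⟨P, hP⟩ := key Pp hPs
  obtain ⟨q, hq⟩ := key Q hQs
  obtain ⟨S1, hS1⟩ := key _ (aux_symm_pow (n - s))
  obtain ⟨S2, hS2⟩ := key _ (aux_symm_pow (n - 2 * s))
  obtain ⟨S3, hS3⟩ := key _ (aux_symm_pow (n - 3 * s))
  obtain ⟨S4, hS4⟩ := key _ (aux_symm_pow (2 * n - 4 * s))
  obtain ⟨T1, hT1⟩ := key _ (aux_symm_T (n - s))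
  obtain ⟨T3, hT3⟩ := key _ (aux_symm_T (n - 3 * s))
  have hfin := congrArg (MvPolynomial.aeval α) hQ
  rw [map_sub, map_mul, ← hP, ← hq] at hfin
  simp only [Rp, x, map_add, map_sub, map_mul, map_natCast, map_ofNat, ← hS1, ← hS2, ← hS3,
    ← hS4, ← hT1, ← hT3, map_pow (MvPolynomial.aeval α) (s : MvPolynomial (Fin n) ℤ) 2,
    MvPolynomial.aeval_C] at hfin
  refine ⟨P, S1, S2, S3, S4, T1, T3, ?_, ?_, ?_, ?_, ?_, ?_, ?_, ?_⟩
  · rw [hP, Finset.prod_congr rfl fun i _ => hA i]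
    simp [Pp, x]
  · simpa using hS1
  · simpa using hS2
  · simpa using hS3
  · simpa using hS4
  · simpa [mul_pow] using hT1
  · simpa [mul_pow] using hT3
  · refine (Int.modEq_iff_dvd.2 ⟨q, ?_⟩).symm
    exact_mod_cast hfin
end
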